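/- arXiv:1002.4676 — 3 statements merged into one kernel-verified Lean document; each statement's English description precedes it below -/
import Mathlib

section
/- For all d ≥ 2 and h ≥ 1, the fractional pebbling cost of the balanced d-ary tree of height h satisfies #FRpebbles(T_d^h) ≥ (d−1)h/2 − d/2. -/
/-! Fractional black-white pebbling on a finite DAG whose edges are directed from
children to parents (`child u v` means `u` is a child of `v`; a leaf is a node with
no children). -/

/-- A fractional pebble configuration: a black value and a white value for each node. -/
structure FracConfig (V : Type) where
  b : V → ℝ
  w : V → ℝ

/-- Validity of a configuration: `0 ≤ b v`, `0 ≤ w v` and `b v + w v ≤ 1` for all `v`. -/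
def FracConfig.Valid {V : Type} (C : FracConfig V) : Prop :=
  ∀ v, 0 ≤ C.b v ∧ 0 ≤ C.w v ∧ C.b v + C.w v ≤ 1

/-- The legal fractional pebbling moves:
(i) decrease the black value of a node arbitrarily;
(ii) increase the white value of a node arbitrarily;
(iii) for a node all of whose children have pebble value 1, decrease its white value
arbitrarily, increase its black value arbitrarily, and simultaneously decrease the black
values of its children arbitrarily. -/
def FracMove {V : Type} (child : V → V → Prop) (C C' : FracConfig V) : Prop :=
  (∃ i, C'.b i ≤ C.b i ∧ (∀ j, j ≠ i → C'.b j = C.b j) ∧ C'.w = C.w) ∨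
  (∃ i, C.w i ≤ C'.w i ∧ (∀ j, j ≠ i → C'.w j = C.w j) ∧ C'.b = C.b) ∨
  (∃ i, (∀ u, child u i → C.b u + C.w u = 1) ∧
     C'.w i ≤ C.w i ∧ C.b i ≤ C'.b i ∧
     (∀ u, child u i → C'.b u ≤ C.b u ∧ C'.w u = C.w u) ∧
     (∀ j, j ≠ i → ¬ child j i → C'.b j = C.b j ∧ C'.w j = C.w j))

/-- A fractional pebbling of the DAG `(V, child)` with designated root `root`:
a finite sequence of valid configurations, starting and ending with all values `0`,
each obtained from the previous by a legal move, such that at some point the root has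
black value `1`. -/
structure FracPebbling (V : Type) [Fintype V] (child : V → V → Prop) (root : V) where
  T : ℕ
  cfg : ℕ → FracConfig V
  valid : ∀ t ≤ T, (cfg t).Valid
  start_b : ∀ v, (cfg 0).b v = 0
  start_w : ∀ v, (cfg 0).w v = 0
  finish_b : ∀ v, (cfg T).b v = 0
  finish_w : ∀ v, (cfg T).w v = 0
  move : ∀ t < T, FracMove child (cfg t) (cfg (t + 1))
  hits_root : ∃ t ≤ T, (cfg t).b root = 1

/-- The pebbling uses at most `p` pebbles: every configuration in the sequence has total
pebble value at most `p`. -/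
def FracPebbling.UsesAtMost {V : Type} [Fintype V] {child : V → V → Prop} {root : V}
    (P : FracPebbling V child root) (p : ℝ) : Prop :=
  ∀ t ≤ P.T, (∑ v, ((P.cfg t).b v + (P.cfg t).w v)) ≤ p

/-- The number of pebbles used by the pebbling: the maximum over all configurations of the
total pebble value. -/
noncomputable def FracPebbling.cost {V : Type} [Fintype V] {child : V → V → Prop} {root : V}
    (P : FracPebbling V child root) : ℝ :=
  Finset.sup' (Finset.range (P.T + 1)) (Finset.nonempty_range_iff.mpr (Nat.succ_ne_zero _))
    (fun t => ∑ v, ((P.cfg t).b v + (P.cfg t).w v))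

/-! The balanced `d`-ary tree `T_d^h` with `h` levels: a node at depth `l` (the root having
depth `0`, the leaves depth `h - 1`) is indexed by an element of `Fin (d^l)`;
the children of node `(l, j)` are the nodes `(l+1, d*j + r)` for `r < d`. -/

/-- The nodes of the balanced `d`-ary tree with `h` levels. -/
abbrev TreeNode (d h : ℕ) := Σ l : Fin h, Fin (d ^ (l : ℕ))

/-- `treeChild d h u v` holds iff `u` is a child of `v` in `T_d^h`. -/
def treeChild (d h : ℕ) (u v : TreeNode d h) : Prop :=
  (u.1 : ℕ) = (v.1 : ℕ) + 1 ∧ (u.2 : ℕ) / d = (v.2 : ℕ)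

/-! The argument follows Klawe. A set `F` of nodes containing every node all of whose children it
contains turns a configuration into a *hiding configuration*: the nodes of `F` are filled up, and
then those with all children in `F` are emptied. Through every move one keeps such a set whose
hiding configuration `u` has potential at most `M`: for each level `j` with some weight at level
`j` or higher, that weight plus `k / 2 * j` is at most `M`. Only pebbling a leaf can raise the
potential, and only by the total weight. This does no harm because a hiding set of least weight
weighs at most as much as the configuration itself: otherwise it could be pruned below some covered
node without violating the potential bound.

Recolouring white leaves black and pinning a black pebble on the root from the moment it is reached
costs at most one extra pebble, so `M = p + 1` works. At the end a single black pebble on the root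
remains. It is too light to hide anything, so the potential `1 + k / 2 * lev r` is at most `p + 1`.
-/

open Finset

/-- At the node `v`, the configuration `C'` has no more black and no less white than `C`, which
makes it at least as easy to hide. -/
def FracConfig.EasierAt {V : Type} (C' C : FracConfig V) (v : V) : Prop :=
  C'.b v ≤ C.b v ∧ C.w v ≤ C'.w v

/-- A forest, given by its child relation, in which all leaves below a node `x` are at the same
distance `lev x` from `x` and every internal node has more than `k` children. Branching is
measured by `k` rather than `k + 1` because only the surplus `k` enters the bounds. -/
structure GradedForest (V : Type) (k : ℕ) where
  child : V → V → Prop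
  lev : V → ℕ
  lev_eq_of_child : ∀ {y x}, child y x → lev x = lev y + 1
  parent_unique : ∀ {y x x'}, child y x → child y x' → x = x'
  lt_card_children : ∀ {x}, lev x ≠ 0 → k < Nat.card {y // child y x}

namespace GradedForest

variable {V : Type} {k : ℕ} (G : GradedForest V k)

/-! ### Hiding sets -/

/-- `x` is internal and all its children lie in `F`. -/
def Covered (F : Set V) (x : V) : Prop :=
  G.lev x ≠ 0 ∧ ∀ y, G.child y x → y ∈ F

/-- `F` contains every node covered by it. -/
def IsClosed (F : Set V) : Prop :=
  ∀ ⦃x⦄, G.Covered F x → x ∈ F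

/-- The smallest closed set containing `A`. -/
inductive InClosure (A : Set V) : V → Prop
  | of_mem {x : V} (hx : x ∈ A) : InClosure A x
  | of_children {x : V} (hx : G.lev x ≠ 0) (h : ∀ y, G.child y x → InClosure A y) : InClosure A x

open scoped Classical in
/-- The weight of `x` in the hiding configuration of `F`: the nodes of `F` are filled up with
black, and then the black of every covered node is erased, its children being full. -/
noncomputable def hide (F : Set V) (C : FracConfig V) (x : V) : ℝ :=
  if G.Covered F x then 0 else if x ∈ F then 1 - C.w x else C.b x

/-- `y` is equal to `x` or hangs below `x` by a path all of whose nodes above `y` are covered. -/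
def Under (F : Set V) : V → V → Prop :=
  Relation.ReflTransGen fun y x => G.child y x ∧ G.Covered F x

/-- `F'` arises from `F` by discarding all nodes under `x`, except possibly `x` itself, which has to
stay if it is a child of a covered node. -/
structure IsPruning (F : Set V) (x : V) (F' : Set V) : Prop where
  subset : F' ⊆ F
  eq_of_under : ∀ {y}, G.Under F y x → y ∈ F' → y = x
  mem_of_not_under : ∀ {y}, y ∈ F → ¬ G.Under F y x → y ∈ F'
  mem_of_child : ∀ {z}, G.Covered F z → G.child x z → x ∈ F'

variable {G} {F F' : Set V} {C C' : FracConfig V} {x y : V}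

theorem Covered.mono (h : F ⊆ F') (hx : G.Covered F x) : G.Covered F' x :=
  ⟨hx.1, fun y hy => h (hx.2 y hy)⟩

theorem exists_child (hx : G.lev x ≠ 0) : ∃ y, G.child y x := by
  by_contra! h
  have : IsEmpty {y // G.child y x} := ⟨fun y => h y y.2⟩
  simpa using G.lt_card_children hx

theorem hide_of_covered (hx : G.Covered F x) : G.hide F C x = 0 := by
  simp [hide, hx]

theorem hide_of_mem (hx : ¬ G.Covered F x) (hF : x ∈ F) : G.hide F C x = 1 - C.w x := by
  simp [hide, hx, hF]

theorem hide_of_notMem (hx : ¬ G.Covered F x) (hF : x ∉ F) : G.hide F C x = C.b x := by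
  simp [hide, hx, hF]

theorem hide_nonneg (hC : C.Valid) (x : V) : 0 ≤ G.hide F C x := by
  obtain ⟨hb, -, hbw⟩ := hC x
  unfold hide
  split_ifs <;> linarith

theorem hide_add_white_le_one (hC : C.Valid) (x : V) : G.hide F C x + C.w x ≤ 1 := by
  obtain ⟨hb, -, hbw⟩ := hC x
  unfold hide
  split_ifs <;> linarith

theorem black_le_hide (hC : C.Valid) (hx : ¬ G.Covered F x) : C.b x ≤ G.hide F C x := by
  obtain ⟨-, -, hbw⟩ := hC x
  unfold hide
  split_ifs <;> linarith

theorem hide_le_of_easierAt (h : C'.EasierAt C x) : G.hide F C' x ≤ G.hide F C x := by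
  obtain ⟨hb, hw⟩ := h
  unfold hide
  split_ifs <;> linarith

theorem isClosed_closure (A : Set V) : G.IsClosed {x | G.InClosure A x} :=
  fun _ hx => .of_children hx.1 hx.2

theorem hide_closure_le (hC : C.Valid) {A : Set V} (hA : ∀ x ∈ A, C.b x + C.w x = 1) (x : V) :
    G.hide {x | G.InClosure (F ∪ A) x} C x ≤ G.hide F C x := by
  by_cases hx : G.Covered {x | G.InClosure (F ∪ A) x} x
  · exact (hide_of_covered hx).trans_le (hide_nonneg hC x)
  have hx' : ¬ G.Covered F x := fun h => hx (h.mono fun y hy => .of_mem (.inl hy))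
  by_cases hxF : x ∈ F
  · rw [hide_of_mem hx (.of_mem (.inl hxF)), hide_of_mem hx' hxF]
  rw [hide_of_notMem hx' hxF]
  by_cases hxcl : G.InClosure (F ∪ A) x
  · rw [hide_of_mem hx hxcl]
    rcases hxcl with (hxF' | hxA) | ⟨hlev, hchild⟩
    · exact absurd hxF' hxF
    · linarith [hA x hxA]
    · exact absurd ⟨hlev, hchild⟩ hx
  · rw [hide_of_notMem hx hxcl]

/-! ### Nodes under a node -/

theorem Under.lev_le (h : G.Under F y x) : G.lev y ≤ G.lev x := by
  induction h with
  | refl => exact le_rfl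
  | tail _ h ih => exact ih.trans (by have := G.lev_eq_of_child h.1; omega)

theorem Under.total {x' : V} (h : G.Under F y x) (h' : G.Under F y x') :
    G.Under F x x' ∨ G.Under F x' x :=
  Relation.ReflTransGen.total_of_right_unique
    (fun _ _ _ hx hx' => G.parent_unique hx.1 hx'.1) h h'

theorem Under.eq_of_lev_le (h : G.Under F y x) (hl : G.lev x ≤ G.lev y) : y = x := by
  rcases Relation.ReflTransGen.cases_tail h with rfl | ⟨z, hyz, hzx⟩
  · rfl
  · have := G.lev_eq_of_child hzx.1
    have := Under.lev_le hyz
    omega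

theorem Under.lev_lt (h : G.Under F y x) (hne : y ≠ x) : G.lev y < G.lev x :=
  lt_of_not_ge fun hl => hne (h.eq_of_lev_le hl)

theorem Under.eq_of_lev_eq {x' : V} (h : G.Under F y x) (h' : G.Under F y x')
    (hl : G.lev x = G.lev x') : x = x' := by
  rcases h.total h' with h | h
  · exact h.eq_of_lev_le hl.ge
  · exact (h.eq_of_lev_le hl.le).symm

theorem Under.exists_covered (h : G.Under F y x) {l : ℕ} (hl : G.lev y < l) (hl' : l ≤ G.lev x) :
    ∃ z, G.Covered F z ∧ G.lev z = l ∧ G.Under F z x ∧ G.Under F y z := by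
  induction h using Relation.ReflTransGen.head_induction_on with
  | refl => omega
  | @head y z hyz hzx ih =>
    by_cases hz : G.lev z = l
    · exact ⟨z, hyz.2, hz, hzx, .single hyz⟩
    · have := G.lev_eq_of_child hyz.1
      obtain ⟨a, ha, hal, hax, hza⟩ := ih (by omega)
      exact ⟨a, ha, hal, hax, hza.head hyz⟩

theorem Under.mem (hF : G.IsClosed F) (hx : G.Covered F x) (h : G.Under F y x) : y ∈ F := by
  rcases Relation.ReflTransGen.cases_head h with rfl | ⟨z, hyz, -⟩
  · exact hF hx
  · exact hyz.2.2 y hyz.1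

/-! ### Pruning -/

theorem isPruning_diff_strict (hx : x ∈ F) :
    G.IsPruning F x (F \ {y | G.Under F y x ∧ y ≠ x}) where
  subset := Set.sdiff_subset
  eq_of_under hy hyF := by_contra fun hne => hyF.2 ⟨hy, hne⟩
  mem_of_not_under hyF hy := ⟨hyF, fun h => hy h.1⟩
  mem_of_child _ _ := ⟨hx, fun h => h.2 rfl⟩

theorem isPruning_diff (hx : ∀ z, G.Covered F z → ¬ G.child x z) :
    G.IsPruning F x (F \ {y | G.Under F y x}) where
  subset := Set.sdiff_subset
  eq_of_under hy hyF := absurd hy hyF.2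
  mem_of_not_under hyF hy := ⟨hyF, hy⟩
  mem_of_child hz hxz := absurd hxz (hx _ hz)

namespace IsPruning

theorem not_covered_of_under (h : G.IsPruning F x F') (hy : G.Under F y x) : ¬ G.Covered F' y := by
  intro hcov
  obtain ⟨z, hz⟩ := exists_child hcov.1
  have hzx : G.Under F z x := hy.head ⟨hz, hcov.mono h.subset⟩
  obtain rfl := h.eq_of_under hzx (hcov.2 z hz)
  have := G.lev_eq_of_child hz
  have := hy.lev_le
  omega

theorem covered_iff_of_not_under (h : G.IsPruning F x F') (hy : ¬ G.Under F y x) :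
    G.Covered F' y ↔ G.Covered F y := by
  refine ⟨.mono h.subset, fun hcov => ⟨hcov.1, fun z hz => ?_⟩⟩
  by_cases hzx : G.Under F z x
  · rcases Relation.ReflTransGen.cases_head hzx with rfl | ⟨y', hy', hy'x⟩
    · exact h.mem_of_child hcov hz
    · exact absurd (G.parent_unique hz hy'.1 ▸ hy'x) hy
  · exact h.mem_of_not_under (hcov.2 z hz) hzx

theorem isClosed (h : G.IsPruning F x F') (hF : G.IsClosed F) : G.IsClosed F' := fun y hy =>
  have hyx : ¬ G.Under F y x := fun hyx => h.not_covered_of_under hyx hy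
  h.mem_of_not_under (hF (hy.mono h.subset)) hyx

theorem hide_of_under (h : G.IsPruning F x F') (hy : G.Under F y x) (hne : y ≠ x) :
    G.hide F' C y = C.b y :=
  hide_of_notMem (h.not_covered_of_under hy) fun hyF => hne (h.eq_of_under hy hyF)

theorem hide_of_not_under (h : G.IsPruning F x F') (hy : ¬ G.Under F y x) :
    G.hide F' C y = G.hide F C y := by
  have hmem : y ∈ F' ↔ y ∈ F := ⟨fun hy => h.subset hy, fun hyF => h.mem_of_not_under hyF hy⟩
  have hcov := h.covered_iff_of_not_under hy
  grind [hide]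

end IsPruning

/-! ### Recolouring -/

open scoped Classical in
variable (G) in
/-- The configuration `C` with a full black pebble pinned to every node of `s` and all white
pebbles on other leaves replaced by black ones. White and black are placed and removed equally
freely on a leaf, so this loses nothing, and afterwards a move at a leaf only changes its black. -/
noncomputable def recolour (s : Set V) (C : FracConfig V) : FracConfig V where
  b x := if x ∈ s then 1 else if G.lev x = 0 then C.b x + C.w x else C.b x
  w x := if x ∈ s ∨ G.lev x = 0 then 0 else C.w x

variable {s : Set V}

theorem valid_recolour (hC : C.Valid) : (G.recolour s C).Valid := by
  intro x
  obtain ⟨hb, hw, hbw⟩ := hC x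
  simp only [recolour]
  grind

theorem recolour_add (hx : x ∉ s) :
    (G.recolour s C).b x + (G.recolour s C).w x = C.b x + C.w x := by
  simp only [recolour]
  grind

theorem recolour_easierAt (hb : C'.b x ≤ C.b x) (hw : C'.w x = C.w x) :
    (G.recolour s C').EasierAt (G.recolour s C) x := by
  simp only [FracConfig.EasierAt, recolour]
  grind

theorem recolour_singleton (hC : C.Valid) (hx : C.b x = 1) :
    G.recolour {x} C = G.recolour ∅ C := by
  have hw : C.w x = 0 := by linarith [(hC x).2.1, (hC x).2.2]
  simp only [recolour, FracConfig.mk.injEq]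
  constructor <;> funext y <;> by_cases hy : y = x <;> simp [hy, hx, hw]

theorem exists_pebbled_of_fracMove (h : FracMove G.child C C') :
    ∃ x, (∀ y ≠ x, C'.b y ≤ C.b y ∧ C'.w y = C.w y) ∧
      (G.lev x = 0 → ∀ y ≠ x, C'.b y = C.b y) ∧
      (C'.EasierAt C x ∨ ∀ y, G.child y x → C.b y + C.w y = 1) := by
  rcases h with ⟨x, hle, hb, hw⟩ | ⟨x, hle, hw, hb⟩ | ⟨x, hfull, -, -, hchild, hother⟩
  · exact ⟨x, fun y hy => ⟨(hb y hy).le, congrFun hw y⟩, fun _ => hb, .inl ⟨hle, hw.ge x⟩⟩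
  · exact ⟨x, fun y hy => ⟨hb.le y, hw y hy⟩, fun _ y _ => congrFun hb y, .inl ⟨hb.le x, hle⟩⟩
  · refine ⟨x, fun y hy => ?_, fun hx y hy => (hother y hy fun hyx => ?_).1, .inr hfull⟩
    · by_cases hyx : G.child y x
      · exact hchild y hyx
      · exact (hother y hy hyx).imp_left Eq.le
    · simp [G.lev_eq_of_child hyx] at hx

/-! ### Counting nodes and weights level by level -/

variable [Fintype V]

open scoped Classical in
variable (G) in
/-- The nodes under `x` of level `j`. -/
noncomputable def level (F : Set V) (x : V) (j : ℕ) : Finset V :=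
  {y | G.Under F y x ∧ G.lev y = j}

open scoped Classical in
variable (G) in
/-- The covered nodes under `x` of level `j`. -/
noncomputable def coveredLevel (F : Set V) (x : V) (j : ℕ) : Finset V :=
  {y ∈ G.level F x j | G.Covered F y}

open scoped Classical in
variable (G) in
/-- The nodes under `x` of level less than `j`. -/
noncomputable def below (F : Set V) (x : V) (j : ℕ) : Finset V :=
  {y | G.Under F y x ∧ G.lev y < j}

theorem mem_level {j : ℕ} : y ∈ G.level F x j ↔ G.Under F y x ∧ G.lev y = j := by
  simp [level]

theorem mem_coveredLevel {j : ℕ} :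
    y ∈ G.coveredLevel F x j ↔ (G.Under F y x ∧ G.lev y = j) ∧ G.Covered F y := by
  simp [coveredLevel, mem_level]

theorem mem_below {j : ℕ} : y ∈ G.below F x j ↔ G.Under F y x ∧ G.lev y < j := by
  simp [below]

theorem below_mono {j l : ℕ} (h : j ≤ l) : G.below F x j ⊆ G.below F x l := fun y hy => by
  rw [mem_below] at hy ⊢
  exact ⟨hy.1, hy.2.trans_le h⟩

theorem sum_below_succ (f : V → ℝ) (j : ℕ) :
    ∑ y ∈ G.below F x (j + 1), f y = ∑ y ∈ G.below F x j, f y + ∑ y ∈ G.level F x j, f y := by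
  classical
  rw [← sum_union]
  · refine sum_congr (Finset.ext fun y => ?_) fun _ _ => rfl
    simp only [mem_union, mem_below, mem_level, Nat.lt_succ_iff_lt_or_eq, and_or_left]
  · exact disjoint_left.2 fun y hy hy' => (mem_below.1 hy).2.ne (mem_level.1 hy').2

theorem mul_card_coveredLevel_le (j : ℕ) :
    (k + 1) * #(G.coveredLevel F x (j + 1)) ≤ #(G.level F x j) := by
  classical
  have hcard : ∀ z ∈ G.coveredLevel F x (j + 1), k + 1 ≤ #{y | G.child y z} := fun z hz => by
    simpa only [Nat.card_eq_fintype_card, Fintype.card_subtype, Nat.succ_le_iff] using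
      G.lt_card_children (mem_coveredLevel.1 hz).2.1
  calc (k + 1) * #(G.coveredLevel F x (j + 1))
      = ∑ _z ∈ G.coveredLevel F x (j + 1), (k + 1) := by simp [mul_comm]
    _ ≤ ∑ z ∈ G.coveredLevel F x (j + 1), #{y | G.child y z} := sum_le_sum hcard
    _ = #((G.coveredLevel F x (j + 1)).biUnion fun z => {y | G.child y z}) := by
        refine (card_biUnion fun z _ z' _ hne => disjoint_left.2 fun y hy hy' => hne ?_).symm
        exact G.parent_unique (mem_filter.1 hy).2 (mem_filter.1 hy').2
    _ ≤ #(G.level F x j) := by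
        refine card_le_card (biUnion_subset.2 fun z hz y hy => mem_level.2 ?_)
        obtain ⟨⟨hzx, hzj⟩, hz⟩ := mem_coveredLevel.1 hz
        have hyz := (mem_filter.1 hy).2
        have := G.lev_eq_of_child hyz
        exact ⟨hzx.head ⟨hyz, hz⟩, by omega⟩

theorem card_level_le (hC : C.Valid) (hF : G.IsClosed F) (hx : G.Covered F x) (j : ℕ) :
    (#(G.level F x j) : ℝ) ≤
      #(G.coveredLevel F x j) + ∑ y ∈ G.level F x j, (G.hide F C y + C.w y) := by
  classical
  have hone : ∀ y ∈ G.level F x j,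
      (1 : ℝ) ≤ (if G.Covered F y then 1 else 0) + (G.hide F C y + C.w y) := by
    intro y hy
    by_cases hcov : G.Covered F y
    · rw [if_pos hcov]
      linarith [hide_nonneg (F := F) (G := G) hC y, (hC y).2.1]
    · rw [if_neg hcov, hide_of_mem hcov ((mem_level.1 hy).1.mem hF hx)]
      linarith
  calc (#(G.level F x j) : ℝ) = ∑ _y ∈ G.level F x j, (1 : ℝ) := by simp
    _ ≤ ∑ y ∈ G.level F x j, ((if G.Covered F y then 1 else 0) + (G.hide F C y + C.w y)) :=
        sum_le_sum hone
    _ = _ := by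
        rw [sum_add_distrib, sum_boole, coveredLevel]

theorem card_coveredLevel_add_le (hC : C.Valid) (hF : G.IsClosed F) (hx : G.Covered F x)
    (hy : G.Under F y x) {j : ℕ} (hj : j ≤ G.lev x) :
    (#(G.coveredLevel F x j) : ℝ) + k * (j - G.lev y : ℕ) ≤
      ∑ z ∈ G.below F x j, (G.hide F C z + C.w z) := by
  induction j with
  | zero =>
    have : G.coveredLevel F x 0 = ∅ :=
      eq_empty_of_forall_notMem fun z hz =>
        (mem_coveredLevel.1 hz).2.1 (mem_coveredLevel.1 hz).1.2
    simp [this, below]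
  | succ j ih =>
    have hcount : ((k : ℝ) + 1) * #(G.coveredLevel F x (j + 1)) ≤ #(G.level F x j) := by
      exact_mod_cast mul_card_coveredLevel_le (G := G) (F := F) (x := x) j
    have hlevel := card_level_le hC hF hx j
    have hsurplus : (k : ℝ) * (j + 1 - G.lev y : ℕ) ≤
        k * (j - G.lev y : ℕ) + k * #(G.coveredLevel F x (j + 1)) := by
      rw [← mul_add]
      gcongr
      norm_cast
      by_cases hyj : G.lev y < j + 1
      · obtain ⟨z, hz, hzj, hzx, -⟩ := hy.exists_covered hyj hj
        have : 0 < #(G.coveredLevel F x (j + 1)) :=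
          card_pos.2 ⟨z, mem_coveredLevel.2 ⟨⟨hzx, hzj⟩, hz⟩⟩
        omega
      · omega
    rw [sum_below_succ]
    linarith [ih (by omega)]

theorem sum_below_le_card_coveredLevel {f : V → ℝ} {j : ℕ} (hj : j ≤ G.lev x)
    (hf : ∀ z ∈ G.coveredLevel F x j, ∑ y ∈ G.below F z (G.lev z), f y ≤ 1) :
    ∑ y ∈ G.below F x j, f y ≤ #(G.coveredLevel F x j) := by
  classical
  have hunion : G.below F x j =
      (G.coveredLevel F x j).biUnion fun z => G.below F z (G.lev z) := by
    ext y
    simp only [mem_biUnion, mem_below, mem_coveredLevel]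
    constructor
    · rintro ⟨hyx, hyj⟩
      obtain ⟨z, hz, rfl, hzx, hyz⟩ := hyx.exists_covered hyj hj
      exact ⟨z, ⟨⟨hzx, rfl⟩, hz⟩, hyz, hyj⟩
    · rintro ⟨z, ⟨⟨hzx, rfl⟩, -⟩, hyz, hyj⟩
      exact ⟨hyz.trans hzx, hyj⟩
  rw [hunion, sum_biUnion]
  · exact (sum_le_card_nsmul _ _ 1 hf).trans_eq (by simp)
  · intro z hz z' hz' hne
    refine disjoint_left.2 fun y hy hy' => hne ?_
    exact (mem_below.1 hy).1.eq_of_lev_eq (mem_below.1 hy').1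
      ((mem_coveredLevel.1 hz).1.2.trans (mem_coveredLevel.1 hz').1.2.symm)

/-! ### Klawe's potential -/

variable (G) in
/-- The total weight on the nodes of level at least `j`. -/
noncomputable def weightAbove (u : V → ℝ) (j : ℕ) : ℝ :=
  ∑ x with j ≤ G.lev x, u x

variable (G) in
/-- Klawe's potential of the weight `u`, the maximum of `weightAbove u j + k / 2 * j` over the
levels `j` with nonzero `weightAbove u j`, is at most `M`. -/
def PotentialLE (M : ℝ) (u : V → ℝ) : Prop :=
  ∀ j : ℕ, G.weightAbove u j = 0 ∨ G.weightAbove u j + k / 2 * j ≤ M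

variable (G) in
/-- `F` is closed and its hiding configuration has potential at most `M`. -/
def IsHidingSet (M : ℝ) (C : FracConfig V) (F : Set V) : Prop :=
  G.IsClosed F ∧ G.PotentialLE M (G.hide F C)

variable (G) in
/-- `F` is a hiding set whose hiding configuration has the least total weight. -/
def IsOptimal (M : ℝ) (C : FracConfig V) (F : Set V) : Prop :=
  MinimalFor (G.IsHidingSet M C) (fun F => ∑ x, G.hide F C x) F

variable {M : ℝ}

theorem weightAbove_zero (u : V → ℝ) : G.weightAbove u 0 = ∑ x, u x := by
  simp [weightAbove]

theorem weightAbove_nonneg {u : V → ℝ} (hu : ∀ x, 0 ≤ u x) (j : ℕ) : 0 ≤ G.weightAbove u j :=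
  sum_nonneg fun x _ => hu x

theorem PotentialLE.mono {u u' : V → ℝ} (h : G.PotentialLE M u) (hu' : ∀ x, 0 ≤ u' x)
    (hle : ∀ x, u' x ≤ u x) : G.PotentialLE M u' := by
  intro j
  have hnonneg := weightAbove_nonneg (G := G) hu' j
  have hle' : G.weightAbove u' j ≤ G.weightAbove u j := sum_le_sum fun x _ => hle x
  rcases h j with h | h
  · exact .inl (by linarith)
  · exact .inr (by linarith)

theorem weightAbove_add_sum_below_le {u : V → ℝ} (hu : ∀ x, 0 ≤ u x) {j l : ℕ} (hlj : l ≤ j)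
    (hl : ∀ y ∈ G.below F x j, l ≤ G.lev y) :
    G.weightAbove u j + ∑ y ∈ G.below F x j, u y ≤ G.weightAbove u l := by
  classical
  rw [weightAbove, ← sum_union]
  · refine sum_le_sum_of_subset_of_nonneg (union_subset ?_ ?_) fun y _ _ => hu y
    · exact monotone_filter_right _ fun y _ hy => hlj.trans hy
    · exact fun y hy => mem_filter.2 ⟨mem_univ y, hl y hy⟩
  · exact disjoint_left.2 fun y hy hy' => (mem_filter.1 hy).2.not_gt (mem_below.1 hy').2

theorem IsHidingSet.of_hide_le (hF : G.IsHidingSet M C F) (hC' : C'.Valid) (hF' : G.IsClosed F')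
    (hle : ∀ x, G.hide F' C' x ≤ G.hide F C x) : G.IsHidingSet M C' F' :=
  ⟨hF', hF.2.mono (hide_nonneg hC') hle⟩

theorem IsPruning.weightAbove_hide (h : G.IsPruning F x F') (hx : G.Covered F x) {j : ℕ}
    (hj : j ≤ G.lev x) :
    G.weightAbove (G.hide F' C) j = G.weightAbove (G.hide F C) j + G.hide F' C x -
      ∑ y ∈ G.below F x (G.lev x), (G.hide F C y - C.b y) +
      ∑ y ∈ G.below F x j, (G.hide F C y - C.b y) := by
  classical
  have hstrict : ∀ y ∈ G.below F x (G.lev x), y ≠ x := by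
    rintro _ hy rfl
    exact (mem_below.1 hy).2.false
  have hchange : ∑ y with j ≤ G.lev y, (G.hide F' C y - G.hide F C y) = G.hide F' C x +
      ∑ y ∈ G.below F x (G.lev x) \ G.below F x j, (G.hide F' C y - G.hide F C y) := by
    have hxmem : x ∉ G.below F x (G.lev x) \ G.below F x j := fun hx =>
      hstrict x (mem_sdiff.1 hx).1 rfl
    have hinsert := sum_insert (f := fun y => G.hide F' C y - G.hide F C y) hxmem
    rw [hide_of_covered hx, sub_zero] at hinsert
    rw [← hinsert]
    refine (sum_subset (fun y hy => ?_) fun y hyj hy => ?_).symm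
    · simp only [mem_insert, mem_sdiff, mem_below, mem_filter, mem_univ, true_and] at hy ⊢
      grind
    · rw [h.hide_of_not_under fun hyx => hy ?_, sub_self]
      simp only [mem_insert, mem_sdiff, mem_below, mem_filter, mem_univ, true_and] at hyj ⊢
      have := hyx.lev_lt
      grind
  have hinner : ∑ y ∈ G.below F x (G.lev x) \ G.below F x j, (G.hide F' C y - G.hide F C y) =
      -∑ y ∈ G.below F x (G.lev x) \ G.below F x j, (G.hide F C y - C.b y) := by
    rw [← sum_neg_distrib]
    refine sum_congr rfl fun y hy => ?_
    have hy := (mem_sdiff.1 hy).1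
    rw [h.hide_of_under (mem_below.1 hy).1 (hstrict y hy), neg_sub]
  rw [hinner, sum_sdiff_eq_sub (below_mono hj), sum_sub_distrib] at hchange
  unfold weightAbove
  linarith

theorem IsPruning.weightAbove_hide_of_lev_lt (h : G.IsPruning F x F') {j : ℕ} (hj : G.lev x < j) :
    G.weightAbove (G.hide F' C) j = G.weightAbove (G.hide F C) j :=
  sum_congr rfl fun y hy => h.hide_of_not_under fun hyx => by
    have := hyx.lev_le
    have := (mem_filter.1 hy).2
    omega

/-! ### Optimal hiding sets -/

variable (G) in
/-- The amount by which the hiding configuration of `F` exceeds `C` at `x`. -/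
noncomputable def excess (F : Set V) (C : FracConfig V) (x : V) : ℝ :=
  G.hide F C x - (C.b x + C.w x)

theorem sum_below_excess_le (hC : C.Valid) {j l : ℕ} (h : j ≤ l) :
    ∑ y ∈ G.below F x j, (G.hide F C y - C.b y) ≤ ∑ y ∈ G.below F x j, G.excess F C y +
      (∑ y ∈ G.below F x l, (G.hide F C y - C.b y) - ∑ y ∈ G.below F x l, G.excess F C y) := by
  have hwhite : ∑ y ∈ G.below F x j, C.w y ≤ ∑ y ∈ G.below F x l, C.w y :=
    sum_le_sum_of_subset_of_nonneg (below_mono h) fun y _ _ => (hC y).2.1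
  simp only [excess, sum_sub_distrib, sum_add_distrib]
  linarith

-- Each level between `j` and the lowest one under `x` takes `k` units of hiding and white weight.
-- The potential leaves room for less than `k / 2` units of hiding weight, and the positive excess
-- for even less white weight.
theorem card_coveredLevel_lt_of_lt_sum_excess (hC : C.Valid) (hF : G.IsClosed F)
    (hpot : G.PotentialLE M (G.hide F C)) (hx : G.Covered F x) {j : ℕ} (hj : j ≤ G.lev x) {δ : ℝ}
    (hδ : 0 < δ) (hexcess : δ < ∑ y ∈ G.below F x j, G.excess F C y)
    (hM : M < G.weightAbove (G.hide F C) j + δ + k / 2 * j) :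
    #(G.coveredLevel F x j) < δ := by
  have hne : (G.below F x j).Nonempty := by
    refine nonempty_of_sum_ne_zero (f := G.excess F C) ?_
    linarith
  obtain ⟨y, hy, hmin⟩ := exists_min_image _ G.lev hne
  obtain ⟨hyx, hyj⟩ := mem_below.1 hy
  have hcount := card_coveredLevel_add_le hC hF hx hyx hj
  have hnonneg : ∀ z, 0 ≤ G.hide F C z := hide_nonneg hC
  have hdeep := weightAbove_add_sum_below_le hnonneg hyj.le hmin
  have hpos := weightAbove_nonneg (G := G) hnonneg j
  have hblack : 0 ≤ ∑ z ∈ G.below F x j, C.b z := sum_nonneg fun z _ => (hC z).1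
  have hwhite : 0 ≤ ∑ z ∈ G.below F x j, C.w z := sum_nonneg fun z _ => (hC z).2.1
  simp only [excess, sum_sub_distrib, sum_add_distrib] at hexcess
  rw [sum_add_distrib, Nat.cast_sub hyj.le] at hcount
  rcases hpot (G.lev y) with h | h <;> linarith

-- If the pruned potential is too large at level `j` because the weight has grown by `δ`, then there
-- are fewer than `δ` covered nodes of level `j` under `x`. As the excess below each of them is at
-- most `1`, the excess below level `j` is less than `δ`, which is too little for the growth.
theorem IsPruning.potentialLE (hC : C.Valid) (hF : G.IsHidingSet M C F) (hx : G.Covered F x)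
    (h : G.IsPruning F x F')
    (hbelow : ∀ z, G.Covered F z → G.lev z < G.lev x →
      ∑ y ∈ G.below F z (G.lev z), G.excess F C y ≤ 1)
    (hlt : G.hide F' C x + C.w x < ∑ y ∈ G.below F x (G.lev x), G.excess F C y) :
    G.PotentialLE M (G.hide F' C) := by
  intro j
  by_contra! hbad
  obtain ⟨hne, hM⟩ := hbad
  have hpos := (weightAbove_nonneg (hide_nonneg (F := F') hC) j).lt_of_ne' hne
  have hincr : G.weightAbove (G.hide F C) j < G.weightAbove (G.hide F' C) j := by
    rcases hF.2 j with h | h <;> linarith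
  have hj : j ≤ G.lev x := le_of_not_gt fun hj => hincr.ne' (h.weightAbove_hide_of_lev_lt hj)
  have hwhite := (hC x).2.1
  have hweight := h.weightAbove_hide (C := C) hx hj
  have hexcess := sum_below_excess_le (G := G) (F := F) (x := x) hC hj
  have hcard : #(G.coveredLevel F x j) <
      G.weightAbove (G.hide F' C) j - G.weightAbove (G.hide F C) j :=
    card_coveredLevel_lt_of_lt_sum_excess hC hF.1 hF.2 hx hj (by linarith) (by linarith)
      (by linarith)
  rcases hj.eq_or_lt with rfl | hj
  · have hmem : x ∈ G.coveredLevel F x (G.lev x) := mem_coveredLevel.2 ⟨⟨.refl, rfl⟩, hx⟩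
    have hone : (1 : ℝ) ≤ #(G.coveredLevel F x (G.lev x)) := by
      exact_mod_cast card_pos.2 ⟨x, hmem⟩
    linarith [hide_add_white_le_one (F := F') (G := G) hC x]
  · have := sum_below_le_card_coveredLevel (f := G.excess F C) hj.le fun z hz =>
      hbelow z (mem_coveredLevel.1 hz).2 ((mem_coveredLevel.1 hz).1.2.trans_lt hj)
    linarith

theorem IsOptimal.sum_hide_le (hF : G.IsOptimal M C F) (hF' : G.IsHidingSet M C F') :
    ∑ x, G.hide F C x ≤ ∑ x, G.hide F' C x :=
  le_of_not_gt fun h => hF.not_prop_of_lt h hF'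

theorem IsOptimal.sum_excess_le_of_isPruning (hC : C.Valid) (hF : G.IsOptimal M C F)
    (hx : G.Covered F x) (h : G.IsPruning F x F')
    (hbelow : ∀ z, G.Covered F z → G.lev z < G.lev x →
      ∑ y ∈ G.below F z (G.lev z), G.excess F C y ≤ 1) :
    ∑ y ∈ G.below F x (G.lev x), G.excess F C y ≤ G.hide F' C x + C.w x := by
  by_contra! hlt
  have hle := hF.sum_hide_le ⟨h.isClosed hF.prop.1, h.potentialLE hC hF.prop hx hbelow hlt⟩
  have hweight := h.weightAbove_hide (C := C) hx (Nat.zero_le _)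
  have hexcess := sum_below_excess_le (G := G) (F := F) (x := x) hC (Nat.zero_le (G.lev x))
  have hempty : G.below F x 0 = ∅ := by simp [below]
  simp only [weightAbove_zero, hempty, sum_empty] at hweight hexcess
  linarith [(hC x).2.1]

theorem IsOptimal.sum_excess_below_le_one (hC : C.Valid) (hF : G.IsOptimal M C F)
    (hx : G.Covered F x) : ∑ y ∈ G.below F x (G.lev x), G.excess F C y ≤ 1 := by
  induction hn : G.lev x using Nat.strong_induction_on generalizing x with
  | _ n ih =>
    subst hn
    exact (hF.sum_excess_le_of_isPruning hC hx (isPruning_diff_strict (hF.prop.1 hx))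
      fun z hz hlt => ih _ hlt hz rfl).trans (hide_add_white_le_one hC x)

theorem IsOptimal.hide_le_black (hC : C.Valid) (hF : G.IsOptimal M C F) (hx : ¬ G.Covered F x)
    (htop : ∀ z, G.Covered F z → ¬ G.child x z) : G.hide F C x ≤ C.b x := by
  have hprune := isPruning_diff htop
  have hx' : G.hide (F \ {y | G.Under F y x}) C x = C.b x :=
    hide_of_notMem (fun h => hx (h.mono hprune.subset)) fun h => h.2 .refl
  have hle : ∀ y, G.hide (F \ {y | G.Under F y x}) C y ≤ G.hide F C y := fun y => by
    by_cases hyx : G.Under F y x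
    · rcases Relation.ReflTransGen.cases_tail hyx with rfl | ⟨z, -, hzx⟩
      · exact hx'.trans_le (black_le_hide hC hx)
      · exact absurd hzx.2 hx
    · exact (hprune.hide_of_not_under hyx).le
  have hsum := hF.sum_hide_le
    (hF.prop.of_hide_le hC (hprune.isClosed hF.prop.1) hle)
  have heq := (sum_eq_sum_iff_of_le fun y _ => hle y).1
    ((sum_le_sum fun y _ => hle y).antisymm hsum)
  exact (heq x (mem_univ x)).ge.trans hx'.le

open scoped Classical in
variable (G) in
theorem sum_eq_sum_tops (F : Set V) (f : V → ℝ) :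
    ∑ y, f y = ∑ x with ∀ z, G.Covered F z → ¬ G.child x z, ∑ y with G.Under F y x, f y := by
  have hdisj : ((univ.filter fun x => ∀ z, G.Covered F z → ¬ G.child x z : Finset V) :
      Set V).PairwiseDisjoint fun x => univ.filter fun y => G.Under F y x := by
    have htop : ∀ {x x'}, (∀ z, G.Covered F z → ¬ G.child x z) → G.Under F x x' → x' = x :=
      fun hx hxx' => (Relation.ReflTransGen.cases_head hxx').elim Eq.symm
        fun ⟨z, hz, _⟩ => absurd hz.1 (hx z hz.2)
    intro x hx x' hx' hne
    refine disjoint_left.2 fun y hy hy' => hne ?_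
    simp only [coe_filter, mem_filter, mem_univ, true_and, Set.mem_ofPred_eq] at hx hx' hy hy'
    rcases hy.total hy' with h | h
    · exact (htop hx h).symm
    · exact htop hx' h
  rw [← sum_biUnion hdisj]
  refine (sum_subset (subset_univ _) fun y _ hy => absurd ?_ hy).symm
  obtain ⟨x, hx, hmax⟩ := exists_max_image (univ.filter fun x => G.Under F y x) G.lev
    ⟨y, mem_filter.2 ⟨mem_univ y, .refl⟩⟩
  simp only [mem_biUnion, mem_filter, mem_univ, true_and] at hx hmax ⊢
  refine ⟨x, fun z hz hxz => ?_, hx⟩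
  have := hmax z (hx.tail ⟨hxz, hz⟩)
  have := G.lev_eq_of_child hxz
  omega

theorem IsOptimal.sum_excess_under_nonpos (hC : C.Valid) (hF : G.IsOptimal M C F)
    (htop : ∀ z, G.Covered F z → ¬ G.child x z) [DecidablePred (G.Under F · x)] :
    ∑ y with G.Under F y x, G.excess F C y ≤ 0 := by
  classical
  have hunder : univ.filter (G.Under F · x) = insert x (G.below F x (G.lev x)) := by
    ext y
    simp only [mem_filter, mem_univ, true_and, mem_insert, mem_below]
    refine ⟨fun h => or_iff_not_imp_left.2 fun hne => ⟨h, h.lev_lt hne⟩, ?_⟩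
    rintro (rfl | h)
    exacts [.refl, h.1]
  rw [hunder, sum_insert (by simp [mem_below])]
  by_cases hx : G.Covered F x
  · have hbelow := hF.sum_excess_le_of_isPruning hC hx (isPruning_diff htop)
      fun z hz _ => hF.sum_excess_below_le_one hC hz
    rw [hide_of_notMem ((isPruning_diff htop).not_covered_of_under .refl) fun h => h.2 .refl]
      at hbelow
    rw [excess, hide_of_covered hx]
    linarith
  · have hempty : G.below F x (G.lev x) = ∅ := by
      refine eq_empty_of_forall_notMem fun y hy => ?_
      rcases Relation.ReflTransGen.cases_tail (mem_below.1 hy).1 with rfl | ⟨z, -, hzx⟩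
      · exact (mem_below.1 hy).2.false
      · exact hx hzx.2
    rw [hempty, sum_empty, excess]
    linarith [hF.hide_le_black hC hx htop, (hC x).2.1]

theorem IsOptimal.sum_hide_le_sum (hC : C.Valid) (hF : G.IsOptimal M C F) :
    ∑ x, G.hide F C x ≤ ∑ x, (C.b x + C.w x) := by
  classical
  rw [← sub_nonpos, ← sum_sub_distrib]
  exact (G.sum_eq_sum_tops F (G.excess F C)).trans_le <|
    sum_nonpos fun x hx => hF.sum_excess_under_nonpos hC (mem_filter.1 hx).2

/-! ### Keeping a hiding set through a pebbling -/

variable (G) in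
/-- `C` can be hidden with potential at most `M`; this is the invariant of the pebbling. -/
def Hideable (M : ℝ) (C : FracConfig V) : Prop :=
  ∃ F, G.IsHidingSet M C F

theorem Hideable.exists_isOptimal (h : G.Hideable M C) : ∃ F, G.IsOptimal M C F :=
  (Set.toFinite {F | G.IsHidingSet M C F}).exists_minimalFor _ _ h

theorem Hideable.of_easierAt (h : G.Hideable M C) (hC' : C'.Valid)
    (hle : ∀ x, C'.EasierAt C x) : G.Hideable M C' := by
  obtain ⟨F, hF⟩ := h
  exact ⟨F, hF.of_hide_le hC' hF.1 fun x => hide_le_of_easierAt (hle x)⟩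

theorem Hideable.of_children_full (h : G.Hideable M C) (hC : C.Valid) (hC' : C'.Valid)
    (hx : G.lev x ≠ 0) (hfull : ∀ y, G.child y x → C.b y + C.w y = 1)
    (hother : ∀ y ≠ x, C'.EasierAt C y) : G.Hideable M C' := by
  obtain ⟨F, hF⟩ := h
  have hcov : G.Covered {y | G.InClosure (F ∪ {y | G.child y x}) y} x :=
    ⟨hx, fun y hy => .of_mem (.inr hy)⟩
  refine ⟨_, hF.of_hide_le hC' (isClosed_closure (F ∪ {y | G.child y x})) fun y => ?_⟩
  by_cases hy : y = x
  · rw [hy, hide_of_covered hcov]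
    exact hide_nonneg hC x
  · exact (hide_le_of_easierAt (hother y hy)).trans (hide_closure_le hC hfull y)

-- Leaves only count in `weightAbove _ 0`, the total weight, which optimality controls.
theorem Hideable.of_leaf (h : G.Hideable M C) (hC : C.Valid) (hC' : C'.Valid) (hx : G.lev x = 0)
    (hb : ∀ y ≠ x, C'.b y = C.b y) (hw : C'.w = C.w) (hM : ∑ y, (C'.b y + C'.w y) ≤ M) :
    G.Hideable M C' := by
  rcases le_total (C'.b x) (C.b x) with hle | hle
  · refine h.of_easierAt hC' fun y => ⟨?_, hw.ge y⟩
    by_cases hy : y = x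
    · rwa [hy]
    · exact (hb y hy).le
  obtain ⟨F, hF⟩ := h.exists_isOptimal
  have hsame : ∀ y ≠ x, G.hide F C' y = G.hide F C y := fun y hy => by
    simp only [hide, hb y hy, hw]
  refine ⟨F, hF.prop.1, fun j => ?_⟩
  rcases j.eq_zero_or_pos with rfl | hj
  · right
    have hpointwise : ∀ y, G.hide F C' y + C.b y ≤ G.hide F C y + C'.b y := fun y => by
      by_cases hy : y = x
      · subst hy
        have hncov : ¬ G.Covered F y := fun h => h.1 hx
        simp only [hide, hncov, if_false, hw]
        split_ifs <;> linarith
      · rw [hsame y hy, hb y hy]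
    have hsum := sum_le_sum fun y (_ : y ∈ univ) => hpointwise y
    have hopt := hF.sum_hide_le_sum hC
    simp only [sum_add_distrib, hw] at hsum hopt hM
    rw [weightAbove_zero]
    norm_num
    linarith
  · have : G.weightAbove (G.hide F C') j = G.weightAbove (G.hide F C) j :=
      sum_congr rfl fun y hy => hsame y <| by
        rintro rfl
        exact (hj.trans_le (mem_filter.1 hy).2).ne' hx
    rw [this]
    exact hF.prop.2 j

theorem add_one_le_sum_hide_add_white (hC : C.Valid) (hx : G.Covered F x) :
    (k : ℝ) + 1 ≤ ∑ y, (G.hide F C y + C.w y) := by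
  classical
  obtain ⟨z, hz, hmin⟩ := exists_min_image (univ.filter (G.Covered F)) G.lev
    ⟨x, mem_filter.2 ⟨mem_univ x, hx⟩⟩
  replace hz := (mem_filter.1 hz).2
  have hone : ∀ y ∈ univ.filter (G.child · z), G.hide F C y + C.w y = 1 := fun y hy => by
    have hyz := (mem_filter.1 hy).2
    have hy : ¬ G.Covered F y := fun hy => by
      have := hmin y (mem_filter.2 ⟨mem_univ y, hy⟩)
      have := G.lev_eq_of_child hyz
      omega
    rw [hide_of_mem hy (hz.2 y hyz), sub_add_cancel]
  have hcard : k + 1 ≤ #(univ.filter (G.child · z)) := by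
    simpa only [Nat.card_eq_fintype_card, Fintype.card_subtype, Nat.succ_le_iff] using
      G.lt_card_children hz.1
  calc (k : ℝ) + 1 ≤ #(univ.filter (G.child · z)) := by exact_mod_cast hcard
    _ = ∑ y with G.child y z, (G.hide F C y + C.w y) := by
        rw [sum_congr rfl hone, sum_const, nsmul_one]
    _ ≤ ∑ y, (G.hide F C y + C.w y) :=
        sum_le_sum_of_subset_of_nonneg (filter_subset _ _) fun y _ _ =>
          add_nonneg (hide_nonneg hC y) (hC y).2.1

theorem Hideable.one_add_mul_lev_le (h : G.Hideable M C) (hC : C.Valid) (hw : ∀ y, C.w y = 0)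
    (hx : C.b x = 1) (hsum : ∑ y, C.b y < k + 1) : 1 + k / 2 * G.lev x ≤ M := by
  obtain ⟨F, hF⟩ := h.exists_isOptimal
  have hncov : ∀ z, ¬ G.Covered F z := fun z hz => by
    have := hF.sum_hide_le_sum hC
    have := add_one_le_sum_hide_add_white hC hz
    simp only [hw, add_zero] at *
    linarith
  have hone : 1 ≤ G.weightAbove (G.hide F C) (G.lev x) :=
    calc 1 ≤ G.hide F C x := hx.ge.trans (black_le_hide hC (hncov x))
      _ ≤ G.weightAbove (G.hide F C) (G.lev x) :=
        single_le_sum (f := G.hide F C) (fun y _ => hide_nonneg hC y)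
          (mem_filter.2 ⟨mem_univ x, le_rfl⟩)
  rcases hF.prop.2 (G.lev x) with h | h <;> linarith

theorem sum_recolour_le {r : V} (hC : C.Valid) (hs : s ⊆ {r}) :
    ∑ x, ((G.recolour s C).b x + (G.recolour s C).w x) ≤ ∑ x, (C.b x + C.w x) + 1 := by
  classical
  calc _ ≤ ∑ x, ((C.b x + C.w x) + if x = r then 1 else 0) := by
        refine sum_le_sum fun x _ => ?_
        by_cases hx : x = r
        · rw [if_pos hx]
          linarith [(valid_recolour (G := G) (s := s) hC x).2.2, (hC x).1, (hC x).2.1]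
        · rw [if_neg hx, recolour_add fun h => hx (hs h), add_zero]
    _ = _ := by rw [sum_add_distrib, sum_ite_eq' univ r, if_pos (mem_univ r)]

theorem Hideable.recolour_of_fracMove (h : G.Hideable M (G.recolour s C)) (hC : C.Valid)
    (hC' : C'.Valid) (hs : ∀ x ∈ s, ∀ z, ¬ G.child x z) (hmove : FracMove G.child C C')
    (hM : ∑ x, ((G.recolour s C').b x + (G.recolour s C').w x) ≤ M) :
    G.Hideable M (G.recolour s C') := by
  obtain ⟨x, hother, hleaf, hx⟩ := exists_pebbled_of_fracMove hmove
  have hrec : ∀ y ≠ x, (G.recolour s C').EasierAt (G.recolour s C) y := fun y hy =>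
    recolour_easierAt (hother y hy).1 (hother y hy).2
  have heasier (hx : (G.recolour s C').EasierAt (G.recolour s C) x) :
      G.Hideable M (G.recolour s C') :=
    h.of_easierAt (valid_recolour hC') fun y =>
      (eq_or_ne y x).elim (fun hy => hy ▸ hx) (hrec y)
  by_cases hxs : x ∈ s
  · exact heasier (by simp [FracConfig.EasierAt, recolour, hxs])
  by_cases hlev : G.lev x = 0
  · refine h.of_leaf (valid_recolour hC) (valid_recolour hC') hlev (fun y hy => ?_)
      (funext fun y => ?_) hM
    · simp only [recolour, hleaf hlev y hy, (hother y hy).2]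
    · by_cases hy : y = x
      · simp [recolour, hy, hlev]
      · simp only [recolour, (hother y hy).2]
  rcases hx with hx | hfull
  · exact heasier (by simpa [FracConfig.EasierAt, recolour, hxs, hlev] using hx)
  · refine h.of_children_full (valid_recolour hC) (valid_recolour hC') hlev (fun y hy => ?_) hrec
    rw [recolour_add fun hys => hs y hys x hy, hfull y hy]

theorem hideable_recolour_of_le {r : V} (hr : ∀ z, ¬ G.child r z) {P : FracPebbling V G.child r}
    {p : ℝ} (hP : P.UsesAtMost p) (hs : s ⊆ {r}) {t₁ t₂ : ℕ} (hle : t₁ ≤ t₂) (hT : t₂ ≤ P.T)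
    (h : G.Hideable (p + 1) (G.recolour s (P.cfg t₁))) :
    G.Hideable (p + 1) (G.recolour s (P.cfg t₂)) := by
  induction t₂, hle using Nat.le_induction with
  | base => exact h
  | succ t _ ih =>
    refine (ih (by omega)).recolour_of_fracMove (P.valid t (by omega)) (P.valid _ hT)
      (fun x hx => hs hx ▸ hr) (P.move t hT) ?_
    linarith [sum_recolour_le (G := G) (P.valid _ hT) hs, hP _ hT]

theorem hideable_recolour_start {r : V} {P : FracPebbling V G.child r} :
    G.Hideable M (G.recolour ∅ (P.cfg 0)) := by
  have hncov : ∀ x, ¬ G.Covered ∅ x := fun x hx => by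
    obtain ⟨y, hy⟩ := exists_child hx.1
    exact hx.2 y hy
  refine ⟨∅, fun x hx => absurd hx (hncov x), fun j => .inl (sum_eq_zero fun x _ => ?_)⟩
  rw [hide_of_notMem (hncov x) (Set.notMem_empty x)]
  simp [recolour, P.start_b, P.start_w]

theorem hideable_recolour_finish {r : V} (hr : ∀ z, ¬ G.child r z) {P : FracPebbling V G.child r}
    {p : ℝ} (hP : P.UsesAtMost p) : G.Hideable (p + 1) (G.recolour {r} (P.cfg P.T)) := by
  obtain ⟨t, ht, hroot⟩ := P.hits_root
  refine hideable_recolour_of_le hr hP subset_rfl ht le_rfl ?_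
  rw [recolour_singleton (P.valid t ht) hroot]
  exact hideable_recolour_of_le hr hP (Set.empty_subset _) t.zero_le ht hideable_recolour_start

end GradedForest

theorem stmt_11_general {V : Type} [Fintype V] {k : ℕ} (G : GradedForest V k) {r : V}
    (hr : ∀ z, ¬ G.child r z) (P : FracPebbling V G.child r) {p : ℝ} (hP : P.UsesAtMost p) :
    (k : ℝ) / 2 * G.lev r ≤ p := by
  classical
  rcases k.eq_zero_or_pos with rfl | hk
  · simpa [P.start_b, P.start_w] using hP 0 (Nat.zero_le _)
  have hsum : ∑ x, (G.recolour {r} (P.cfg P.T)).b x < k + 1 := by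
    simp [GradedForest.recolour, P.finish_b, P.finish_w, hk]
  have hroot : (G.recolour {r} (P.cfg P.T)).b r = 1 := by simp [GradedForest.recolour]
  have hwhite : ∀ x, (G.recolour {r} (P.cfg P.T)).w x = 0 := by
    simp [GradedForest.recolour, P.finish_w]
  have hvalid := GradedForest.valid_recolour (G := G) (s := {r}) (P.valid _ le_rfl)
  linarith [(GradedForest.hideable_recolour_finish hr hP).one_add_mul_lev_le
    hvalid hwhite hroot hsum]

/-- The balanced `(k + 1)`-ary tree with `h` levels, as a graded forest. -/
def GradedForest.balanced (k h : ℕ) : GradedForest (TreeNode (k + 1) h) k where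
  child := treeChild (k + 1) h
  lev v := h - 1 - v.1
  lev_eq_of_child {y x} hyx := by
    have := y.1.2
    have := hyx.1
    omega
  parent_unique := by
    rintro y ⟨⟨l, hl⟩, a⟩ ⟨⟨l', hl'⟩, a'⟩ ⟨hyl, hya⟩ ⟨hyl', hya'⟩
    simp only at hyl hya hyl' hya'
    obtain rfl : l = l' := by omega
    obtain rfl : a = a' := Fin.ext (hya.symm.trans hya')
    rfl
  lt_card_children := by
    rintro ⟨⟨l, hl⟩, a⟩ hlev
    have hl' : l + 1 < h := by simp only at hlev; omega
    have hlt (i : Fin (k + 1)) : i + (k + 1) * a < (k + 1) ^ (l + 1) :=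
      calc i + (k + 1) * a < (k + 1) * (a + 1) := by rw [mul_add]; omega
        _ ≤ (k + 1) * (k + 1) ^ l := Nat.mul_le_mul_left _ a.2
        _ = (k + 1) ^ (l + 1) := (pow_succ' _ _).symm
    let f (i : Fin (k + 1)) : {y // treeChild (k + 1) h y ⟨⟨l, hl⟩, a⟩} :=
      ⟨⟨⟨l + 1, hl'⟩, ⟨i + (k + 1) * a, hlt i⟩⟩, rfl, by
        simp [Nat.add_mul_div_left, Nat.div_eq_of_lt i.2]⟩
    have hf : Function.Injective f := fun i j hij => by
      have : i + (k + 1) * a.val = j + (k + 1) * a := congrArg (fun y => y.1.2.val) hij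
      exact Fin.ext (by omega)
    simpa using Nat.card_le_card_of_injective f hf

/-- For all `d ≥ 2` and `h ≥ 1`, the fractional pebbling cost of the balanced
`d`-ary tree of height `h` is at least `(d-1)h/2 - d/2`: every fractional pebbling of
`T_d^h` using at most `p` pebbles satisfies `(d-1)h/2 - d/2 ≤ p`. -/
theorem stmt_11 (d h : ℕ) (hd : 2 ≤ d) (hh : 1 ≤ h) (p : ℝ)
    (P : FracPebbling (TreeNode d h) (treeChild d h) ⟨⟨0, hh⟩, ⟨0, by simp⟩⟩)
    (hP : P.UsesAtMost p) :
    ((d : ℝ) - 1) * (h : ℝ) / 2 - (d : ℝ) / 2 ≤ p := by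
  obtain ⟨k, rfl⟩ : ∃ k, d = k + 1 := ⟨d - 1, by omega⟩
  have hroot := stmt_11_general (GradedForest.balanced k h) (fun _ hv => by simpa using hv.1) P hP
  simp only [GradedForest.balanced, Nat.sub_zero, Nat.cast_sub hh] at hroot
  push_cast at hroot ⊢
  linarith
end

section
/- For every finite DAG G (with a designated root node), there is an optimal fractional black-white pebbling of G all of whose pebble values are rational: there exists a fractional pebbling of G in which every value b(i) and w(i) occurring in every configuration is a rational number, and whose number of pebbles is at most the number of pebbles used by any fractional pebbling of G; in particular the infimum #FRpebbles(G) is attained by a rational-valued pebbling. -/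
/-!
A `ℚ`-linear map `f : ℝ → ℚ` with `f 1 = 1` that preserves the order of the finitely many reals
compared with each other in a given pebbling turns it into a rational pebbling. Expand reals in a
basis of `ℝ` over `ℚ` that contains `1` and, if it is irrational, the cost `p`, and replace the
basis elements by rational approximations from below, exact at `1`: if the approximation is good
enough, this gives such an `f` with `f p ≤ p`. So every pebbling can be made rational at no
additional cost.

It remains to see that the infimum of the costs is attained. Pack moves into macro moves, each of
which treats at most one node and lets all other nodes lose black and gain white pebbles. If, in the
whole period from the previous to the next treatment of a node, no parent is treated and the root
need not show its black value `1`, then the node can stay empty in that period and the treatment in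
its middle be cancelled. In an acyclic graph this bounds the number of treatments of each node,
starting from the nodes without parents, so pebblings of a fixed length suffice. These form a
compact set.
-/

section RationalFunctionals

open Filter Topology

/-- The multiple of `1 / n` just below `x`; it is a rational approximation of `x` from below that is
exact at `x = 1`. -/
noncomputable def ratFloor (n : ℕ) (x : ℝ) : ℚ := ⌊n * x⌋ / n

lemma ratFloor_le {n : ℕ} (hn : n ≠ 0) (x : ℝ) : (ratFloor n x : ℝ) ≤ x := by
  have hn' : (0 : ℝ) < n := by positivity
  simp only [ratFloor, Rat.cast_div, Rat.cast_intCast, Rat.cast_natCast]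
  rw [div_le_iff₀ hn', mul_comm x]
  exact Int.floor_le _

lemma ratFloor_one {n : ℕ} (hn : n ≠ 0) : ratFloor n 1 = 1 := by
  simp [ratFloor, hn]

lemma tendsto_ratFloor (x : ℝ) : Tendsto (fun n => (ratFloor n x : ℝ)) atTop (𝓝 x) := by
  have lower : Tendsto (fun n : ℕ => x - 1 / (n : ℝ)) atTop (𝓝 x) := by
    simpa using (tendsto_const_nhds (x := x)).sub (tendsto_one_div_atTop_nhds_zero_nat (𝕜 := ℝ))
  refine tendsto_of_tendsto_of_tendsto_of_le_of_le' lower tendsto_const_nhds ?_ ?_ <;>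
    filter_upwards [eventually_ne_atTop 0] with n hn
  · have hn' : (0 : ℝ) < n := by positivity
    have : (n : ℝ) * x - 1 < ⌊n * x⌋ := Int.sub_one_lt_floor _
    simp only [ratFloor, Rat.cast_div, Rat.cast_intCast, Rat.cast_natCast]
    rw [le_div_iff₀ hn', sub_mul, one_div_mul_cancel hn'.ne']
    linarith
  · exact ratFloor_le hn x

lemma tendsto_basis_constr_apply {ι : Type*} (B : Module.Basis ι ℚ ℝ) {u : ℕ → ι → ℚ}
    (hu : ∀ i, Tendsto (fun n => (u n i : ℝ)) atTop (𝓝 (B i))) (x : ℝ) :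
    Tendsto (fun n => (B.constr ℚ (u n) x : ℝ)) atTop (𝓝 x) := by
  have hx : x = (B.repr x).sum fun i c => (c : ℝ) * B i := by
    conv_lhs => rw [← B.linearCombination_repr x, Finsupp.linearCombination_apply]
    simp only [Rat.smul_def]
  conv in 𝓝 x => rw [hx]
  simp only [Module.Basis.constr_apply, Finsupp.sum, smul_eq_mul, Rat.cast_sum, Rat.cast_mul]
  exact tendsto_finsetSum _ fun i _ => (hu i).const_mul _

lemma exists_seq_linearMap_eq_ratFloor {a : Set ℝ} (ha : LinearIndepOn ℚ id a) :
    ∃ f : ℕ → ℝ →ₗ[ℚ] ℚ, (∀ n, ∀ x ∈ a, f n x = ratFloor n x) ∧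
      ∀ x, Tendsto (fun n => (f n x : ℝ)) atTop (𝓝 x) := by
  let B := Module.Basis.extend ha
  refine ⟨fun n => B.constr ℚ fun i => ratFloor n (B i), fun n x hx => ?_,
    tendsto_basis_constr_apply B fun i => tendsto_ratFloor (B i)⟩
  obtain ⟨i, rfl⟩ : x ∈ Set.range B := by
    rw [Module.Basis.range_extend]
    exact Module.Basis.subset_extend ha hx
  exact B.constr_basis ℚ _ i

lemma eventually_monotoneOn_of_tendsto {f : ℕ → ℝ → ℝ}
    (hf : ∀ x, Tendsto (fun n => f n x) atTop (𝓝 x)) {s : Set ℝ} (hs : s.Finite) :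
    ∀ᶠ n in atTop, MonotoneOn (f n) s := by
  have h : ∀ᶠ n in atTop, ∀ x ∈ s, ∀ y ∈ s, x < y → f n x < f n y := by
    rw [hs.eventually_all]
    intro x _
    rw [hs.eventually_all]
    intro y _
    by_cases hxy : x < y
    · filter_upwards [(hf x).eventually_lt (hf y) hxy] with n hn _ using hn
    · simp [hxy]
  filter_upwards [h] with n hn
  exact StrictMonoOn.monotoneOn hn

lemma exists_linearMap_rat_monotoneOn {s : Set ℝ} (hs : s.Finite) (p : ℝ) :
    ∃ f : ℝ →ₗ[ℚ] ℚ, f 1 = 1 ∧ (f p : ℝ) ≤ p ∧ MonotoneOn (fun x => (f x : ℝ)) s := by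
  obtain ⟨a, ha, hone, hp⟩ : ∃ a : Set ℝ,
      LinearIndepOn ℚ id a ∧ 1 ∈ a ∧ (p ∈ a ∨ ∃ q : ℚ, q • (1 : ℝ) = p) := by
    by_cases hp : ∃ q : ℚ, q • (1 : ℝ) = p
    · exact ⟨{1}, .singleton one_ne_zero, rfl, .inr hp⟩
    · exact ⟨{1, p}, linearIndepOn_id_pair one_ne_zero (not_exists.1 hp), by simp, by simp⟩
  obtain ⟨f, hfloor, hlim⟩ := exists_seq_linearMap_eq_ratFloor ha
  obtain ⟨n, hmono, hn⟩ :=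
    ((eventually_monotoneOn_of_tendsto hlim hs).and (eventually_ne_atTop 0)).exists
  have hf : f n 1 = 1 := (hfloor n 1 hone).trans (ratFloor_one hn)
  refine ⟨f n, hf, ?_, hmono⟩
  rcases hp with hp | ⟨q, rfl⟩
  · rw [hfloor n p hp]
    exact ratFloor_le hn p
  · rw [map_smul, hf]
    simp [Rat.smul_def]

end RationalFunctionals

variable {V : Type} {child : V → V → Prop}

namespace FracConfig

instance : Zero (FracConfig V) := ⟨⟨0, 0⟩⟩

@[simp] lemma zero_b (v : V) : (0 : FracConfig V).b v = 0 := rfl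

@[simp] lemma zero_w (v : V) : (0 : FracConfig V).w v = 0 := rfl

@[ext] lemma ext {C D : FracConfig V} (hb : ∀ v, C.b v = D.b v) (hw : ∀ v, C.w v = D.w v) :
    C = D := by
  cases C; cases D
  exact congrArg₂ _ (funext hb) (funext hw)

variable (C : FracConfig V) {f : ℝ →+ ℝ}

/-- The configuration obtained by applying an additive map to every pebble value. -/
def map (f : ℝ →+ ℝ) : FracConfig V :=
  ⟨fun v => f (C.b v), fun v => f (C.w v)⟩

variable [Fintype V]

/-- The number of pebbles of a configuration. -/
def weight : ℝ :=
  ∑ v, (C.b v + C.w v)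

/-- The finitely many reals that are compared with each other in the rules of the pebble game on
`C`. A map that is monotone on them preserves the rules. -/
def values : Set ℝ :=
  {0, 1, C.weight} ∪ Set.range C.b ∪ Set.range C.w ∪ Set.range fun v => C.b v + C.w v

lemma finite_values : C.values.Finite :=
  (((Set.toFinite _).union (Set.finite_range _)).union (Set.finite_range _)).union
    (Set.finite_range _)

variable {C}

lemma zero_mem_values : 0 ∈ C.values := by simp [values]

lemma one_mem_values : 1 ∈ C.values := by simp [values]

lemma weight_mem_values : C.weight ∈ C.values := by simp [values]

lemma b_mem_values (v : V) : C.b v ∈ C.values := by simp [values]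

lemma w_mem_values (v : V) : C.w v ∈ C.values := by simp [values]

lemma b_add_w_mem_values (v : V) : C.b v + C.w v ∈ C.values := by simp [values]

lemma weight_map : (C.map f).weight = f C.weight := by
  simp only [weight, map, map_sum, map_add]

lemma Valid.map (hC : C.Valid) (hone : f 1 = 1) (hf : MonotoneOn f C.values) :
    (C.map f).Valid := fun v => by
  obtain ⟨hb, hw, hbw⟩ := hC v
  have hb' := hf zero_mem_values (b_mem_values v) hb
  have hw' := hf zero_mem_values (w_mem_values v) hw
  have hbw' := hf (b_add_w_mem_values v) one_mem_values hbw
  rw [map_zero] at hb' hw'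
  rw [map_add, hone] at hbw'
  exact ⟨hb', hw', hbw'⟩

end FracConfig

lemma FracMove.map [Fintype V] {C C' : FracConfig V} {f : ℝ →+ ℝ}
    (hC : FracMove child C C') (hone : f 1 = 1) (hf : MonotoneOn f (C.values ∪ C'.values)) :
    FracMove child (C.map f) (C'.map f) := by
  have b_mem v : C.b v ∈ C.values ∪ C'.values := .inl (C.b_mem_values v)
  have b_mem' v : C'.b v ∈ C.values ∪ C'.values := .inr (C'.b_mem_values v)
  have w_mem v : C.w v ∈ C.values ∪ C'.values := .inl (C.w_mem_values v)
  have w_mem' v : C'.w v ∈ C.values ∪ C'.values := .inr (C'.w_mem_values v)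
  rcases hC with ⟨i, hi, hb, hw⟩ | ⟨i, hi, hw, hb⟩ | ⟨i, hfull, hwi, hbi, hchild, hother⟩
  · refine .inl ⟨i, hf (b_mem' i) (b_mem i) hi, fun j hj => congrArg f (hb j hj), ?_⟩
    simp only [FracConfig.map, hw]
  · refine .inr (.inl ⟨i, hf (w_mem i) (w_mem' i) hi, fun j hj => congrArg f (hw j hj), ?_⟩)
    simp only [FracConfig.map, hb]
  · refine .inr (.inr ⟨i, fun u hu => ?_, hf (w_mem' i) (w_mem i) hwi, hf (b_mem i) (b_mem' i) hbi,
      fun u hu => ⟨hf (b_mem' u) (b_mem u) (hchild u hu).1, congrArg f (hchild u hu).2⟩,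
      fun j hj hji => ⟨congrArg f (hother j hj hji).1, congrArg f (hother j hj hji).2⟩⟩)
    simp only [FracConfig.map, ← map_add, hfull u hu, hone]

section RationalPebblings

variable [Fintype V] {root : V}

namespace FracPebbling

variable (P : FracPebbling V child root)

variable {P} in
lemma cost_le_iff {p : ℝ} : P.cost ≤ p ↔ P.UsesAtMost p := by
  simp [cost, UsesAtMost]

lemma weight_le_cost {t : ℕ} (ht : t ≤ P.T) : (P.cfg t).weight ≤ P.cost :=
  cost_le_iff.1 le_rfl t ht

/-- The reals compared with each other in the course of the pebbling. -/
def values : Set ℝ :=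
  insert P.cost (⋃ t ∈ Set.Iic P.T, (P.cfg t).values)

lemma finite_values : P.values.Finite :=
  ((Set.finite_Iic _).biUnion fun t _ => (P.cfg t).finite_values).insert _

variable {P}

lemma values_cfg_subset {t : ℕ} (ht : t ≤ P.T) : (P.cfg t).values ⊆ P.values :=
  (Set.subset_biUnion_of_mem (u := fun t => (P.cfg t).values) (Set.mem_Iic.2 ht)).trans
    (Set.subset_insert _ _)

/-- The pebbling obtained by applying an additive map to all pebble values. -/
def map (P : FracPebbling V child root) (f : ℝ →+ ℝ) (hone : f 1 = 1)
    (hf : MonotoneOn f P.values) : FracPebbling V child root where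
  T := P.T
  cfg t := (P.cfg t).map f
  valid t ht := (P.valid t ht).map hone (hf.mono (values_cfg_subset ht))
  start_b v := (congrArg f (P.start_b v)).trans f.map_zero
  start_w v := (congrArg f (P.start_w v)).trans f.map_zero
  finish_b v := (congrArg f (P.finish_b v)).trans f.map_zero
  finish_w v := (congrArg f (P.finish_w v)).trans f.map_zero
  move t ht := (P.move t ht).map hone
    (hf.mono (Set.union_subset (values_cfg_subset ht.le) (values_cfg_subset ht)))
  hits_root :=
    let ⟨t, ht, hit⟩ := P.hits_root
    ⟨t, ht, (congrArg f hit).trans hone⟩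

lemma cost_map_le (f : ℝ →+ ℝ) (hone : f 1 = 1) (hf : MonotoneOn f P.values) :
    (P.map f hone hf).cost ≤ f P.cost := by
  refine cost_le_iff.2 fun t ht => ?_
  calc ((P.cfg t).map f).weight = f (P.cfg t).weight := FracConfig.weight_map
    _ ≤ f P.cost := hf (values_cfg_subset (P := P) ht FracConfig.weight_mem_values)
      (Set.mem_insert _ _) (P.weight_le_cost ht)

theorem exists_rat_cost_le (P : FracPebbling V child root) :
    ∃ Q : FracPebbling V child root,
      (∀ t ≤ Q.T, ∀ v, (∃ q : ℚ, (Q.cfg t).b v = q) ∧ ∃ q : ℚ, (Q.cfg t).w v = q) ∧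
        Q.cost ≤ P.cost := by
  obtain ⟨f, hone, hcost, hf⟩ := exists_linearMap_rat_monotoneOn P.finite_values P.cost
  let g : ℝ →+ ℝ := (Rat.castHom ℝ : ℚ →+ ℝ).comp f.toAddMonoidHom
  have hg : g 1 = 1 := by simp [g, hone]
  exact ⟨P.map g hg hf, fun t _ v => ⟨⟨f ((P.cfg t).b v), rfl⟩, ⟨f ((P.cfg t).w v), rfl⟩⟩,
    (cost_map_le g hg hf).trans hcost⟩

end FracPebbling

end RationalPebblings

section MacroMoves

/-- A macro move labelled `o`: when `o = some i`, all children of node `i` have pebble value `1` and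
the values of `i` change arbitrarily. The black values of all other nodes may decrease and their
white values may increase. -/
def MacroMove (child : V → V → Prop) (o : Option V) (C D : FracConfig V) : Prop :=
  (∀ i, o = some i → ∀ u, child u i → C.b u + C.w u = 1) ∧
    ∀ j, o ≠ some j → D.b j ≤ C.b j ∧ C.w j ≤ D.w j

lemma MacroMove.trans_none {o : Option V} {C D E : FracConfig V} (hCD : MacroMove child o C D)
    (hDE : MacroMove child none D E) : MacroMove child o C E :=
  ⟨hCD.1, fun j hj => ⟨(hDE.2 j nofun).1.trans (hCD.2 j hj).1,
    (hCD.2 j hj).2.trans (hDE.2 j nofun).2⟩⟩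

lemma FracMove.exists_macroMove {C D : FracConfig V} (hCD : FracMove child C D) :
    ∃ o, MacroMove child o C D := by
  rcases hCD with ⟨i, hi, hb, hw⟩ | ⟨i, hi, hw, hb⟩ | ⟨i, hfull, -, -, hchild, hother⟩
  · refine ⟨none, nofun, fun j _ => ⟨?_, (congrFun hw j).ge⟩⟩
    rcases eq_or_ne j i with rfl | hj
    · exact hi
    · exact (hb j hj).le
  · refine ⟨none, nofun, fun j _ => ⟨(congrFun hb j).le, ?_⟩⟩
    rcases eq_or_ne j i with rfl | hj
    · exact hi
    · exact (hw j hj).ge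
  · refine ⟨some i, fun i' hi' => Option.some_injective _ hi' ▸ hfull, fun j hj => ?_⟩
    have hji : j ≠ i := fun h => hj (congrArg some h.symm)
    by_cases hc : child j i
    · exact ⟨(hchild j hc).1, (hchild j hc).2.ge⟩
    · exact ⟨(hother j hji hc).1.le, (hother j hji hc).2.ge⟩

open Classical in
lemma MacroMove.fracMove (hirr : ∀ v, ¬ child v v) {i : V} {C D : FracConfig V}
    (hCD : MacroMove child (some i) C D) :
    FracMove child ⟨{j | child j i}.piecewise C.b (C.b ⊓ D.b), C.w⟩ ⟨D.b, C.w ⊓ D.w⟩ := by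
  have hle j (hj : j ≠ i) : D.b j ≤ C.b j ∧ C.w j ≤ D.w j :=
    hCD.2 j fun h => hj (Option.some_injective _ h).symm
  have hne u (hu : child u i) : u ≠ i := fun h => hirr i (h ▸ hu)
  refine .inr (.inr ⟨i, fun u hu => ?_, inf_le_left, ?_, fun u hu => ⟨?_, ?_⟩,
    fun j hj hc => ⟨?_, ?_⟩⟩)
  · simpa [hu] using hCD.1 i rfl u hu
  · simp [hirr i]
  · simpa [hu] using (hle u (hne u hu)).1
  · simpa using (hle u (hne u hu)).2
  · simpa [hc] using (hle j hj).1
  · simpa using (hle j hj).2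

open Classical in
/-- The configuration obtained from `C` by removing all pebbles from `v` if `P` holds. -/
noncomputable def FracConfig.clearIf (C : FracConfig V) (v : V) (P : Prop) : FracConfig V :=
  ⟨fun j => if j = v ∧ P then 0 else C.b j, fun j => if j = v ∧ P then 0 else C.w j⟩

/-- If `v` is cleared both before and after a move, then the move need not treat `v`. -/
lemma MacroMove.clearIf {o o' : Option V} {C D : FracConfig V} {v : V} {P Q : Prop}
    (hCD : MacroMove child o C D) (hsub : ∀ u, o' = some u → o = some u)
    (hother : ∀ u, u ≠ v → o = some u → o' = some u)
    (hfull : ∀ u, o' = some u → child v u → ¬ P)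
    (hv : o' ≠ some v → P ∧ Q ∨ o ≠ some v ∧ (P ↔ Q)) :
    MacroMove child o' (C.clearIf v P) (D.clearIf v Q) := by
  refine ⟨fun i hi u hu => ?_, fun j hj => ?_⟩
  · have hu' : ¬ (u = v ∧ P) := by
      rintro ⟨rfl, hP⟩
      exact hfull i hi hu hP
    simpa only [FracConfig.clearIf, if_neg hu'] using hCD.1 i (hsub i hi) u hu
  · by_cases hjv : j = v
    · subst hjv
      rcases hv hj with ⟨hP, hQ⟩ | ⟨ho, hPQ⟩
      · simp [FracConfig.clearIf, hP, hQ]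
      · by_cases hP : P
        · simp [FracConfig.clearIf, hP, hPQ.1 hP]
        · simpa [FracConfig.clearIf, hP, hPQ.not.1 hP] using hCD.2 j ho
    · simpa [FracConfig.clearIf, hjv] using hCD.2 j fun h => hj (hother j hjv h)

end MacroMoves

section Near

/-- No element of `A` other than `m` separates the times `t` and `m`, where `t` is the time just
before the `t`-th move. -/
def Near (A : Finset ℕ) (m t : ℕ) : Prop :=
  ∀ s ∈ A, s ≠ m → (s < t ↔ s < m)

lemma near_self (A : Finset ℕ) (m : ℕ) : Near A m m := fun _ _ _ => .rfl

lemma near_succ_iff {A : Finset ℕ} {m t : ℕ} (ht : t ∈ A → t = m) :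
    Near A m (t + 1) ↔ Near A m t := by
  refine forall₂_congr fun s hs => imp_congr_right fun hsm => ?_
  have : s ≠ t := fun h => hsm (h.trans (ht (h ▸ hs)))
  have : s < t + 1 ↔ s < t := by omega
  rw [this]

lemma card_le_two_mul_of_near {A U : Finset ℕ} (hU : ∀ m ∈ A, ∃ t ∈ U, Near A m t) :
    A.card ≤ 2 * U.card := by
  choose! f hfU hf using hU
  calc A.card ≤ (U ×ˢ (Finset.univ : Finset Bool)).card := by
        refine Finset.card_le_card_of_injOn (fun m => (f m, decide (m < f m)))
          (fun m hm => by simp [hfU m hm, lt_or_ge]) fun m hm m' hm' heq => ?_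
        by_contra hne
        obtain ⟨hff, hlt⟩ : f m = f m' ∧ (m < f m ↔ m' < f m') := by simpa using heq
        have h := hf m hm m' hm' (Ne.symm hne)
        have h' := hf m' hm' m hm hne
        omega
    _ = 2 * U.card := by simp [mul_comm]

end Near

open Classical in
/-- The times before `T` at which the move is labelled by `v`. -/
noncomputable def visits (T : ℕ) (lab : ℕ → Option V) (v : V) : Finset ℕ :=
  {t ∈ Finset.range T | lab t = some v}

lemma mem_visits {T : ℕ} {lab : ℕ → Option V} {v : V} {t : ℕ} :
    t ∈ visits T lab v ↔ t < T ∧ lab t = some v := by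
  simp [visits]

lemma visits_update_none (T : ℕ) (lab : ℕ → Option V) (m : ℕ) (v : V) :
    visits T (Function.update lab m none) v = (visits T lab v).erase m := by
  ext t
  by_cases htm : t = m <;> simp [mem_visits, htm]

lemma card_visits_comp_le {S T : ℕ} {φ : ℕ → ℕ} (hφ : φ.Injective)
    (hlt : ∀ t < S, φ t < T) (lab : ℕ → Option V) (v : V) :
    (visits S (lab ∘ φ) v).card ≤ (visits T lab v).card :=
  Finset.card_le_card_of_injOn φ (fun t ht => by
    obtain ⟨htS, hv⟩ := mem_visits.1 ht
    exact mem_visits.2 ⟨hlt t htS, hv⟩) hφ.injOn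

section Schedules

variable [Fintype V] {root : V}

namespace FracConfig

/-- A valid configuration with at most `p` pebbles. -/
structure Feasible (p : ℝ) (C : FracConfig V) : Prop where
  valid : C.Valid
  weight_le : C.weight ≤ p

lemma Feasible.of_le {p : ℝ} {C D : FracConfig V} (hC : C.Feasible p)
    (hb : ∀ v, 0 ≤ D.b v ∧ D.b v ≤ C.b v) (hw : ∀ v, 0 ≤ D.w v ∧ D.w v ≤ C.w v) :
    D.Feasible p where
  valid v := ⟨(hb v).1, (hw v).1, (add_le_add (hb v).2 (hw v).2).trans (hC.valid v).2.2⟩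
  weight_le :=
    (Finset.sum_le_sum fun v _ => add_le_add (hb v).2 (hw v).2).trans hC.weight_le

lemma Valid.feasible_card {C : FracConfig V} (hC : C.Valid) : C.Feasible (Fintype.card V) where
  valid := hC
  weight_le := (Finset.sum_le_sum fun v _ => (hC v).2.2).trans (by simp)

end FracConfig

/-- `D` can be reached from `C` by legal moves through valid configurations with at most `p`
pebbles. -/
def Reaches (child : V → V → Prop) (p : ℝ) : FracConfig V → FracConfig V → Prop :=
  Relation.ReflTransGen fun C D => FracMove child C D ∧ D.Feasible p

open Classical in
lemma reaches_of_b_le {p : ℝ} {C D : FracConfig V} (hC : C.Feasible p) (hD : ∀ v, 0 ≤ D.b v)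
    (hb : ∀ v, D.b v ≤ C.b v) (hw : D.w = C.w) : Reaches child p C D := by
  have reaches_piecewise (s : Finset V) : Reaches child p C ⟨s.piecewise D.b C.b, C.w⟩ := by
    induction s using Finset.induction_on with
    | empty => simpa only [Finset.piecewise_empty] using .refl
    | insert i s hi ih =>
      refine ih.tail ⟨.inl ⟨i, ?_, fun j hj => ?_, rfl⟩,
        hC.of_le (fun v => ?_) fun v => ⟨(hC.valid v).2.1, le_rfl⟩⟩
      · simpa [hi] using hb i
      · simp [hj]
      · by_cases hv : v ∈ insert i s
        · simpa only [Finset.piecewise_eq_of_mem _ _ _ hv] using ⟨hD v, hb v⟩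
        · simpa only [Finset.piecewise_eq_of_notMem _ _ _ hv] using ⟨(hC.valid v).1, le_rfl⟩
  simpa only [Finset.piecewise_univ, ← hw] using reaches_piecewise Finset.univ

open Classical in
lemma reaches_of_le_w {p : ℝ} {C D : FracConfig V} (hC : ∀ v, 0 ≤ C.w v) (hD : D.Feasible p)
    (hb : D.b = C.b) (hw : ∀ v, C.w v ≤ D.w v) : Reaches child p C D := by
  have reaches_piecewise (s : Finset V) : Reaches child p C ⟨C.b, s.piecewise D.w C.w⟩ := by
    induction s using Finset.induction_on with
    | empty => simpa only [Finset.piecewise_empty] using .refl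
    | insert i s hi ih =>
      refine ih.tail ⟨.inr (.inl ⟨i, ?_, fun j hj => ?_, rfl⟩),
        hD.of_le (fun v => ?_) fun v => ?_⟩
      · simpa [hi] using hw i
      · simp [hj]
      · exact hb ▸ ⟨(hD.valid v).1, le_rfl⟩
      · by_cases hv : v ∈ insert i s
        · simpa only [Finset.piecewise_eq_of_mem _ _ _ hv] using ⟨(hD.valid v).2.1, le_rfl⟩
        · simpa only [Finset.piecewise_eq_of_notMem _ _ _ hv] using ⟨hC v, hw v⟩
  simpa only [Finset.piecewise_univ, ← hb] using reaches_piecewise Finset.univ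

lemma reaches_of_b_le_of_le_w {p : ℝ} {C D : FracConfig V} (hC : C.Feasible p) (hD : D.Feasible p)
    (hb : ∀ v, D.b v ≤ C.b v) (hw : ∀ v, C.w v ≤ D.w v) : Reaches child p C D :=
  have hD_b v : 0 ≤ D.b v := (hD.valid v).1
  have hC_w v : 0 ≤ C.w v := (hC.valid v).2.1
  (reaches_of_b_le (D := ⟨D.b, C.w⟩) hC hD_b hb rfl).trans (reaches_of_le_w hC_w hD rfl hw)

/-- `f 0, …, f n` is a sequence of legal moves through valid configurations with at most `p`
pebbles. -/
structure IsPlay (child : V → V → Prop) (p : ℝ) (n : ℕ) (f : ℕ → FracConfig V) : Prop where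
  feasible : ∀ t ≤ n, (f t).Feasible p
  move : ∀ t < n, FracMove child (f t) (f (t + 1))

lemma IsPlay.exists_extension {p : ℝ} {n : ℕ} {f : ℕ → FracConfig V} {D : FracConfig V}
    (hf : IsPlay child p n f) (hD : Reaches child p (f n) D) :
    ∃ m g, n ≤ m ∧ (∀ t ≤ n, g t = f t) ∧ g m = D ∧ IsPlay child p m g := by
  induction hD with
  | refl => exact ⟨n, f, le_rfl, fun _ _ => rfl, rfl, hf⟩
  | @tail D E _ hDE ih =>
    obtain ⟨m, g, hnm, hgf, rfl, hg⟩ := ih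
    have hold t (ht : t ≤ m) : Function.update g (m + 1) E t = g t :=
      Function.update_of_ne (by omega) ..
    have hnew : Function.update g (m + 1) E (m + 1) = E := Function.update_self ..
    refine ⟨m + 1, Function.update g (m + 1) E, by omega,
      fun t ht => (hold t (ht.trans hnm)).trans (hgf t ht), hnew, fun t ht => ?_, fun t ht => ?_⟩
    · rcases Nat.le_succ_iff.1 ht with ht | rfl
      · rw [hold t ht]
        exact hg.feasible t ht
      · rw [hnew]
        exact hDE.2
    · rw [hold t (by omega)]
      rcases Nat.lt_succ_iff_lt_or_eq.1 ht with ht | rfl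
      · rw [hold (t + 1) ht]
        exact hg.move t ht
      · rw [hnew]
        exact hDE.1

lemma exists_pebbling_of_reaches {p : ℝ} {C : FracConfig V} (hzero : (0 : FracConfig V).Feasible p)
    (hC : C.b root = 1) (hreach : Reaches child p 0 C) (hback : Reaches child p C 0) :
    ∃ P : FracPebbling V child root, P.cost ≤ p := by
  have htrivial : IsPlay child p 0 fun _ => 0 := ⟨fun _ _ => hzero, by simp⟩
  obtain ⟨n, f, -, hf0, rfl, hf⟩ := htrivial.exists_extension hreach
  obtain ⟨m, g, hnm, hgf, hgm, hg⟩ := hf.exists_extension hback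
  have hg0 : g 0 = 0 := (hgf 0 n.zero_le).trans (hf0 0 le_rfl)
  refine ⟨⟨m, g, fun t ht => (hg.feasible t ht).valid, fun v => ?_, fun v => ?_, fun v => ?_,
    fun v => ?_, hg.move, n, hnm, ?_⟩, FracPebbling.cost_le_iff.2 fun t ht =>
    (hg.feasible t ht).weight_le⟩
  · rw [hg0, FracConfig.zero_b]
  · rw [hg0, FracConfig.zero_w]
  · rw [hgm, FracConfig.zero_b]
  · rw [hgm, FracConfig.zero_w]
  · rwa [hgf n le_rfl]

open Classical in
/-- Fill the graph with white pebbles, turn them black one by one, and remove them. -/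
lemma FracPebbling.nonempty (hirr : ∀ v, ¬ child v v) (root : V) :
    Nonempty (FracPebbling V child root) := by
  let black (s : Finset V) : FracConfig V := ⟨s.piecewise 1 0, s.piecewise 0 1⟩
  have hfull (s : Finset V) (v : V) : (black s).b v + (black s).w v = 1 := by
    by_cases hv : v ∈ s <;> simp [black, hv]
  have hblack (s : Finset V) : (black s).Feasible (Fintype.card V) := by
    refine FracConfig.Valid.feasible_card fun v => ⟨?_, ?_, (hfull s v).le⟩ <;>
      by_cases hv : v ∈ s <;> simp [black, hv]
  have hzero : (0 : FracConfig V).Feasible (Fintype.card V) :=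
    FracConfig.Valid.feasible_card fun v => by simp
  have hreach (s : Finset V) : Reaches child (Fintype.card V) 0 (black s) := by
    induction s using Finset.induction_on with
    | empty => exact reaches_of_b_le_of_le_w hzero (hblack ∅) (by simp [black]) (by simp [black])
    | insert i s hi ih =>
      refine ih.tail ⟨.inr (.inr ⟨i, fun u _ => hfull s u, ?_, ?_, fun u hu => ?_,
        fun j hj _ => ?_⟩), hblack _⟩
      · simp [black, hi]
      · simp [black, hi]
      · have hui : u ≠ i := fun h => hirr i (h ▸ hu)
        simp [black, hui]
      · simp [black, hj]
  have hback : Reaches child (Fintype.card V) (black Finset.univ) 0 :=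
    reaches_of_b_le_of_le_w (hblack _) hzero (by simp [black]) (by simp [black])
  obtain ⟨P, -⟩ := exists_pebbling_of_reaches (root := root) hzero (by simp [black])
    (hreach Finset.univ) hback
  exact ⟨P⟩

open Classical in
lemma MacroMove.reaches (hirr : ∀ v, ¬ child v v) {p : ℝ} {o : Option V} {C D : FracConfig V}
    (hCD : MacroMove child o C D) (hC : C.Feasible p) (hD : D.Feasible p) :
    Reaches child p C D := by
  cases o with
  | none =>
    exact reaches_of_b_le_of_le_w hC hD (fun j => (hCD.2 j nofun).1) fun j => (hCD.2 j nofun).2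
  | some i =>
    let C' : FracConfig V := ⟨{j | child j i}.piecewise C.b (C.b ⊓ D.b), C.w⟩
    let D' : FracConfig V := ⟨D.b, C.w ⊓ D.w⟩
    have hC'b j : 0 ≤ C'.b j ∧ C'.b j ≤ C.b j := by
      by_cases hj : child j i <;> simp [C', hj, (hC.valid j).1, (hD.valid j).1]
    have hD' : D'.Feasible p := hD.of_le (fun j => ⟨(hD.valid j).1, le_rfl⟩)
      fun j => ⟨le_inf (hC.valid j).2.1 (hD.valid j).2.1, inf_le_right⟩
    have hreach : Reaches child p C C' :=
      reaches_of_b_le hC (fun j => (hC'b j).1) (fun j => (hC'b j).2) rfl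
    exact (hreach.tail ⟨hCD.fracMove hirr, hD'⟩).trans
      (reaches_of_le_w (fun j => (hD'.valid j).2.1) hD rfl fun j => inf_le_right)

/-- A pebbling by macro moves with at most `p` pebbles: the `t`-th move goes from `C t` to
`C (t + 1)` and has label `lab t`, the moves from time `T` on are idle, and the root has black value
`1` at time `h`. -/
structure IsSchedule (child : V → V → Prop) (root : V) (p : ℝ) (T h : ℕ) (lab : ℕ → Option V)
    (C : ℕ → FracConfig V) : Prop where
  feasible : ∀ t, (C t).Feasible p
  start : C 0 = 0
  finish : ∀ t, T ≤ t → C t = 0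
  move : ∀ t, MacroMove child (lab t) (C t) (C (t + 1))
  label_eq_none : ∀ t, T ≤ t → lab t = none
  hit : (C h).b root = 1

lemma FracPebbling.exists_isSchedule (P : FracPebbling V child root) :
    ∃ h lab C, IsSchedule child root P.cost P.T h lab C := by
  obtain ⟨h, hle, hit⟩ := P.hits_root
  choose! lab hlab using fun t (ht : t < P.T) => (P.move t ht).exists_macroMove
  have hfinish t (ht : P.T ≤ t) : P.cfg (min t P.T) = 0 := by
    rw [min_eq_right ht]
    exact FracConfig.ext P.finish_b P.finish_w
  refine ⟨h, fun t => if t < P.T then lab t else none, fun t => P.cfg (min t P.T),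
    fun t => ⟨P.valid _ (min_le_right ..), P.weight_le_cost (min_le_right ..)⟩, ?_, hfinish,
    fun t => ?_, fun t ht => if_neg ht.not_gt, by rwa [min_eq_left hle]⟩
  · rw [Nat.zero_min]
    exact FracConfig.ext P.start_b P.start_w
  · rcases lt_or_ge t P.T with ht | ht
    · rw [if_pos ht, min_eq_left ht.le, min_eq_left (Nat.succ_le_of_lt ht)]
      exact hlab t ht
    · rw [hfinish t ht, hfinish (t + 1) (by omega)]
      exact ⟨by simp [ht.not_gt], fun _ _ => ⟨le_rfl, le_rfl⟩⟩

namespace IsSchedule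

variable {p : ℝ} {T h : ℕ} {lab : ℕ → Option V} {C : ℕ → FracConfig V}

lemma hit_lt (hC : IsSchedule child root p T h lab C) : h < T := by
  by_contra! hT
  simpa [hC.finish h hT] using hC.hit

lemma reaches (hirr : ∀ v, ¬ child v v) (hC : IsSchedule child root p T h lab C) {s t : ℕ}
    (hst : s ≤ t) : Reaches child p (C s) (C t) := by
  induction t, hst using Nat.le_induction with
  | base => exact .refl
  | succ t _ ih =>
    exact ih.trans ((hC.move t).reaches hirr (hC.feasible t) (hC.feasible (t + 1)))

lemma exists_pebbling (hirr : ∀ v, ¬ child v v) (hC : IsSchedule child root p T h lab C) :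
    ∃ P : FracPebbling V child root, P.cost ≤ p := by
  have hreach := hC.reaches hirr h.zero_le
  have hback := hC.reaches hirr hC.hit_lt.le
  rw [hC.start] at hreach
  rw [hC.finish T le_rfl] at hback
  exact exists_pebbling_of_reaches (hC.start ▸ hC.feasible 0) hC.hit hreach hback

end IsSchedule

lemma FracConfig.Feasible.clearIf {p : ℝ} {C : FracConfig V} (hC : C.Feasible p) (v : V)
    (P : Prop) : (C.clearIf v P).Feasible p := by
  refine hC.of_le (fun j => ?_) fun j => ?_ <;>
  · simp only [FracConfig.clearIf]
    split_ifs <;> simp [(hC.valid j).1, (hC.valid j).2.1]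

namespace IsSchedule

variable {p : ℝ} {T h : ℕ} {lab : ℕ → Option V} {C : ℕ → FracConfig V}

/-- A visit of `v` is superfluous if, in the whole period between the previous and the next visit,
the pebbles on `v` neither support a move of a parent nor realize the black value `1` of the
root: then `v` may stay empty during that period. -/
lemma exists_update_none (hC : IsSchedule child root p T h lab C) {m : ℕ} {v : V}
    (hm : lab m = some v) (hroot : ¬ Near (visits T lab v) m h)
    (hparent : ∀ t u, child v u → lab t = some u → ¬ Near (visits T lab v) m t) :
    ∃ C', IsSchedule child root p T h (Function.update lab m none) C' := by
  have hclear : (0 : FracConfig V).clearIf v = fun _ => 0 := by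
    funext P
    exact FracConfig.ext (by simp [FracConfig.clearIf]) (by simp [FracConfig.clearIf])
  refine ⟨fun t => (C t).clearIf v (Near (visits T lab v) m t),
    fun t => (hC.feasible t).clearIf .., ?_, fun t ht => ?_, fun t => ?_, fun t ht => ?_, ?_⟩
  · rw [hC.start, hclear]
  · rw [hC.finish t ht, hclear]
  · rcases eq_or_ne t m with rfl | htm
    · have hnear := near_self (visits T lab v) t
      simp only [Function.update_self]
      exact (hC.move t).clearIf nofun
        (fun u huv hu => absurd (Option.some_injective _ (hu.symm.trans hm)) huv) nofun
        fun _ => .inl ⟨hnear, (near_succ_iff fun _ => rfl).2 hnear⟩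
    · rw [Function.update_of_ne htm]
      refine (hC.move t).clearIf (fun _ h => h) (fun _ _ h => h)
        (fun u hu hvu => hparent t u hvu hu) fun hv => .inr ⟨hv, (near_succ_iff fun ht => ?_).symm⟩
      exact absurd (mem_visits.1 ht).2 hv
  · by_cases htm : t = m
    · rw [htm, Function.update_self]
    · rw [Function.update_of_ne htm, hC.label_eq_none t ht]
  · simpa [FracConfig.clearIf, hroot] using hC.hit

lemma exists_skip (hC : IsSchedule child root p (T + 1) h lab C) {s : ℕ} (hs : s ≠ 0)
    (hsT : s ≤ T) (hsh : s ≠ h) (hlab : lab s = none) :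
    ∃ φ : ℕ → ℕ, φ.Injective ∧ (∀ t < T, φ t < T + 1) ∧
      ∃ h', IsSchedule child root p T h' (lab ∘ φ) (C ∘ φ) := by
  let φ t := if t < s then t else t + 1
  have hφ_lt {t} (ht : t < s) : φ t = t := if_pos ht
  have hφ_ge {t} (ht : s ≤ t) : φ t = t + 1 := if_neg ht.not_gt
  have hφh : φ (if h < s then h else h - 1) = h := by
    grind
  refine ⟨φ, fun t t' heq => by grind, fun t ht => by grind, if h < s then h else h - 1,
    fun t => hC.feasible (φ t), ?_, fun t ht => ?_, fun t => ?_, fun t ht => ?_, ?_⟩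
  · rw [Function.comp_apply, hφ_lt (Nat.pos_of_ne_zero hs), hC.start]
  · rw [Function.comp_apply, hφ_ge (hsT.trans ht), hC.finish (t + 1) (by omega)]
  · simp only [Function.comp_apply]
    rcases lt_trichotomy (t + 1) s with ht | ht | ht
    · rw [hφ_lt ht, hφ_lt (by omega)]
      exact hC.move t
    · rw [hφ_lt (by omega), hφ_ge ht.ge]
      have hnext := hC.move (t + 1)
      rw [ht, hlab, ← ht] at hnext
      exact (hC.move t).trans_none hnext
    · rw [hφ_ge (by omega), hφ_ge (by omega)]
      exact hC.move (t + 1)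
  · rw [Function.comp_apply, hφ_ge (hsT.trans ht), hC.label_eq_none (t + 1) (by omega)]
  · rw [Function.comp_apply, hφh]
    exact hC.hit

end IsSchedule

open Classical in
lemma exists_bound_of_le_two_mul_sum_add_one (hacyclic : ∀ v, ¬ Relation.TransGen child v v) :
    ∃ B : V → ℕ, ∀ f : V → ℕ, (∀ v, f v ≤ 2 * (∑ u with child v u, f u + 1)) → f ≤ B := by
  have hwf : WellFounded fun u v => child v u := by
    have : IsTrans V fun u v => Relation.TransGen child v u := ⟨fun _ _ _ h h' => h'.trans h⟩
    have : Std.Irrefl fun u v => Relation.TransGen child v u := ⟨hacyclic⟩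
    exact Subrelation.wf Relation.TransGen.single
      (Finite.wellFounded_of_trans_of_irrefl fun u v => Relation.TransGen child v u)
  suffices h : ∀ v, ∃ n, ∀ f : V → ℕ, (∀ v, f v ≤ 2 * (∑ u with child v u, f u + 1)) → f v ≤ n by
    choose B hB using h
    exact ⟨B, fun f hf v => hB v f hf⟩
  intro v
  induction v using hwf.induction with
  | _ v ih =>
    choose! n hn using ih
    refine ⟨2 * (∑ u with child v u, n u + 1), fun f hf => (hf v).trans ?_⟩
    gcongr with u hu
    exact hn u (Finset.mem_filter.1 hu).2 f hf

/-- The length of a schedule plus its number of visits; both go down when the schedule is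
simplified. -/
noncomputable def complexity (T : ℕ) (lab : ℕ → Option V) : ℕ :=
  T + ∑ v, (visits T lab v).card

lemma complexity_update_none_lt {T m : ℕ} {lab : ℕ → Option V} {v : V}
    (hm : m ∈ visits T lab v) : complexity T (Function.update lab m none) < complexity T lab := by
  refine Nat.add_lt_add_left (Finset.sum_lt_sum (fun u _ => ?_) ⟨v, Finset.mem_univ v, ?_⟩) T
  · rw [visits_update_none]
    exact Finset.card_erase_le
  · rw [visits_update_none]
    exact Finset.card_erase_lt_of_mem hm

/-- No schedule with at most `p` pebbles is simpler than one of length `T` with labels `lab`. -/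
def IsSimplest (child : V → V → Prop) (root : V) (p : ℝ) (T : ℕ)
    (lab : ℕ → Option V) : Prop :=
  ∀ T' h' lab' C', IsSchedule child root p T' h' lab' C' → complexity T lab ≤ complexity T' lab'

namespace IsSchedule

variable {p : ℝ} {T h : ℕ} {lab : ℕ → Option V} {C : ℕ → FracConfig V}

open Classical in
lemma exists_near_of_isSimplest (hC : IsSchedule child root p T h lab C)
    (hmin : IsSimplest child root p T lab) {m : ℕ} {v : V} (hm : m ∈ visits T lab v) :
    ∃ t ∈ insert h (({u | child v u} : Finset V).biUnion (visits T lab)),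
      Near (visits T lab v) m t := by
  by_contra! hfar
  have hparent t u (hvu : child v u) (hu : lab t = some u) : ¬ Near (visits T lab v) m t := by
    have htT : t < T := by
      by_contra! hT
      simp [hC.label_eq_none t hT] at hu
    refine hfar t (Finset.mem_insert_of_mem (Finset.mem_biUnion.2
      ⟨u, by simpa using hvu, mem_visits.2 ⟨htT, hu⟩⟩))
  obtain ⟨C', hC'⟩ := hC.exists_update_none (mem_visits.1 hm).2
    (hfar h (Finset.mem_insert_self ..)) hparent
  exact (complexity_update_none_lt hm).not_ge (hmin _ _ _ _ hC')

open Classical in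
lemma card_visits_le_of_isSimplest (hC : IsSchedule child root p T h lab C)
    (hmin : IsSimplest child root p T lab) (v : V) :
    (visits T lab v).card ≤ 2 * (∑ u with child v u, (visits T lab u).card + 1) :=
  calc (visits T lab v).card
      ≤ 2 * (insert h (({u | child v u} : Finset V).biUnion (visits T lab))).card :=
        card_le_two_mul_of_near fun _ => hC.exists_near_of_isSimplest hmin
    _ ≤ 2 * (∑ u with child v u, (visits T lab u).card + 1) := by
        gcongr
        exact (Finset.card_insert_le ..).trans (Nat.add_le_add_right Finset.card_biUnion_le 1)

lemma label_ne_none_of_isSimplest (hC : IsSchedule child root p T h lab C)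
    (hmin : IsSimplest child root p T lab) {s : ℕ} (hs : s ≠ 0) (hsT : s < T) (hsh : s ≠ h) :
    lab s ≠ none := by
  intro hnone
  obtain ⟨S, rfl⟩ : ∃ S, T = S + 1 := ⟨T - 1, by omega⟩
  obtain ⟨φ, hφ, hlt, h', hC'⟩ := hC.exists_skip hs (by omega) hsh hnone
  have hle := hmin _ _ _ _ hC'
  have hsum : ∑ v, (visits S (lab ∘ φ) v).card ≤ ∑ v, (visits (S + 1) lab v).card :=
    Finset.sum_le_sum fun v _ => card_visits_comp_le hφ hlt lab v
  simp only [complexity] at hle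
  omega

lemma length_le_of_isSimplest (hC : IsSchedule child root p T h lab C)
    (hmin : IsSimplest child root p T lab) : T ≤ ∑ v, (visits T lab v).card + 2 := by
  have hcover : Finset.range T ⊆ Finset.univ.biUnion (visits T lab) ∪ {0, h} := by
    intro t ht
    by_cases htv : t = 0 ∨ t = h
    · exact Finset.mem_union_right _ (by simpa using htv)
    · rw [not_or] at htv
      obtain ⟨v, hv⟩ := Option.ne_none_iff_exists'.1
        (hC.label_ne_none_of_isSimplest hmin htv.1 (Finset.mem_range.1 ht) htv.2)
      exact Finset.mem_union_left _ (Finset.mem_biUnion.2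
        ⟨v, Finset.mem_univ v, mem_visits.2 ⟨Finset.mem_range.1 ht, hv⟩⟩)
  calc T = (Finset.range T).card := (Finset.card_range T).symm
    _ ≤ (Finset.univ.biUnion (visits T lab) ∪ {0, h}).card := Finset.card_le_card hcover
    _ ≤ (Finset.univ.biUnion (visits T lab)).card + ({0, h} : Finset ℕ).card :=
      Finset.card_union_le ..
    _ ≤ ∑ v, (visits T lab v).card + 2 := by
      gcongr
      · exact Finset.card_biUnion_le
      · exact Finset.card_le_two

lemma exists_isSimplest (hC : IsSchedule child root p T h lab C) :
    ∃ T h lab C, IsSchedule child root p T h lab C ∧ IsSimplest child root p T lab := by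
  let S : Set (ℕ × (ℕ → Option V)) := {x | ∃ h C, IsSchedule child root p x.1 h x.2 C}
  obtain ⟨⟨T, lab⟩, ⟨h, C, hC'⟩, hmin⟩ :=
    exists_minimalFor_of_wellFoundedLT (· ∈ S) (fun x => complexity x.1 x.2) ⟨(T, lab), h, C, hC⟩
  exact ⟨T, h, lab, C, hC', fun T' h' lab' C'' hC'' =>
    le_of_not_gt fun hlt => hlt.not_ge (hmin (j := (T', lab')) ⟨h', C'', hC''⟩ hlt.le)⟩

lemma mono {T' : ℕ} (hC : IsSchedule child root p T h lab C) (hT : T ≤ T') :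
    IsSchedule child root p T' h lab C where
  feasible := hC.feasible
  start := hC.start
  finish t ht := hC.finish t (hT.trans ht)
  move := hC.move
  label_eq_none t ht := hC.label_eq_none t (hT.trans ht)
  hit := hC.hit

end IsSchedule

lemma exists_uniform_length (hacyclic : ∀ v, ¬ Relation.TransGen child v v) (root : V) :
    ∃ N, ∀ p T h lab C, IsSchedule child root p T h lab C →
      ∃ h' lab' C', IsSchedule child root p N h' lab' C' := by
  classical
  obtain ⟨B, hB⟩ := exists_bound_of_le_two_mul_sum_add_one hacyclic
  refine ⟨∑ v, B v + 2, fun p T h lab C hC => ?_⟩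
  obtain ⟨T', h', lab', C', hC', hmin⟩ := hC.exists_isSimplest
  refine ⟨h', lab', C', hC'.mono ((hC'.length_le_of_isSimplest hmin).trans ?_)⟩
  gcongr with v
  exact hB (fun v => (visits T' lab' v).card) (hC'.card_visits_le_of_isSimplest hmin) v

end Schedules

section Optimum

namespace FracConfig

/-- The configuration with given black and white values; it transports the product topology to
configurations. -/
def ofProd (x : (V → ℝ) × (V → ℝ)) : FracConfig V :=
  ⟨x.1, x.2⟩

lemma ofProd_eq_zero_iff {x : (V → ℝ) × (V → ℝ)} : ofProd x = 0 ↔ x = 0 :=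
  ⟨fun h => Prod.ext (congrArg b h) (congrArg w h), fun h => h ▸ rfl⟩

lemma isClosed_feasible [Fintype V] :
    IsClosed {x : ℝ × (V → ℝ) × (V → ℝ) | (ofProd x.2).Feasible x.1} := by
  have heq : {x : ℝ × (V → ℝ) × (V → ℝ) | (ofProd x.2).Feasible x.1} =
      (⋂ v, {x | 0 ≤ x.2.1 v} ∩ ({x | 0 ≤ x.2.2 v} ∩ {x | x.2.1 v + x.2.2 v ≤ 1})) ∩
        {x | ∑ v, (x.2.1 v + x.2.2 v) ≤ x.1} := by
    ext x
    simp only [Set.mem_inter_iff, Set.mem_iInter]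
    exact ⟨fun h => ⟨h.valid, h.weight_le⟩, fun h => ⟨h.1, h.2⟩⟩
  rw [heq]
  refine .inter (isClosed_iInter fun v => .inter ?_ (.inter ?_ ?_)) ?_ <;>
    exact isClosed_le (by fun_prop) (by fun_prop)

end FracConfig

lemma isClosed_macroMove (child : V → V → Prop) (o : Option V) :
    IsClosed {x : ((V → ℝ) × (V → ℝ)) × (V → ℝ) × (V → ℝ) |
      MacroMove child o (.ofProd x.1) (.ofProd x.2)} := by
  simp only [MacroMove, FracConfig.ofProd, Set.ofPred_and, Set.ofPred_forall]
  refine .inter (isClosed_iInter fun i => isClosed_iInter fun _ => isClosed_iInter fun u =>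
    isClosed_iInter fun _ => isClosed_eq (by fun_prop) (by fun_prop))
    (isClosed_iInter fun j => isClosed_iInter fun _ => .inter ?_ ?_) <;>
  exact isClosed_le (by fun_prop) (by fun_prop)

lemma finite_setOf_forall_ge_eq_none [Finite V] (T : ℕ) :
    {lab : ℕ → Option V | ∀ t, T ≤ t → lab t = none}.Finite := by
  refine Set.Finite.of_injOn (f := fun lab (i : Fin T) => lab i) (Set.mapsTo_univ _ _)
    (fun lab hlab lab' hlab' heq => funext fun t => ?_) Set.finite_univ
  rcases lt_or_ge t T with ht | ht
  · exact congrFun heq ⟨t, ht⟩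
  · rw [hlab t ht, hlab' t ht]

variable [Fintype V]

lemma isClosed_isSchedule (root : V) (T h : ℕ) (lab : ℕ → Option V) :
    IsClosed {x : ℝ × (ℕ → (V → ℝ) × (V → ℝ)) |
      IsSchedule child root x.1 T h lab fun t => .ofProd (x.2 t)} := by
  have heq : {x : ℝ × (ℕ → (V → ℝ) × (V → ℝ)) |
      IsSchedule child root x.1 T h lab fun t => .ofProd (x.2 t)} =
      (⋂ t, {x | (FracConfig.ofProd (x.2 t)).Feasible x.1}) ∩ ({x | x.2 0 = 0} ∩
        ((⋂ t, ⋂ (_ : T ≤ t), {x | x.2 t = 0}) ∩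
          ((⋂ t, {x | MacroMove child (lab t) (.ofProd (x.2 t)) (.ofProd (x.2 (t + 1)))}) ∩
            ({_x | ∀ t, T ≤ t → lab t = none} ∩ {x | (x.2 h).1 root = 1})))) := by
    ext x
    simp only [Set.mem_inter_iff, Set.mem_iInter, Set.mem_ofPred_eq,
      ← FracConfig.ofProd_eq_zero_iff]
    exact ⟨fun hx => ⟨hx.feasible, hx.start, hx.finish, hx.move, hx.label_eq_none,
      hx.hit⟩,
      fun ⟨hfeasible, hstart, hfinish, hmove, hlab, hhit⟩ =>
        ⟨hfeasible, hstart, hfinish, hmove, hlab, hhit⟩⟩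
  rw [heq]
  refine .inter (isClosed_iInter fun t => ?_) (.inter ?_ (.inter (isClosed_iInter fun t =>
    isClosed_iInter fun _ => ?_) (.inter (isClosed_iInter fun t => ?_)
      (isClosed_const.inter ?_))))
  · exact FracConfig.isClosed_feasible.preimage
      (f := fun x : ℝ × (ℕ → (V → ℝ) × (V → ℝ)) => (x.1, x.2 t)) (by fun_prop)
  · exact isClosed_eq (by fun_prop) (by fun_prop)
  · exact isClosed_eq (by fun_prop) (by fun_prop)
  · exact (isClosed_macroMove child (lab t)).preimage
      (f := fun x : ℝ × (ℕ → (V → ℝ) × (V → ℝ)) => (x.2 t, x.2 (t + 1))) (by fun_prop)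
  · exact isClosed_eq (by fun_prop) (by fun_prop)

lemma isCompact_isSchedule (child : V → V → Prop) (root : V) (T : ℕ) (M : ℝ) :
    IsCompact {x : ℝ × (ℕ → (V → ℝ) × (V → ℝ)) |
      x.1 ≤ M ∧ ∃ h lab, IsSchedule child root x.1 T h lab fun t => .ofProd (x.2 t)} := by
  refine (isCompact_Icc (a := 0) (b := (M, 1))).of_isClosed_subset ?_ ?_
  · have heq : {x : ℝ × (ℕ → (V → ℝ) × (V → ℝ)) |
        x.1 ≤ M ∧ ∃ h lab, IsSchedule child root x.1 T h lab fun t => .ofProd (x.2 t)} =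
        {x | x.1 ≤ M} ∩ ⋃ h ∈ Set.Iio T, ⋃ lab ∈ {lab | ∀ t, T ≤ t → lab t = none},
          {x | IsSchedule child root x.1 T h lab fun t => .ofProd (x.2 t)} := by
      ext x
      simp only [Set.mem_inter_iff, Set.mem_iUnion, Set.mem_ofPred_eq]
      exact and_congr_right fun _ => ⟨fun ⟨h, lab, hx⟩ => ⟨h, hx.hit_lt, lab, hx.label_eq_none, hx⟩,
        fun ⟨h, _, lab, _, hx⟩ => ⟨h, lab, hx⟩⟩
    rw [heq]
    exact (isClosed_le continuous_fst continuous_const).inter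
      ((Set.finite_Iio T).isClosed_biUnion fun h _ =>
        (finite_setOf_forall_ge_eq_none T).isClosed_biUnion fun lab _ =>
          isClosed_isSchedule root T h lab)
  · rintro x ⟨hM, h, lab, hx⟩
    have hp : 0 ≤ x.1 := by
      simpa [hx.start, FracConfig.weight] using (hx.feasible 0).weight_le
    have hvalid t v := (hx.feasible t).valid v
    simp only [FracConfig.ofProd] at hvalid
    refine ⟨⟨hp, fun t => ⟨fun v => (hvalid t v).1, fun v => (hvalid t v).2.1⟩⟩,
      ⟨hM, fun t => ⟨fun v => ?_, fun v => ?_⟩⟩⟩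
    · exact (le_add_of_nonneg_right (hvalid t v).2.1).trans (hvalid t v).2.2
    · exact (le_add_of_nonneg_left (hvalid t v).1).trans (hvalid t v).2.2

theorem FracPebbling.exists_optimal (hacyclic : ∀ v, ¬ Relation.TransGen child v v) (root : V) :
    ∃ P : FracPebbling V child root, ∀ P' : FracPebbling V child root, P.cost ≤ P'.cost := by
  have hirr v : ¬ child v v := fun h => hacyclic v (.single h)
  obtain ⟨N, hN⟩ := exists_uniform_length hacyclic root
  obtain ⟨P₀⟩ := FracPebbling.nonempty hirr root
  let K : Set (ℝ × (ℕ → (V → ℝ) × (V → ℝ))) := {x | x.1 ≤ P₀.cost ∧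
    ∃ h lab, IsSchedule child root x.1 N h lab fun t => .ofProd (x.2 t)}
  have exists_mem_K (P : FracPebbling V child root) (hP : P.cost ≤ P₀.cost) :
      ∃ x ∈ K, x.1 = P.cost := by
    obtain ⟨h, lab, C, hC⟩ := P.exists_isSchedule
    obtain ⟨h, lab, C, hC⟩ := hN _ _ _ _ _ hC
    exact ⟨(P.cost, fun t => ((C t).b, (C t).w)), ⟨hP, h, lab, hC⟩, rfl⟩
  obtain ⟨x₀, hx₀, -⟩ := exists_mem_K P₀ le_rfl
  obtain ⟨x, ⟨hx, h, lab, hC⟩, hmin⟩ := (isCompact_isSchedule child root N P₀.cost).exists_isMinOn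
    ⟨x₀, hx₀⟩ continuous_fst.continuousOn
  obtain ⟨P, hP⟩ := hC.exists_pebbling hirr
  refine ⟨P, fun P' => hP.trans ?_⟩
  rcases le_total P'.cost P₀.cost with hle | hle
  · obtain ⟨x', hx', heq⟩ := exists_mem_K P' hle
    exact heq ▸ hmin hx'
  · exact hx.trans hle

end Optimum

/-- For every finite DAG `G` (with a designated root node), there is an
optimal fractional black-white pebbling of `G` all of whose pebble values are rational:
a fractional pebbling in which every value `b(i)` and `w(i)` of every configuration is a
rational number, whose number of pebbles is at most the number of pebbles used by any
fractional pebbling of `G`; in particular `#FRpebbles(G)` is attained by a rational-valued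
pebbling. -/
theorem stmt_12 (V : Type) [Fintype V] (child : V → V → Prop)
    (hacyclic : ∀ v, ¬ Relation.TransGen child v v) (root : V) :
    ∃ P : FracPebbling V child root,
      (∀ t ≤ P.T, ∀ v, (∃ q : ℚ, (P.cfg t).b v = (q : ℝ)) ∧
        (∃ q : ℚ, (P.cfg t).w v = (q : ℝ))) ∧
      ∀ P' : FracPebbling V child root, P.cost ≤ P'.cost := by
  obtain ⟨P, hP⟩ := FracPebbling.exists_optimal hacyclic root
  obtain ⟨Q, hQ, hle⟩ := P.exists_rat_cost_le
  exact ⟨Q, hQ, fun P' => hle.trans (hP P')⟩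
end

section
/- Let h ≥ 2, k ≥ 2 and 1 ≤ π < k. If B is a deterministic k-way branching program solving BT^h_2(k) such that |LeftThrifty(q)| ≤ π and |RightThrifty(q)| ≤ π for every state q of B labeled with an internal node variable, then B has at least k^h / π^{h−2} states. -/
/-! Framework: the tree evaluation problem and deterministic k-way branching programs.

The balanced binary tree of height `h` has nodes numbered heap-style `1, …, 2^h - 1`:
the root is node `1` and the children of node `i` are `2i` and `2i+1`.
Elements of `[k] = {1,…,k}` are represented by `Fin k` (the element `1 ∈ [k]`
corresponds to `(0 : Fin k)`). -/

/-- Node `i` is a leaf of the height-`h` balanced binary tree. -/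
def IsLeafNode (h i : ℕ) : Prop := 2 ^ (h - 1) ≤ i ∧ i < 2 ^ h

/-- Node `i` is an internal node of the height-`h` balanced binary tree. -/
def IsInternalNode (h i : ℕ) : Prop := 1 ≤ i ∧ i < 2 ^ (h - 1)

/-- An input to the height-`h` tree evaluation problem over `[k]`: a binary function on `[k]`
for each internal node and a value in `[k]` for each leaf (values at irrelevant indices
are ignored). -/
structure TEInput (h k : ℕ) where
  f : ℕ → Fin k → Fin k → Fin k
  leaf : ℕ → Fin k

/-- Auxiliary recursion (on fuel) computing node values. -/
def TEInput.valAux {h k : ℕ} (I : TEInput h k) : ℕ → ℕ → Fin k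
  | 0, i => I.leaf i
  | m + 1, i =>
      if 2 ^ (h - 1) ≤ i then I.leaf i
      else I.f i (I.valAux m (2 * i)) (I.valAux m (2 * i + 1))

/-- The value `v_i^I` of node `i`: the leaf value if `i` is a leaf, and
`f_i^I (v_{2i}^I, v_{2i+1}^I)` if `i` is an internal node. -/
def TEInput.val {h k : ℕ} (I : TEInput h k) (i : ℕ) : Fin k := I.valAux h i

/-- The input variables of the tree evaluation problem: one variable `f_i(a,b)` for each
internal node `i` and `a b ∈ [k]`, and one variable `l_i` for each leaf `i`. -/
inductive TEVar (h k : ℕ) where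
  | internal (i : ℕ) (hi : IsInternalNode h i) (a b : Fin k) : TEVar h k
  | leaf (i : ℕ) (hi : IsLeafNode h i) : TEVar h k

/-- The value of a variable under an input. -/
def TEInput.evalVar {h k : ℕ} (I : TEInput h k) : TEVar h k → Fin k
  | .internal i _ a b => I.f i a b
  | .leaf i _ => I.leaf i

/-- The node a variable belongs to. -/
def TEVar.node {h k : ℕ} : TEVar h k → ℕ
  | .internal i _ _ _ => i
  | .leaf i _ => i

/-- `X` is the thrifty `i` variable of input `I`: it is `f_i(v_{2i}^I, v_{2i+1}^I)`
if `i` is an internal node, and `l_i` if `i` is a leaf. -/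
def IsThriftyVarOf {h k : ℕ} (I : TEInput h k) (i : ℕ) : TEVar h k → Prop
  | .internal j _ a b => j = i ∧ a = I.val (2 * j) ∧ b = I.val (2 * j + 1)
  | .leaf j _ => j = i

/-- A deterministic `k`-way branching program with variables indexed by `V` and
output set `R`: a set of states (of cardinality `size`), a start state, each state
labeled either with a variable to query (non-output states, with `k` out-edges
labeled `1,…,k`) or with an output value (output sink states). -/
structure DetBP (V : Type) (k : ℕ) (R : Type) where
  size : ℕ
  start : Fin size
  label : Fin size → V ⊕ R
  next : Fin size → Fin k → Fin size

namespace DetBP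

variable {V : Type} {k : ℕ} {R : Type}

/-- One step of computation on input `x`: from a state querying variable `v`, follow
the out-edge labeled `x v`; output states are sinks. -/
def step (B : DetBP V k R) (x : V → Fin k) (s : Fin B.size) : Fin B.size :=
  match B.label s with
  | .inl v => B.next s (x v)
  | .inr _ => s

/-- The state of the computation path of `x` at time `t`. -/
def run (B : DetBP V k R) (x : V → Fin k) (t : ℕ) : Fin B.size :=
  (B.step x)^[t] B.start

/-- The depth of `B` is at most `D`: on every input, the computation path reaches an
output state within its first `D` states. -/
def DepthLE (B : DetBP V k R) (D : ℕ) : Prop :=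
  ∀ x : V → Fin k, ∃ t < D, (B.label (B.run x t)).isRight = true

/-- `B` solves the function tree evaluation problem `FT^h_2(k)`: on every input `I`, the
computation path ends in the output state labeled with the root value `v_1^I`. -/
def SolvesFT {h : ℕ} (B : DetBP (TEVar h k) k (Fin k)) : Prop :=
  ∀ I : TEInput h k, ∃ t, B.label (B.run I.evalVar t) = Sum.inr (I.val 1)

/-- `B` solves the decision tree evaluation problem `BT^h_2(k)`: on every input `I`, the
computation path ends in the output state labeled with whether `v_1^I = 1`
(the element `1 ∈ [k]` being `(0 : Fin k)`). -/
def SolvesBT {h : ℕ} (B : DetBP (TEVar h k) k Bool) : Prop :=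
  ∀ I : TEInput h k, ∃ t, B.label (B.run I.evalVar t) = Sum.inr (decide ((I.val 1 : Fin k).val = 0))

/-- `B` is thrifty: on every input `I`, every query `f_i(a,b)` made along the computation
path of `I` satisfies `a = v_{2i}^I` and `b = v_{2i+1}^I`. -/
def Thrifty {h : ℕ} (B : DetBP (TEVar h k) k R) : Prop :=
  ∀ (I : TEInput h k) (t i : ℕ) (hi : IsInternalNode h i) (a b : Fin k),
    B.label (B.run I.evalVar t) = Sum.inl (TEVar.internal i hi a b) →
    a = I.val (2 * i) ∧ b = I.val (2 * i + 1)

end DetBP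

/-- For a state `q` of `B` labeled with a variable `f_i(a,b)`, `RightThrifty B q i b` is the
set of `a' ∈ [k]` such that some input `I` whose computation path visits `q` satisfies
`v_{2i}^I = a'` and `v_{2i+1}^I = b`. -/
def RightThrifty {h k : ℕ} (B : DetBP (TEVar h k) k Bool) (q : Fin B.size)
    (i : ℕ) (b : Fin k) : Set (Fin k) :=
  {a' | ∃ I : TEInput h k, (∃ t : ℕ, B.run I.evalVar t = q) ∧
    I.val (2 * i) = a' ∧ I.val (2 * i + 1) = b}

/-- For a state `q` of `B` labeled with a variable `f_i(a,b)`, `LeftThrifty B q i a` is the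
set of `b' ∈ [k]` such that some input `I` whose computation path visits `q` satisfies
`v_{2i}^I = a` and `v_{2i+1}^I = b'`. -/
def LeftThrifty {h k : ℕ} (B : DetBP (TEVar h k) k Bool) (q : Fin B.size)
    (i : ℕ) (a : Fin k) : Set (Fin k) :=
  {b' | ∃ I : TEInput h k, (∃ t : ℕ, B.run I.evalVar t = q) ∧
    I.val (2 * i) = a ∧ I.val (2 * i + 1) = b'}

/-! Call the values of the two children of a node a row, and consider the inputs described by a
table of all rows, with every function `0` away from its thrifty variable. On such an input each
node of the tree is queried thriftily before its parent, and a pebbling argument finds a node `p`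
and a thrifty query of `p` after which `h - 2` other internal nodes are queried thriftily before
one of their children is: the rows of these nodes pass a test before both of their entries are read.

Fix the state `q` of this query of `p`. From `q` on, the program is a decision tree which tests rows
and reads entries. Since thrifty sets have at most `π` elements, each test has at most `π`
candidates on each of the two lines through it, and a Kraft inequality weighted by `c = k / π`
holds: the tables through `q`, each counted with a factor `c` for every row that passes a test
before it is known, number at most the product of the row counts `k²`. The row of `p` is fixed by
the label of `q`, so `q` serves at most a fraction `1 / (k² c ^ (h - 2))` of the tables. -/

section Rows

open Finset

variable {A : Type*}

theorem injOn_apply_not (s : Bool) (z : A) :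
    Set.InjOn (fun x : Bool → A => x (!s)) {x | x s = z} := by
  intro x hx y hy hxy
  funext r
  rcases Bool.eq_or_eq_not r s with rfl | rfl
  exacts [hx.trans hy.symm, hxy]

theorem eq_empty_or_eq_singleton_of_ne_univ {S : Finset Bool} (hS : S ≠ univ) :
    S = ∅ ∨ ∃ s, S = {s} := by
  decide +revert

section Weight

variable [Fintype A]

/-- The share of a row in the Kraft sum: a row of which not both entries have been read counts
the values compatible with these entries, less `c` for every value excluded by a failed test. -/
noncomputable def rowWeight (c : ℝ) (S : Finset Bool) (E P : Finset (Bool → A)) : ℝ :=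
  if S = univ then #P else (Fintype.card A : ℝ) ^ #Sᶜ - c * #E

variable (c : ℝ) (E P : Finset (Bool → A))

theorem rowWeight_univ : rowWeight c univ E P = #P := if_pos rfl

theorem rowWeight_empty : rowWeight c ∅ E P = (Fintype.card A : ℝ) ^ 2 - c * #E :=
  if_neg (by decide)

theorem rowWeight_singleton (s : Bool) : rowWeight c {s} E P = Fintype.card A - c * #E := by
  rw [rowWeight, if_neg (by decide +revert), card_compl, card_singleton, Fintype.card_bool,
    pow_one]

theorem rowWeight_mono (S : Finset Bool) {P P' : Finset (Bool → A)} (hP : P' ⊆ P) :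
    rowWeight c S E P' ≤ rowWeight c S E P := by
  unfold rowWeight
  split_ifs
  · exact_mod_cast card_le_card hP
  · exact le_rfl

end Weight

variable [DecidableEq A]

/-- What is known about one row of a table with rows in `Bool → A`: the entries on the sides in `S`
have been read, the values in `E` have been excluded by failed tests, and the values in `P` remain
possible. A line is the set of values with a prescribed entry on one side. -/
structure RowKnowledge (m : ℕ) (S : Finset Bool) (E P : Finset (Bool → A)) : Prop where
  disjoint : Disjoint E P
  agree : ∀ s ∈ S, ∀ x ∈ E ∪ P, ∀ y ∈ E ∪ P, x s = y s
  tight : ∀ s z, {x ∈ E | x s = z} = ∅ ∨ #{x ∈ E ∪ P | x s = z} ≤ m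

namespace RowKnowledge

variable {m : ℕ} {S : Finset Bool} {E E' P P' : Finset (Bool → A)}

theorem of_nothing_known (m : ℕ) (P : Finset (Bool → A)) : RowKnowledge m ∅ ∅ P where
  disjoint := disjoint_empty_left _
  agree _ hs := absurd hs (notMem_empty _)
  tight _ _ := .inl (filter_empty _)

theorem mono (h : RowKnowledge m S E P) (hE : E' ⊆ E) (hP : P' ⊆ P) :
    RowKnowledge m S E' P' where
  disjoint := disjoint_of_subset_left hE (disjoint_of_subset_right hP h.disjoint)
  agree s hs x hx y hy :=
    h.agree s hs x (union_subset_union hE hP hx) y (union_subset_union hE hP hy)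
  tight s z := (h.tight s z).imp
    (fun he => subset_empty.1 ((filter_subset_filter _ hE).trans he.subset))
    (card_le_card (filter_subset_filter _ (union_subset_union hE hP))).trans

theorem read (h : RowKnowledge m S E P) (s : Bool) (z : A) :
    RowKnowledge m (insert s S) {x ∈ E | x s = z} {x ∈ P | x s = z} where
  __ := h.mono (filter_subset _ _) (filter_subset _ _)
  agree r hr x hx y hy := by
    rw [← filter_union, mem_filter] at hx hy
    rcases mem_insert.1 hr with rfl | hr
    exacts [hx.2.trans hy.2.symm, h.agree r hr x hx.1 y hy.1]

theorem of_test_hit (m : ℕ) (P : Finset (Bool → A)) (p : Bool → A) :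
    RowKnowledge m univ ∅ {x ∈ P | x = p} where
  disjoint := disjoint_empty_left _
  agree s _ x hx y hy := by
    rw [empty_union, mem_filter] at hx hy
    rw [hx.2, hy.2]
  tight _ _ := .inl (filter_empty _)

theorem test_miss (h : RowKnowledge m S E P) {p : Bool → A}
    (hp : ∀ s, #{x ∈ P | x s = p s} ≤ m) :
    RowKnowledge m S (E ∪ {x ∈ P | x = p}) {x ∈ P | x ≠ p} := by
  have hunion : E ∪ {x ∈ P | x = p} ∪ {x ∈ P | x ≠ p} = E ∪ P := by
    rw [union_assoc, filter_union_filter_not_eq]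
  refine ⟨?_, by rw [hunion]; exact h.agree, fun s z => ?_⟩
  · exact disjoint_union_left.2 ⟨disjoint_of_subset_right (filter_subset _ _) h.disjoint,
      disjoint_filter_filter_not _ _ _⟩
  rw [hunion]
  rcases h.tight s z with hE | hEP
  · rcases eq_or_ne (p s) z with rfl | hz
    · right
      rw [filter_union, hE, empty_union]
      exact hp s
    · left
      rw [filter_union, hE, empty_union, filter_filter, filter_eq_empty_iff]
      rintro x - ⟨rfl, hx⟩
      exact hz hx
  · exact .inr hEP

end RowKnowledge

variable [Fintype A]

theorem card_line_le (P : Finset (Bool → A)) (s : Bool) (z : A) :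
    #{x ∈ P | x s = z} ≤ Fintype.card A :=
  card_le_card_of_injOn (fun x => x (!s)) (fun _ _ => mem_univ _)
    ((injOn_apply_not s z).mono fun _ hx => (mem_filter.1 hx).2)

theorem sum_card_line (P : Finset (Bool → A)) (s : Bool) :
    ∑ z, (#{x ∈ P | x s = z} : ℝ) = #P := by
  rw [card_eq_sum_card_fiberwise (f := fun x => x s) (t := univ) fun _ _ => mem_univ _]
  push_cast
  rfl

namespace RowKnowledge

variable {m : ℕ} {c : ℝ} {S : Finset Bool} {E P : Finset (Bool → A)}

theorem card_line_le (h : RowKnowledge m S E P) (hc : 1 ≤ c) (hcm : c * m = Fintype.card A)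
    (s : Bool) (z : A) :
    (#{x ∈ P | x s = z} : ℝ) ≤ Fintype.card A - c * #{x ∈ E | x s = z} := by
  rcases h.tight s z with hE | hEP
  · rw [hE, card_empty, Nat.cast_zero, mul_zero, sub_zero]
    exact_mod_cast _root_.card_line_le P s z
  · rw [filter_union, card_union_of_disjoint (disjoint_filter_filter h.disjoint)] at hEP
    have hEP' : (#{x ∈ E | x s = z} + #{x ∈ P | x s = z} : ℝ) ≤ m := by exact_mod_cast hEP
    have : (0 : ℝ) ≤ #{x ∈ P | x s = z} := by positivity
    nlinarith

theorem card_le_rowWeight (h : RowKnowledge m S E P) (hc : 1 ≤ c)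
    (hcm : c * m = Fintype.card A) : #P ≤ rowWeight c S E P := by
  rcases eq_or_ne S univ with rfl | hS
  · rw [rowWeight_univ]
  rcases eq_empty_or_eq_singleton_of_ne_univ hS with rfl | ⟨s, rfl⟩
  · rw [rowWeight_empty]
    calc (#P : ℝ) = ∑ z, (#{x ∈ P | x false = z} : ℝ) := (sum_card_line P false).symm
      _ ≤ ∑ z, (Fintype.card A - c * #{x ∈ E | x false = z}) :=
        sum_le_sum fun z _ => h.card_line_le hc hcm false z
      _ = (Fintype.card A : ℝ) ^ 2 - c * #E := by
        rw [sum_sub_distrib, ← mul_sum, sum_card_line, sum_const, card_univ, nsmul_eq_mul, sq]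
  · rw [rowWeight_singleton]
    rcases (E ∪ P).eq_empty_or_nonempty with h0 | ⟨y, hy⟩
    · obtain ⟨rfl, rfl⟩ := union_eq_empty.1 h0
      simp
    · have hline := h.card_line_le hc hcm s (y s)
      have hs := fun x hx => h.agree s (mem_singleton_self s) x hx y hy
      rwa [filter_true_of_mem fun x hx => hs x (mem_union_left _ hx),
        filter_true_of_mem fun x hx => hs x (mem_union_right _ hx)] at hline

theorem rowWeight_nonneg (h : RowKnowledge m S E P) (hc : 1 ≤ c)
    (hcm : c * m = Fintype.card A) : 0 ≤ rowWeight c S E P :=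
  (Nat.cast_nonneg _).trans (h.card_le_rowWeight hc hcm)

theorem sum_rowWeight_read_le (h : RowKnowledge m S E P) (hc : 1 ≤ c)
    (hcm : c * m = Fintype.card A) (s : Bool) :
    ∑ z ∈ P.image fun x => x s,
        rowWeight c (insert s S) {x ∈ E | x s = z} {x ∈ P | x s = z} ≤
      rowWeight c S E P := by
  by_cases hs : s ∈ S
  · rcases P.eq_empty_or_nonempty with rfl | ⟨y, hy⟩
    · simpa using h.rowWeight_nonneg hc hcm
    have hy' : ∀ x ∈ E ∪ P, x s = y s := fun x hx =>
      h.agree s hs x hx y (mem_union_right _ hy)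
    have himage : P.image (fun x => x s) = {y s} :=
      eq_singleton_iff_unique_mem.2 ⟨mem_image_of_mem _ hy, by
        simpa using fun x hx => hy' x (mem_union_right _ hx)⟩
    rw [himage, sum_singleton, insert_eq_of_mem hs,
      filter_true_of_mem fun x hx => hy' x (mem_union_left _ hx),
      filter_true_of_mem fun x hx => hy' x (mem_union_right _ hx)]
  have hS : S ≠ univ := by
    rintro rfl
    exact hs (mem_univ s)
  rcases eq_empty_or_eq_singleton_of_ne_univ hS with rfl | ⟨r, rfl⟩
  · calc _ ≤ ∑ z, rowWeight c {s} {x ∈ E | x s = z} {x ∈ P | x s = z} :=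
        sum_le_sum_of_subset_of_nonneg (subset_univ _) fun z _ _ =>
          (h.read s z).rowWeight_nonneg hc hcm
      _ = rowWeight c ∅ E P := by
        simp only [rowWeight_singleton, rowWeight_empty]
        rw [sum_sub_distrib, ← mul_sum, sum_card_line, sum_const, card_univ, nsmul_eq_mul, sq]
  · have huniv : ∀ s r : Bool, s ∉ ({r} : Finset Bool) → insert s {r} = univ := by decide
    simp only [huniv s r hs, rowWeight_univ]
    calc _ ≤ ∑ z, (#{x ∈ P | x s = z} : ℝ) :=
        sum_le_sum_of_subset_of_nonneg (subset_univ _) fun z _ _ => by positivity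
      _ = #P := sum_card_line P s
      _ ≤ rowWeight c {r} E P := h.card_le_rowWeight hc hcm

theorem rowWeight_test (h : RowKnowledge m S E P) (p : Bool → A) :
    (if S = univ then 1 else c) * rowWeight c univ ∅ {x ∈ P | x = p} +
        rowWeight c S (E ∪ {x ∈ P | x = p}) {x ∈ P | x ≠ p} =
      rowWeight c S E P := by
  rw [rowWeight_univ]
  unfold rowWeight
  split_ifs
  · rw [one_mul, ← Nat.cast_add, card_filter_add_card_filter_not]
  · rw [card_union_of_disjoint (disjoint_of_subset_right (filter_subset _ _) h.disjoint)]
    push_cast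
    ring

end RowKnowledge

end Rows

section Tables

open Finset Function

/-- A decision tree over tables `D → Bool → A`, which reads single entries and tests whether a whole
row has a given value. -/
inductive TableTree (D A : Type*)
  | done
  | read (i : D) (s : Bool) (next : A → TableTree D A)
  | test (i : D) (p : Bool → A) (hit miss : TableTree D A)

variable {D A : Type*} [DecidableEq A]

/-- The values that row `i` takes on the tables in `X`. -/
def rowValues (X : Finset (D → Bool → A)) (i : D) : Finset (Bool → A) :=
  X.image fun v => v i

theorem rowValues_mono {X Y : Finset (D → Bool → A)} (h : X ⊆ Y) (i : D) :
    rowValues X i ⊆ rowValues Y i :=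
  image_subset_image h

theorem rowValues_filter (X : Finset (D → Bool → A)) (i : D) (P : (Bool → A) → Prop)
    [DecidablePred P] : rowValues {v ∈ X | P (v i)} i = {x ∈ rowValues X i | P x} :=
  filter_image.symm

theorem card_le_prod_rowValues [Fintype D] (X : Finset (D → Bool → A)) :
    #X ≤ ∏ i, #(rowValues X i) := by
  classical
  rw [← Fintype.card_piFinset]
  exact card_le_card fun v hv => Fintype.mem_piFinset.2 fun i => mem_image_of_mem _ hv

namespace TableTree

variable [DecidableEq D]

/-- The number of rows that the table `v` passes a test on before both of their entries are known,
when the entries of each row `i` on the sides in `K i` are known at the start. -/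
def gain (v : D → Bool → A) : TableTree D A → (D → Finset Bool) → ℕ
  | done, _ => 0
  | read i s next, K => (next (v i s)).gain v (update K i (insert s (K i)))
  | test i p hit miss, K =>
    if v i = p then (if K i = univ then 0 else 1) + hit.gain v (update K i univ)
    else miss.gain v K

/-- On the table `v`, the tree passes a test on row `i` before it reads the entry of that row on
side `s`. -/
def TestsBeforeReading (v : D → Bool → A) (i : D) (s : Bool) : TableTree D A → Prop
  | done => False
  | read j r next => (j, r) ≠ (i, s) ∧ (next (v j r)).TestsBeforeReading v i s
  | test j p hit miss =>
    if v j = p then j = i ∨ hit.TestsBeforeReading v i s else miss.TestsBeforeReading v i s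

theorem card_le_gain {v : D → Bool → A} {t : TableTree D A} {K : D → Finset Bool} {S : Finset D}
    (hS : ∀ i ∈ S, ∃ s ∉ K i, t.TestsBeforeReading v i s) : #S ≤ t.gain v K := by
  induction t generalizing K S with
  | done =>
    rw [eq_empty_of_forall_notMem fun i hi => (hS i hi).choose_spec.2, card_empty]
    exact Nat.zero_le _
  | read j r next ih =>
    refine ih _ fun i hi => ?_
    obtain ⟨s, hs, hne, ht⟩ := hS i hi
    refine ⟨s, ?_, ht⟩
    rcases eq_or_ne i j with rfl | hij
    · rw [update_self, mem_insert, not_or]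
      exact ⟨fun h => hne (by rw [h]), hs⟩
    · rwa [update_of_ne hij]
  | test j p hit miss ih_hit ih_miss =>
    simp only [gain, TestsBeforeReading] at hS ⊢
    split_ifs at hS ⊢ with hj hK
    · rw [zero_add]
      refine ih_hit fun i hi => ?_
      obtain ⟨s, hs, rfl | ht⟩ := hS i hi
      · exact absurd (hK ▸ mem_univ s) hs
      have hij : i ≠ j := by
        rintro rfl
        exact hs (hK ▸ mem_univ s)
      exact ⟨s, by rwa [update_of_ne hij], ht⟩
    · have herase : #(S.erase j) ≤ hit.gain v (update K j univ) := ih_hit fun i hi => by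
        obtain ⟨hij, hi⟩ := mem_erase.1 hi
        obtain ⟨s, hs, rfl | ht⟩ := hS i hi
        · exact absurd rfl hij
        · exact ⟨s, by rwa [update_of_ne hij], ht⟩
      have := pred_card_le_card_erase (s := S) (a := j)
      omega
    · exact ih_miss hS

/-- Each test `test i p` met by a table in `X` has at most `m` candidates for row `i` on each of
the two lines through `p`. -/
def Narrow (m : ℕ) : TableTree D A → Finset (D → Bool → A) → Prop
  | done, _ => True
  | read i s next, X => ∀ z, (next z).Narrow m {v ∈ X | v i s = z}
  | test i p hit miss, X =>
    (∀ s, #{x ∈ rowValues X i | x s = p s} ≤ m) ∧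
      hit.Narrow m {v ∈ X | v i = p} ∧ miss.Narrow m {v ∈ X | v i ≠ p}

variable {m : ℕ} {X Y : Finset (D → Bool → A)} {K : D → Finset Bool}
  {E : D → Finset (Bool → A)} {i : D} {S : Finset Bool} {F : Finset (Bool → A)} {c : ℝ}

theorem rowKnowledge_update (h : ∀ j, RowKnowledge m (K j) (E j) (rowValues X j)) (hY : Y ⊆ X)
    (hi : RowKnowledge m S F (rowValues Y i)) (j : D) :
    RowKnowledge m (update K i S j) (update E i F j) (rowValues Y j) := by
  rcases eq_or_ne j i with rfl | hj
  · rwa [update_self, update_self]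
  · rw [update_of_ne hj, update_of_ne hj]
    exact (h j).mono Subset.rfl (rowValues_mono hY j)

variable [Fintype D] [Fintype A]

theorem prod_rowWeight_update_le (h : ∀ j, RowKnowledge m (K j) (E j) (rowValues X j))
    (hY : Y ⊆ X) (hi : RowKnowledge m S F (rowValues Y i)) (hc : 1 ≤ c)
    (hcm : c * m = Fintype.card A) :
    ∏ j, rowWeight c (update K i S j) (update E i F j) (rowValues Y j) ≤
      rowWeight c S F (rowValues Y i) *
        ∏ j ∈ univ.erase i, rowWeight c (K j) (E j) (rowValues X j) := by
  rw [← mul_prod_erase univ _ (mem_univ i), update_self, update_self]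
  refine mul_le_mul_of_nonneg_left (prod_le_prod (fun j _ => ?_) fun j hj => ?_)
    (hi.rowWeight_nonneg hc hcm)
  · exact (rowKnowledge_update h hY hi j).rowWeight_nonneg hc hcm
  · rw [update_of_ne (ne_of_mem_erase hj), update_of_ne (ne_of_mem_erase hj)]
    exact rowWeight_mono c _ _ (rowValues_mono hY j)

/-- The Kraft inequality for a tree: passing a test on a row before both of its entries are known
saves a factor `c`. -/
def KraftBound (m : ℕ) (c : ℝ) (t : TableTree D A) : Prop :=
  ∀ (X : Finset (D → Bool → A)) (K : D → Finset Bool) (E : D → Finset (Bool → A)), t.Narrow m X →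
    (∀ i, RowKnowledge m (K i) (E i) (rowValues X i)) →
      ∑ v ∈ X, c ^ t.gain v K ≤ ∏ i, rowWeight c (K i) (E i) (rowValues X i)

theorem KraftBound.sum_pow_gain_update_le {t : TableTree D A} (h : t.KraftBound m c)
    (ht : t.Narrow m Y) (hX : ∀ j, RowKnowledge m (K j) (E j) (rowValues X j)) (hY : Y ⊆ X)
    (hi : RowKnowledge m S F (rowValues Y i)) (hc : 1 ≤ c) (hcm : c * m = Fintype.card A) :
    ∑ v ∈ Y, c ^ t.gain v (update K i S) ≤
      rowWeight c S F (rowValues Y i) *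
        ∏ j ∈ univ.erase i, rowWeight c (K j) (E j) (rowValues X j) :=
  (h Y _ _ ht (rowKnowledge_update hX hY hi)).trans (prod_rowWeight_update_le hX hY hi hc hcm)

theorem kraftBound_done (hc : 1 ≤ c) (hcm : c * m = Fintype.card A) :
    (done : TableTree D A).KraftBound m c := by
  intro X K E _ hX
  simp only [gain, pow_zero, sum_const, nsmul_eq_mul, mul_one]
  calc (#X : ℝ) ≤ ∏ i, (#(rowValues X i) : ℝ) := mod_cast card_le_prod_rowValues X
    _ ≤ _ := prod_le_prod (fun i _ => Nat.cast_nonneg _) fun i _ =>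
      (hX i).card_le_rowWeight hc hcm

theorem kraftBound_read {s : Bool} {next : A → TableTree D A}
    (h : ∀ z, (next z).KraftBound m c) (hc : 1 ≤ c) (hcm : c * m = Fintype.card A) :
    (read i s next).KraftBound m c := by
  intro X K E ht hX
  have hfiber : ∀ z, ∑ v ∈ X with v i s = z, c ^ (read i s next).gain v K ≤
      rowWeight c (insert s (K i)) {x ∈ E i | x s = z} {x ∈ rowValues X i | x s = z} *
        ∏ j ∈ univ.erase i, rowWeight c (K j) (E j) (rowValues X j) := by
    intro z
    have hread := (hX i).read s z
    rw [← rowValues_filter X i fun x => x s = z] at hread ⊢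
    calc _ = ∑ v ∈ X with v i s = z, c ^ (next z).gain v (update K i (insert s (K i))) :=
          sum_congr rfl fun v hv => by rw [gain, (mem_filter.1 hv).2]
      _ ≤ _ := (h z).sum_pow_gain_update_le (ht z) hX (filter_subset _ _) hread hc hcm
  rw [← sum_fiberwise_of_maps_to (g := fun v => v i s) (t := (rowValues X i).image (· s))
    fun v hv => mem_image_of_mem _ (mem_image_of_mem _ hv), ← mul_prod_erase univ _ (mem_univ i)]
  refine (sum_le_sum fun z _ => hfiber z).trans ?_
  rw [← sum_mul]
  exact mul_le_mul_of_nonneg_right ((hX i).sum_rowWeight_read_le hc hcm s)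
    (prod_nonneg fun j _ => (hX j).rowWeight_nonneg hc hcm)

theorem kraftBound_test {p : Bool → A} {hit miss : TableTree D A} (h_hit : hit.KraftBound m c)
    (h_miss : miss.KraftBound m c) (hc : 1 ≤ c) (hcm : c * m = Fintype.card A) :
    (test i p hit miss).KraftBound m c := by
  rintro X K E ⟨hp, ht_hit, ht_miss⟩ hX
  have hhit := RowKnowledge.of_test_hit m (rowValues X i) p
  have hmiss := (hX i).test_miss hp
  rw [← mul_prod_erase univ _ (mem_univ i), ← (hX i).rowWeight_test p, add_mul, mul_assoc,
    ← sum_filter_add_sum_filter_not X fun v => v i = p]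
  rw [← rowValues_filter X i (· = p)] at hhit hmiss ⊢
  rw [← rowValues_filter X i (· ≠ p)] at hmiss ⊢
  refine add_le_add ?_ ?_
  · calc _ = (if K i = univ then 1 else c) *
          ∑ v ∈ X with v i = p, c ^ hit.gain v (update K i univ) := by
          rw [mul_sum]
          refine sum_congr rfl fun v hv => ?_
          rw [gain, if_pos (mem_filter.1 hv).2]
          split_ifs <;> ring
      _ ≤ _ := mul_le_mul_of_nonneg_left
        (h_hit.sum_pow_gain_update_le ht_hit hX (filter_subset _ _) hhit hc hcm) (by
          split_ifs <;> linarith)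
  · calc _ = ∑ v ∈ X with v i ≠ p, c ^ miss.gain v (update K i (K i)) :=
          sum_congr rfl fun v hv => by rw [gain, if_neg (mem_filter.1 hv).2, update_eq_self]
      _ ≤ _ := h_miss.sum_pow_gain_update_le ht_miss hX (filter_subset _ _) hmiss hc hcm

theorem kraftBound (t : TableTree D A) (hc : 1 ≤ c) (hcm : c * m = Fintype.card A) :
    t.KraftBound m c := by
  induction t with
  | done => exact kraftBound_done hc hcm
  | read i s next ih => exact kraftBound_read ih hc hcm
  | test i p hit miss ih_hit ih_miss => exact kraftBound_test ih_hit ih_miss hc hcm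

theorem card_mul_pow_le {t : TableTree D A} {p : Bool → A} {d : ℕ} (ht : t.Narrow m X)
    (hp : ∀ v ∈ X, v i = p) (hd : ∀ v ∈ X, d ≤ t.gain v (update (fun _ => ∅) i univ))
    (hc : 1 ≤ c) (hcm : c * m = Fintype.card A) :
    #X * c ^ d ≤ ((Fintype.card A : ℝ) ^ 2) ^ (Fintype.card D - 1) := by
  have hrow : rowValues X i ⊆ {p} := image_subset_iff.2 fun v hv => mem_singleton.2 (hp v hv)
  have hi : RowKnowledge m univ ∅ (rowValues X i) := by
    have := RowKnowledge.of_test_hit m (rowValues X i) p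
    rwa [filter_true_of_mem fun x hx => mem_singleton.1 (hrow hx)] at this
  calc #X * c ^ d = ∑ _v ∈ X, c ^ d := by rw [sum_const, nsmul_eq_mul]
    _ ≤ ∑ v ∈ X, c ^ t.gain v (update (fun _ => ∅) i univ) :=
      sum_le_sum fun v hv => pow_le_pow_right₀ hc (hd v hv)
    _ ≤ rowWeight c univ ∅ (rowValues X i) *
        ∏ j ∈ univ.erase i, rowWeight c ∅ ∅ (rowValues X j) :=
      (t.kraftBound hc hcm).sum_pow_gain_update_le ht
        (fun _ => RowKnowledge.of_nothing_known _ _) Subset.rfl hi hc hcm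
    _ = #(rowValues X i) * ((Fintype.card A : ℝ) ^ 2) ^ (Fintype.card D - 1) := by
      simp only [rowWeight_univ, rowWeight_empty, card_empty, Nat.cast_zero, mul_zero, sub_zero,
        prod_const, card_erase_of_mem (mem_univ i), card_univ]
    _ ≤ _ := mul_le_of_le_one_left (by positivity) (mod_cast card_le_card hrow)

end TableTree

end Tables

section Inputs

variable {h k : ℕ}

theorem IsInternalNode.two_mul_add_one_lt {i : ℕ} (hi : IsInternalNode h i) :
    2 * i + 1 < 2 ^ h := by
  obtain ⟨hi1, hi2⟩ := hi
  cases h with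
  | zero => simp only [Nat.zero_sub, pow_zero] at hi2; omega
  | succ m => rw [Nat.add_sub_cancel] at hi2; rw [pow_succ]; omega

theorem div_two_lt_two_pow_sub_one {i : ℕ} (hi : i < 2 ^ h) : i / 2 < 2 ^ (h - 1) := by
  cases h with
  | zero => rw [Nat.zero_sub]; omega
  | succ m => rw [pow_succ] at hi; rw [Nat.add_sub_cancel]; omega

theorem isInternalNode_div_two {i : ℕ} (hi2 : 2 ≤ i) (hi : i < 2 ^ h) :
    IsInternalNode h (i / 2) :=
  ⟨by omega, div_two_lt_two_pow_sub_one hi⟩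

theorem IsThriftyVarOf.node_eq {I : TEInput h k} {n : ℕ} {x : TEVar h k}
    (hx : IsThriftyVarOf I n x) : x.node = n := by
  cases x
  exacts [hx.1, hx]

namespace TEInput

variable (I : TEInput h k)

theorem valAux_succ {m i : ℕ} (hi : 2 ^ (h - 1) ≤ i * 2 ^ m) :
    I.valAux m i = I.valAux (m + 1) i := by
  induction m generalizing i with
  | zero =>
    rw [pow_zero, mul_one] at hi
    rw [valAux, valAux, if_pos hi]
  | succ m ih =>
    have hpow : i * 2 ^ (m + 1) = 2 * i * 2 ^ m := by ring
    rw [valAux, valAux]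
    split_ifs
    · rfl
    · rw [ih (i := 2 * i) (by omega), ih (i := 2 * i + 1) (by rw [add_mul]; omega)]

theorem val_of_leaf {i : ℕ} (hi : 2 ^ (h - 1) ≤ i) : I.val i = I.leaf i := by
  cases h with
  | zero => rfl
  | succ m => rw [val, valAux, if_pos hi]

theorem val_of_internal {i : ℕ} (hi : IsInternalNode h i) :
    I.val i = I.f i (I.val (2 * i)) (I.val (2 * i + 1)) := by
  obtain ⟨hi1, hi2⟩ := hi
  cases h with
  | zero => simp only [Nat.zero_sub, pow_zero] at hi2; omega
  | succ m =>
    rw [Nat.add_sub_cancel] at hi2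
    have hfuel : ∀ j, 1 ≤ j → I.valAux m j = I.valAux (m + 1) j := fun j hj =>
      I.valAux_succ (by rw [Nat.add_sub_cancel]; exact Nat.le_mul_of_pos_left _ hj)
    rw [val, val, val, ← hfuel (2 * i) (by omega), ← hfuel (2 * i + 1) (by omega), valAux, if_neg]
    rw [Nat.add_sub_cancel]
    omega

theorem val_eq_of_rec (S : ℕ → Prop) (g : ℕ → Fin k) (hS : ∀ n, S n → 1 ≤ n ∧ n < 2 ^ h)
    (hleaf : ∀ n, S n → 2 ^ (h - 1) ≤ n → I.leaf n = g n)
    (hrec : ∀ n, S n → IsInternalNode h n →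
      S (2 * n) ∧ S (2 * n + 1) ∧ I.f n (g (2 * n)) (g (2 * n + 1)) = g n)
    (n : ℕ) (hn : S n) : I.val n = g n := by
  have hbounds := hS n hn
  by_cases hl : 2 ^ (h - 1) ≤ n
  · rw [I.val_of_leaf hl, hleaf n hn hl]
  · have hi : IsInternalNode h n := ⟨hbounds.1, by omega⟩
    obtain ⟨ha, hb, hf⟩ := hrec n hn hi
    rw [I.val_of_internal hi, val_eq_of_rec S g hS hleaf hrec (2 * n) ha,
      val_eq_of_rec S g hS hleaf hrec (2 * n + 1) hb, hf]
termination_by 2 ^ h - n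

/-- The input `I` with the value of its thrifty `c` variable changed to `a`. -/
def setVal (c : ℕ) (a : Fin k) : TEInput h k where
  f j x y := if j = c ∧ x = I.val (2 * c) ∧ y = I.val (2 * c + 1) then a else I.f j x y
  leaf j := if j = c then a else I.leaf j

/-- The nodes other than `c` whose heap number is above that of the parent of `c` are not ancestors
of `c`, and they are closed under taking children. -/
theorem val_setVal_of_ne (c : ℕ) (a : Fin k) {n : ℕ} (hn : n < 2 ^ h) (hc : c / 2 < n)
    (hne : n ≠ c) : (I.setVal c a).val n = I.val n := by
  refine (I.setVal c a).val_eq_of_rec (fun n => n < 2 ^ h ∧ c / 2 < n ∧ n ≠ c) I.val ?_ ?_ ?_ n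
    ⟨hn, hc, hne⟩
  · rintro n ⟨hn, hc, -⟩
    omega
  · rintro n ⟨-, -, hne⟩ hl
    rw [I.val_of_leaf hl]
    exact if_neg hne
  · rintro n ⟨-, hc, hne⟩ hi
    have := hi.two_mul_add_one_lt
    refine ⟨⟨by omega, by omega, by omega⟩, ⟨by omega, by omega, by omega⟩, ?_⟩
    rw [I.val_of_internal hi]
    exact if_neg fun hth => hne hth.1

theorem val_setVal_self {c : ℕ} (hc : 1 ≤ c) (a : Fin k) : (I.setVal c a).val c = a := by
  by_cases hl : 2 ^ (h - 1) ≤ c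
  · rw [val_of_leaf _ hl]
    exact if_pos rfl
  · have hi : IsInternalNode h c := ⟨hc, by omega⟩
    have := hi.two_mul_add_one_lt
    rw [val_of_internal _ hi, I.val_setVal_of_ne c a (by omega) (by omega) (by omega),
      I.val_setVal_of_ne c a (by omega) (by omega) (by omega)]
    exact if_pos ⟨rfl, rfl, rfl⟩

theorem evalVar_setVal {c : ℕ} {x : TEVar h k} (hx : ¬ IsThriftyVarOf I c x) (a : Fin k) :
    (I.setVal c a).evalVar x = I.evalVar x := by
  cases x with
  | internal i hi b d =>
    refine if_neg ?_
    rintro ⟨rfl, hb, hd⟩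
    exact hx ⟨rfl, hb, hd⟩
  | leaf i hi => exact if_neg hx

end TEInput

end Inputs

namespace DetBP

section Run

variable {V R : Type} {k : ℕ} (B : DetBP V k R) {x y : V → Fin k} {t : ℕ}

theorem run_succ (x : V → Fin k) (t : ℕ) : B.run x (t + 1) = B.step x (B.run x t) :=
  Function.iterate_succ_apply' _ _ _

theorem run_add (x : V → Fin k) (s t : ℕ) : B.run x (s + t) = (B.step x)^[s] (B.run x t) :=
  Function.iterate_add_apply _ _ _ _

theorem run_congr (hxy : ∀ r < t, ∀ z, B.label (B.run x r) = .inl z → x z = y z) :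
    B.run y t = B.run x t := by
  induction t with
  | zero => rfl
  | succ t ih =>
    rw [run_succ, run_succ, ih fun r hr => hxy r (by omega)]
    unfold step
    split
    case h_1 z hz => rw [hxy t t.lt_succ_self z hz]
    case h_2 => rfl

theorem run_add_of_sink {o : R} (ho : B.label (B.run x t) = .inr o) (s : ℕ) :
    B.run x (t + s) = B.run x t := by
  induction s with
  | zero => rfl
  | succ s ih => rw [← add_assoc, run_succ, ih, step, ho]

end Run

section Thrifty

variable {h k : ℕ} {R : Type} {I J : TEInput h k} {m n c t : ℕ}

/-- The state `q` queries the thrifty variable of node `n` of the input `I`. -/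
def QueriesThrifty (B : DetBP (TEVar h k) k R) (I : TEInput h k) (n : ℕ) (q : Fin B.size) : Prop :=
  ∃ x, B.label q = .inl x ∧ IsThriftyVarOf I n x

theorem QueriesThrifty.node_unique {B : DetBP (TEVar h k) k R} {q : Fin B.size}
    (hm : B.QueriesThrifty I m q) (hn : B.QueriesThrifty J n q) : m = n := by
  obtain ⟨x, hx, hxm⟩ := hm
  obtain ⟨y, hy, hyn⟩ := hn
  obtain rfl := Sum.inl.inj (hx.symm.trans hy)
  rw [← hxm.node_eq, ← hyn.node_eq]

theorem run_setVal {B : DetBP (TEVar h k) k R}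
    (hc : ∀ r < t, ¬ B.QueriesThrifty I c (B.run I.evalVar r)) (a : Fin k) :
    B.run (I.setVal c a).evalVar t = B.run I.evalVar t :=
  B.run_congr fun r hr x hx =>
    (I.evalVar_setVal (fun hth => hc r hr ⟨x, hx, hth⟩) a).symm

/-- Otherwise changing the value of the root would not change the output. -/
theorem exists_queriesThrifty_root {B : DetBP (TEVar h k) k Bool} (hB : B.SolvesBT) (hk : 2 ≤ k)
    (I : TEInput h k) : ∃ t, B.QueriesThrifty I 1 (B.run I.evalVar t) := by
  by_contra! hno
  obtain ⟨t₀, h₀⟩ := hB (I.setVal 1 ⟨0, by omega⟩)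
  obtain ⟨t₁, h₁⟩ := hB (I.setVal 1 ⟨1, by omega⟩)
  rw [run_setVal fun r _ => hno r, TEInput.val_setVal_self _ le_rfl] at h₀ h₁
  have hrun : B.run I.evalVar t₀ = B.run I.evalVar t₁ := by
    rw [← B.run_add_of_sink h₀ t₁, add_comm, B.run_add_of_sink h₁ t₀]
  rw [hrun, h₁] at h₀
  simp at h₀

/-- The thrifty sets at every state querying an internal node have at most `π` elements. -/
def ThriftyWidthLE (B : DetBP (TEVar h k) k Bool) (π : ℕ) : Prop :=
  ∀ (q : Fin B.size) (i : ℕ) (hi : IsInternalNode h i) (a b : Fin k),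
    B.label q = .inl (.internal i hi a b) →
      (LeftThrifty B q i a).ncard ≤ π ∧ (RightThrifty B q i b).ncard ≤ π

/-- Otherwise all `k` values of the child would be possible at the query of its parent. -/
theorem ThriftyWidthLE.exists_queriesThrifty_child {B : DetBP (TEVar h k) k Bool} {π : ℕ}
    (hB : B.ThriftyWidthLE π) (hπk : π < k) (hc2 : 2 ≤ c) (hch : c < 2 ^ h)
    (ht : B.QueriesThrifty I (c / 2) (B.run I.evalVar t)) :
    ∃ r < t, B.QueriesThrifty I c (B.run I.evalVar r) := by
  by_contra! hno
  have hi := isInternalNode_div_two hc2 hch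
  have hsib := hi.two_mul_add_one_lt
  obtain ⟨x, hx, hth⟩ := ht
  cases x with
  | leaf j hj =>
    obtain rfl : j = c / 2 := hth
    exact absurd hj.1 (not_le.2 hi.2)
  | internal j hj a b =>
    obtain ⟨rfl, ha, hb⟩ := hth
    have hcard : ∀ S : Set (Fin k), (∀ y, y ∈ S) → ¬ S.ncard ≤ π := by
      intro S hS
      rwa [Set.eq_univ_of_forall hS, Set.ncard_univ, Nat.card_fin, not_le]
    obtain ⟨hl, hr⟩ := hB _ _ hj a b hx
    obtain hce | hce : 2 * (c / 2) = c ∨ 2 * (c / 2) + 1 = c := by omega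
    · refine absurd hr (hcard _ fun y => ⟨I.setVal c y, ⟨t, run_setVal hno y⟩, ?_, ?_⟩)
      · rw [hce, I.val_setVal_self (by omega)]
      · rw [I.val_setVal_of_ne c y (by omega) (by omega) (by omega), hb]
    · refine absurd hl (hcard _ fun y => ⟨I.setVal c y, ⟨t, run_setVal hno y⟩, ?_, ?_⟩)
      · rw [I.val_setVal_of_ne c y (by omega) (by omega) (by omega), ha]
      · rw [hce, I.val_setVal_self (by omega)]

end Thrifty

end DetBP

section Pebbling

variable {h d r t p : ℕ} {τ : ℕ → ℕ}

open Classical in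
/-- Times chosen from the root downwards: the root gets `t₀`, and each other node the last time
before that of its parent at which `P` holds (`0` if there is none). -/
noncomputable def lastTime (P : ℕ → ℕ → Prop) (t₀ : ℕ) (n : ℕ) : ℕ :=
  if _ : n ≤ 1 then t₀ else Nat.findGreatest (P n) (lastTime P t₀ (n / 2) - 1)
termination_by n

theorem exists_last_times {P : ℕ → ℕ → Prop} (hroot : ∃ t, P 1 t)
    (hchild : ∀ c t, 2 ≤ c → c < 2 ^ h → P (c / 2) t → ∃ s < t, P c s) :
    ∃ τ : ℕ → ℕ, (∀ n, 1 ≤ n → n < 2 ^ h → P n (τ n)) ∧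
      ∀ n, 2 ≤ n → n < 2 ^ h → τ n < τ (n / 2) ∧ ∀ t, τ n < t → t < τ (n / 2) → ¬ P n t := by
  classical
  obtain ⟨t₀, h₀⟩ := hroot
  have hrec : ∀ n, 2 ≤ n →
      lastTime P t₀ n = Nat.findGreatest (P n) (lastTime P t₀ (n / 2) - 1) := by
    intro n hn
    rw [lastTime, dif_neg (by omega)]
  have hP : ∀ n, 1 ≤ n → n < 2 ^ h → P n (lastTime P t₀ n) := by
    intro n
    induction n using Nat.strong_induction_on with
    | _ n ih =>
      intro hn1 hnh
      rcases Nat.lt_or_ge n 2 with hn | hn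
      · obtain rfl : n = 1 := by omega
        rwa [lastTime, dif_pos le_rfl]
      · obtain ⟨s, hs, hPs⟩ := hchild n _ hn hnh (ih (n / 2) (by omega) (by omega) (by omega))
        rw [hrec n hn]
        exact Nat.findGreatest_spec (m := s) (by omega) hPs
  refine ⟨lastTime P t₀, hP, fun n hn hnh => ?_⟩
  obtain ⟨s, hs, -⟩ := hchild n _ hn hnh (hP (n / 2) (by omega) (by omega))
  rw [hrec n hn]
  refine ⟨?_, fun t ht ht' => Nat.findGreatest_is_greatest ht (by omega)⟩
  have := Nat.findGreatest_le (P := P n) (lastTime P t₀ (n / 2) - 1)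
  omega

/-- Node `i` is pebbled after time `t`, but one of its children before `t`. -/
def IsCrossing (τ : ℕ → ℕ) (t i : ℕ) : Prop :=
  t < τ i ∧ (τ (2 * i) < t ∨ τ (2 * i + 1) < t)

theorem div_two_pow_succ_eq {a i e : ℕ} (ha : a / 2 = r) (hi : i / 2 ^ e = a) :
    i / 2 ^ (e + 1) = r := by
  rw [pow_succ, ← Nat.div_div_eq_div_mul, hi, ha]

theorem not_descendant_of_siblings {a b i e f : ℕ} (ha : a / 2 = r) (hb : b / 2 = r) (hr : 1 ≤ r)
    (hab : a ≠ b) (hia : i / 2 ^ e = a) : i / 2 ^ f ≠ b := by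
  have key : ∀ {a b e f : ℕ}, a / 2 = r → b / 2 = r → i / 2 ^ e = a → i / 2 ^ f = b → ¬ e < f := by
    intro a b e f ha hb hia hib hef
    have hle : i / 2 ^ f ≤ i / 2 ^ (e + 1) :=
      Nat.div_le_div_left (Nat.pow_le_pow_right two_pos hef) (by positivity)
    rw [div_two_pow_succ_eq ha hia, hib] at hle
    omega
  intro hib
  obtain rfl : e = f := le_antisymm (not_lt.1 (key hb ha hib hia)) (not_lt.1 (key ha hb hia hib))
  exact hab (hia.symm.trans hib)

theorem lt_or_exists_isCrossing (hbot : ∀ i, i / 2 ^ d = r → τ i < t)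
    (hne : ∀ e < d, ∀ i, i / 2 ^ e = r → τ i ≠ t) :
    τ r < t ∨ ∃ e < d, ∃ i, i / 2 ^ e = r ∧ IsCrossing τ t i := by
  induction d generalizing r with
  | zero => exact .inl (hbot r (by rw [pow_zero, Nat.div_one]))
  | succ d ih =>
    have hr : 2 * r / 2 = r := by omega
    have hrt := hne 0 d.succ_pos r (by rw [pow_zero, Nat.div_one])
    rcases ih (fun i hi => hbot i (div_two_pow_succ_eq hr hi))
      fun e he i hi => hne (e + 1) (by omega) i (div_two_pow_succ_eq hr hi) with
      hlt | ⟨e, he, i, hi, hcross⟩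
    · rcases lt_or_gt_of_ne hrt with hlt' | hgt
      · exact .inl hlt'
      · exact .inr ⟨0, d.succ_pos, r, by rw [pow_zero, Nat.div_one], hgt, .inl hlt⟩
    · exact .inr ⟨e + 1, by omega, i, div_two_pow_succ_eq hr hi, hcross⟩

theorem le_of_div_two_pow_eq (hp : p / 2 ^ d = r)
    (hlt : ∀ e < d, ∀ i, i / 2 ^ e = r → τ (2 * i) < τ i ∧ τ (2 * i + 1) < τ i) : τ p ≤ τ r := by
  induction d generalizing p with
  | zero => rw [← hp, pow_zero, Nat.div_one]
  | succ d ih =>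
    rw [pow_succ', ← Nat.div_div_eq_div_mul] at hp
    have hpar := hlt d d.lt_succ_self _ hp
    have hle := ih hp fun e he => hlt e (by omega)
    obtain hp2 | hp2 : 2 * (p / 2) = p ∨ 2 * (p / 2) + 1 = p := by omega
    · rw [hp2] at hpar
      omega
    · rw [hp2] at hpar
      omega

/-- Each of the `d` subtrees hanging off the path from `r` to `p` contributes one crossing node:
either its root is pebbled before `p`, and its parent is crossing, or it contains one. -/
theorem exists_card_isCrossing (hr : 1 ≤ r) (hp : p / 2 ^ d = r)
    (hlt : ∀ e < d, ∀ i, i / 2 ^ e = r → τ (2 * i) < τ i ∧ τ (2 * i + 1) < τ i)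
    (hbot : ∀ i, i / 2 ^ d = r → i ≠ p → τ i < τ p)
    (hne : ∀ e < d, ∀ i, i / 2 ^ e = r → τ i ≠ τ p) :
    ∃ S : Finset ℕ, S.card = d ∧
      ∀ i ∈ S, (∃ e < d, i / 2 ^ e = r) ∧ IsCrossing τ (τ p) i := by
  induction d generalizing r with
  | zero => exact ⟨∅, rfl, by simp⟩
  | succ d ih =>
    obtain ⟨a, ha⟩ : ∃ a, p / 2 ^ d = a := ⟨_, rfl⟩
    have har : a / 2 = r := by rw [← ha, Nat.div_div_eq_div_mul, ← pow_succ, hp]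
    obtain ⟨b, hbr, hab, hchild⟩ : ∃ b, b / 2 = r ∧ a ≠ b ∧
        (τ b < τ p → τ (2 * r) < τ p ∨ τ (2 * r + 1) < τ p) := by
      obtain rfl | rfl : a = 2 * r ∨ a = 2 * r + 1 := by omega
      exacts [⟨2 * r + 1, by omega, by omega, .inr⟩, ⟨2 * r, by omega, by omega, .inl⟩]
    have hpr : τ p < τ r := (le_of_div_two_pow_eq hp hlt).lt_of_ne' <|
      hne 0 d.succ_pos r (by rw [pow_zero, Nat.div_one])
    obtain ⟨S, hS, hS'⟩ := ih (by omega) ha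
      (fun e he i hi => hlt (e + 1) (by omega) i (div_two_pow_succ_eq har hi))
      (fun i hi => hbot i (div_two_pow_succ_eq har hi))
      (fun e he i hi => hne (e + 1) (by omega) i (div_two_pow_succ_eq har hi))
    obtain ⟨j, hjS, ⟨e, he, hj⟩, hcross⟩ : ∃ j ∉ S, (∃ e < d + 1, j / 2 ^ e = r) ∧
        IsCrossing τ (τ p) j := by
      rcases lt_or_exists_isCrossing
        (fun i hi => hbot i (div_two_pow_succ_eq hbr hi) (by
          rintro rfl
          exact hab (ha.symm.trans hi)))
        (fun e he i hi => hne (e + 1) (by omega) i (div_two_pow_succ_eq hbr hi)) with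
        hlt | ⟨e, he, j, hj, hcross⟩
      · refine ⟨r, fun hrS => ?_, ⟨0, d.succ_pos, by rw [pow_zero, Nat.div_one]⟩, hpr, hchild hlt⟩
        obtain ⟨⟨e, -, he⟩, -⟩ := hS' r hrS
        have := Nat.div_le_self r (2 ^ e)
        omega
      · refine ⟨j, fun hjS => ?_, ⟨e + 1, by omega, div_two_pow_succ_eq hbr hj⟩, hcross⟩
        obtain ⟨⟨f, -, hf⟩, -⟩ := hS' j hjS
        exact not_descendant_of_siblings har hbr hr hab hf hj
    refine ⟨insert j S, by rw [Finset.card_insert_of_notMem hjS, hS], fun i hi => ?_⟩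
    rcases Finset.mem_insert.1 hi with rfl | hi
    · exact ⟨⟨e, he, hj⟩, hcross⟩
    · obtain ⟨⟨e, he, hi⟩, hcross⟩ := hS' i hi
      exact ⟨⟨e + 1, by omega, div_two_pow_succ_eq har hi⟩, hcross⟩

theorem isInternalNode_of_div_two_pow_eq_one {i e : ℕ} (he : e + 2 ≤ h) (hi : i / 2 ^ e = 1) :
    IsInternalNode h i := by
  have hpos : 0 < 2 ^ e := by positivity
  rw [Nat.div_eq_iff hpos] at hi
  have hle : 2 ^ (e + 1) ≤ 2 ^ (h - 1) := Nat.pow_le_pow_right two_pos (by omega)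
  rw [pow_succ] at hle
  exact ⟨by omega, by omega⟩

/-- The bottleneck is the time at which the last of the nodes just above the leaves is pebbled. -/
theorem exists_bottleneck (hh : 2 ≤ h)
    (hlt : ∀ i, IsInternalNode h i → τ (2 * i) < τ i ∧ τ (2 * i + 1) < τ i)
    (hinj : Set.InjOn τ {i | IsInternalNode h i}) :
    ∃ p, IsInternalNode h p ∧ ∃ S : Finset ℕ, S.card = h - 2 ∧
      ∀ i ∈ S, IsInternalNode h i ∧ IsCrossing τ (τ p) i := by
  have hinternal : ∀ {e i}, e ≤ h - 2 → i / 2 ^ e = 1 → IsInternalNode h i :=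
    fun he hi => isInternalNode_of_div_two_pow_eq_one (by omega) hi
  have hdepth : ∀ {e i}, e < h - 2 → i / 2 ^ e = 1 → i / 2 ^ (h - 2) ≠ 1 := by
    intro e i he hi hi'
    have hle : i / 2 ^ (h - 2) ≤ i / 2 ^ (e + 1) :=
      Nat.div_le_div_left (Nat.pow_le_pow_right two_pos he) (by positivity)
    rw [div_two_pow_succ_eq (by norm_num : 1 / 2 = 0) hi] at hle
    omega
  obtain ⟨p, hp, hmax⟩ := Finset.exists_max_image
    {i ∈ Finset.range (2 ^ (h - 1)) | i / 2 ^ (h - 2) = 1} τ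
    ⟨2 ^ (h - 2), by simpa using Nat.pow_lt_pow_right one_lt_two (by omega : h - 2 < h - 1)⟩
  simp only [Finset.mem_filter, Finset.mem_range, and_imp] at hp hmax
  have hpi := hinternal le_rfl hp.2
  obtain ⟨S, hS, hS'⟩ := exists_card_isCrossing le_rfl hp.2
    (fun e he i hi => hlt i (hinternal he.le hi))
    (fun i hi hip => (hmax i (hinternal le_rfl hi).2 hi).lt_of_ne
      fun heq => hip (hinj (hinternal le_rfl hi) hpi heq))
    (fun e he i hi heq => hdepth he hi (hinj (hinternal he.le hi) hpi heq ▸ hp.2))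
  refine ⟨p, hpi, S, hS, fun i hi => ?_⟩
  obtain ⟨⟨e, he, hi⟩, hcross⟩ := hS' i hi
  exact ⟨hinternal he.le hi, hcross⟩

end Pebbling

section NodeTables

variable {h k : ℕ}

/-- A table of node values: row `i` holds the value of node `2i` on the side `false` and that of
node `2i + 1` on the side `true`. Of row `0` only the side `true` is used, for the root. -/
abbrev NodeTable (h k : ℕ) := Fin (2 ^ (h - 1)) → Bool → Fin k

/-- The row for the children of node `i`; meaningless if `i` has no children. -/
def childRow (h i : ℕ) : Fin (2 ^ (h - 1)) := Fin.ofNat _ i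

/-- A row of a table with entries `a` for the left and `b` for the right child. -/
def childPair (a b : Fin k) : Bool → Fin k := fun s => cond s b a

/-- The value of node `n` recorded in the table `v`. -/
def NodeTable.value (v : NodeTable h k) (n : ℕ) : Fin k := v (childRow h (n / 2)) n.bodd

theorem childRow_injOn : Set.InjOn (childRow h) {i | i < 2 ^ (h - 1)} := by
  intro i hi j hj hij
  have := congrArg Fin.val hij
  rwa [childRow, childRow, Fin.val_ofNat, Fin.val_ofNat, Nat.mod_eq_of_lt hi,
    Nat.mod_eq_of_lt hj] at this

theorem eq_of_childRow_eq_of_bodd_eq {m n : ℕ} (hm : m < 2 ^ h) (hn : n < 2 ^ h)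
    (hrow : childRow h (m / 2) = childRow h (n / 2)) (hside : m.bodd = n.bodd) : m = n := by
  have hdiv : m / 2 = n / 2 :=
    childRow_injOn (div_two_lt_two_pow_sub_one hm) (div_two_lt_two_pow_sub_one hn) hrow
  rw [← Nat.bodd_add_div2 m, ← Nat.bodd_add_div2 n, hside, Nat.div2_val, Nat.div2_val, hdiv]

theorem NodeTable.value_two_mul (v : NodeTable h k) (i : ℕ) :
    v.value (2 * i) = v (childRow h i) false := by
  rw [value, Nat.mul_div_cancel_left i two_pos]
  simp

theorem NodeTable.value_two_mul_add_one (v : NodeTable h k) (i : ℕ) :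
    v.value (2 * i + 1) = v (childRow h i) true := by
  rw [value, show (2 * i + 1) / 2 = i by omega]
  simp

theorem NodeTable.row_eq_childPair_iff (v : NodeTable h k) (i : ℕ) (a b : Fin k) :
    v (childRow h i) = childPair a b ↔ a = v.value (2 * i) ∧ b = v.value (2 * i + 1) := by
  rw [v.value_two_mul, v.value_two_mul_add_one, funext_iff, Bool.forall_bool]
  exact and_congr eq_comm eq_comm

variable [NeZero k]

/-- The input whose node values are given by the table `v`, where every function takes the value `0`
away from its thrifty variable. -/
def tableInput (v : NodeTable h k) : TEInput h k where
  f i a b := if v (childRow h i) = childPair a b then v.value i else 0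
  leaf := v.value

theorem val_tableInput (v : NodeTable h k) {n : ℕ} (hn : 1 ≤ n) (hnh : n < 2 ^ h) :
    (tableInput v).val n = v.value n := by
  refine (tableInput v).val_eq_of_rec (fun n => 1 ≤ n ∧ n < 2 ^ h) v.value (fun _ h => h)
    (fun _ _ _ => rfl) ?_ n ⟨hn, hnh⟩
  rintro n ⟨hn, -⟩ hi
  have := hi.two_mul_add_one_lt
  exact ⟨⟨by omega, by omega⟩, ⟨by omega, by omega⟩,
    if_pos ((v.row_eq_childPair_iff n _ _).2 ⟨rfl, rfl⟩)⟩

theorem row_eq_childPair_iff_isThriftyVarOf (v : NodeTable h k) {i : ℕ} (hi : IsInternalNode h i)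
    (a b : Fin k) :
    v (childRow h i) = childPair a b ↔ IsThriftyVarOf (tableInput v) i (.internal i hi a b) := by
  have hlt := hi.two_mul_add_one_lt
  have hpos := hi.1
  rw [IsThriftyVarOf, val_tableInput v (by omega) (by omega), val_tableInput v (by omega) hlt,
    v.row_eq_childPair_iff]
  exact (and_iff_right rfl).symm

namespace DetBP

section Steps

variable {R : Type} {B : DetBP (TEVar h k) k R} {v : NodeTable h k} {q : Fin B.size} {i : ℕ}
  {hi : IsInternalNode h i} {a b : Fin k}

theorem step_tableInput_of_leaf {hn : IsLeafNode h i} (hq : B.label q = .inl (.leaf i hn)) :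
    B.step (tableInput v).evalVar q = B.next q (v.value i) := by
  rw [step, hq]
  rfl

theorem step_tableInput_of_row_eq (hq : B.label q = .inl (.internal i hi a b))
    (hv : v (childRow h i) = childPair a b) :
    B.step (tableInput v).evalVar q = B.next q (v.value i) := by
  rw [step, hq]
  exact congrArg _ (if_pos hv)

theorem step_tableInput_of_row_ne (hq : B.label q = .inl (.internal i hi a b))
    (hv : v (childRow h i) ≠ childPair a b) :
    B.step (tableInput v).evalVar q = B.next q 0 := by
  rw [step, hq]
  exact congrArg _ (if_neg hv)

theorem QueriesThrifty.exists_label_eq {i : ℕ} (hi : IsInternalNode h i)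
    (hq : B.QueriesThrifty (tableInput v) i q) :
    ∃ a b, B.label q = .inl (.internal i hi a b) ∧ v (childRow h i) = childPair a b := by
  obtain ⟨x, hx, hth⟩ := hq
  cases x with
  | leaf n hn =>
    obtain rfl : n = i := hth
    exact absurd hn.1 (not_le.2 hi.2)
  | internal j hj a b =>
    obtain rfl := hth.1
    exact ⟨a, b, hx, (row_eq_childPair_iff_isThriftyVarOf v hj a b).2 hth⟩

end Steps

variable {R : Type} (B : DetBP (TEVar h k) k R)

/-- The first `T` steps of the computation of `B` from `q` on inputs of the form `tableInput v`: a
query to an internal variable tests a row, and reads the value of the node if the test is passed. -/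
def tableTree (B : DetBP (TEVar h k) k R) :
    ℕ → Fin B.size → TableTree (Fin (2 ^ (h - 1))) (Fin k)
  | 0, _ => .done
  | T + 1, q =>
    match B.label q with
    | .inr _ => .done
    | .inl (.leaf n _) => .read (childRow h (n / 2)) n.bodd fun z => B.tableTree T (B.next q z)
    | .inl (.internal i _ a b) =>
      .test (childRow h i) (childPair a b)
        (.read (childRow h (i / 2)) i.bodd fun z => B.tableTree T (B.next q z))
        (B.tableTree T (B.next q 0))

variable {B} {v : NodeTable h k} {q : Fin B.size} {T : ℕ}

theorem tableTree_of_output {o : R} (hq : B.label q = .inr o) : B.tableTree T q = .done := by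
  cases T with
  | zero => rfl
  | succ T => rw [tableTree, hq]

theorem tableTree_of_leaf {n : ℕ} {hn : IsLeafNode h n} (hq : B.label q = .inl (.leaf n hn)) :
    B.tableTree (T + 1) q =
      .read (childRow h (n / 2)) n.bodd fun z => B.tableTree T (B.next q z) := by
  rw [tableTree, hq]

theorem tableTree_of_internal {i : ℕ} {hi : IsInternalNode h i} {a b : Fin k}
    (hq : B.label q = .inl (.internal i hi a b)) :
    B.tableTree (T + 1) q =
      .test (childRow h i) (childPair a b)
        (.read (childRow h (i / 2)) i.bodd fun z => B.tableTree T (B.next q z))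
        (B.tableTree T (B.next q 0)) := by
  rw [tableTree, hq]

theorem QueriesThrifty.entry_ne {u n : ℕ} (hn : B.QueriesThrifty (tableInput v) n q)
    (hu : ¬ B.QueriesThrifty (tableInput v) u q) (hnh : n < 2 ^ h) (huh : u < 2 ^ h) :
    (childRow h (n / 2), n.bodd) ≠ (childRow h (u / 2), u.bodd) := by
  intro heq
  rw [eq_of_childRow_eq_of_bodd_eq hnh huh (congrArg Prod.fst heq) (congrArg Prod.snd heq)] at hn
  exact hu hn

theorem testsBeforeReading_tableTree {u t : ℕ} (hu2 : 2 ≤ u) (hu : u < 2 ^ h) (hT : t < T)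
    (ht : B.QueriesThrifty (tableInput v) (u / 2) ((B.step (tableInput v).evalVar)^[t] q))
    (hno : ∀ r < t, ¬ B.QueriesThrifty (tableInput v) u ((B.step (tableInput v).evalVar)^[r] q)) :
    (B.tableTree T q).TestsBeforeReading v (childRow h (u / 2)) u.bodd := by
  induction t generalizing T q with
  | zero =>
    obtain ⟨T, rfl⟩ := Nat.exists_eq_add_of_le' hT
    obtain ⟨a, b, hq, hv⟩ :=
      QueriesThrifty.exists_label_eq (q := q) (isInternalNode_div_two hu2 hu) ht
    rw [tableTree_of_internal hq, TableTree.TestsBeforeReading, if_pos hv]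
    exact .inl rfl
  | succ t ih =>
    obtain ⟨T, rfl⟩ := Nat.exists_eq_add_of_le' (Nat.one_le_of_lt hT)
    have hnext := ih (T := T) (by omega) ht fun r hr => hno (r + 1) (by omega)
    have hu_q : ¬ B.QueriesThrifty (tableInput v) u q := hno 0 t.succ_pos
    rcases hq : B.label q with (⟨i, hi, a, b⟩ | ⟨n, hn⟩) | o
    · rw [tableTree_of_internal hq, TableTree.TestsBeforeReading]
      by_cases hv : v (childRow h i) = childPair a b
      · have hi_q : B.QueriesThrifty (tableInput v) i q :=
          ⟨_, hq, (row_eq_childPair_iff_isThriftyVarOf v hi a b).1 hv⟩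
        have hi_lt := hi.two_mul_add_one_lt
        rw [step_tableInput_of_row_eq hq hv] at hnext
        rw [if_pos hv]
        exact .inr ⟨hi_q.entry_ne hu_q (by omega) hu, hnext⟩
      · rw [step_tableInput_of_row_ne hq hv] at hnext
        rwa [if_neg hv]
    · have hn_q : B.QueriesThrifty (tableInput v) n q := ⟨_, hq, rfl⟩
      rw [step_tableInput_of_leaf hq] at hnext
      rw [tableTree_of_leaf hq]
      exact ⟨hn_q.entry_ne hu_q hn.2 hu, hnext⟩
    · rw [Function.iterate_fixed (by rw [step, hq])] at ht
      obtain ⟨x, hx, -⟩ := ht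
      rw [hq] at hx
      cases hx

end DetBP

section Width

variable {B : DetBP (TEVar h k) k Bool} {π : ℕ} {q : Fin B.size} {i : ℕ}
  {hi : IsInternalNode h i} {a b : Fin k} {X : Finset (NodeTable h k)}

namespace DetBP

open Finset

theorem ThriftyWidthLE.card_line_rowValues_le (hB : B.ThriftyWidthLE π)
    (hq : B.label q = .inl (.internal i hi a b))
    (hX : ∀ v ∈ X, ∃ t, B.run (tableInput v).evalVar t = q) (s : Bool) :
    #{x ∈ rowValues X (childRow h i) | x s = childPair a b s} ≤ π := by
  obtain ⟨hleft, hright⟩ := hB q i hi a b hq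
  have hpos := hi.1
  have hlt := hi.two_mul_add_one_lt
  have hval : ∀ v : NodeTable h k, (tableInput v).val (2 * i) = v (childRow h i) false ∧
      (tableInput v).val (2 * i + 1) = v (childRow h i) true := fun v => by
    rw [val_tableInput v (by omega) (by omega), val_tableInput v (by omega) hlt,
      v.value_two_mul, v.value_two_mul_add_one]
    exact ⟨rfl, rfl⟩
  have hcard : ∀ S : Set (Fin k), S.ncard ≤ π →
      (∀ v ∈ X, v (childRow h i) s = childPair a b s → v (childRow h i) (!s) ∈ S) →
      #{x ∈ rowValues X (childRow h i) | x s = childPair a b s} ≤ π := by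
    intro S hS hXS
    rw [← Set.ncard_coe_finset, coe_filter]
    refine (Set.ncard_le_ncard_of_injOn (fun x => x (!s)) ?_
      ((injOn_apply_not s (childPair a b s)).mono fun _ => And.right)).trans hS
    rintro x ⟨hx, hxs⟩
    obtain ⟨v, hv, rfl⟩ := mem_image.1 hx
    exact hXS v hv hxs
  cases s with
  | false => exact hcard _ hleft fun v hv hvs =>
      ⟨tableInput v, hX v hv, (hval v).1.trans hvs, (hval v).2⟩
  | true => exact hcard _ hright fun v hv hvs =>
      ⟨tableInput v, hX v hv, (hval v).1, (hval v).2.trans hvs⟩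

theorem ThriftyWidthLE.narrow_tableTree (hB : B.ThriftyWidthLE π) (T : ℕ)
    (hX : ∀ v ∈ X, ∃ t, B.run (tableInput v).evalVar t = q) :
    (B.tableTree T q).Narrow π X := by
  induction T generalizing q X with
  | zero => trivial
  | succ T ih =>
    have hnext : ∀ z, ∀ Y ⊆ X, (∀ v ∈ Y, B.step (tableInput v).evalVar q = B.next q z) →
        (B.tableTree T (B.next q z)).Narrow π Y := by
      refine fun z Y hYX hY => ih fun v hv => ?_
      obtain ⟨t, ht⟩ := hX v (hYX hv)
      exact ⟨t + 1, by rw [run_succ, ht, hY v hv]⟩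
    rcases hq : B.label q with (⟨i, hi, a, b⟩ | ⟨n, hn⟩) | o
    · rw [tableTree_of_internal hq]
      refine ⟨hB.card_line_rowValues_le hq hX, fun z => ?_, ?_⟩
      · refine hnext z _ ((filter_subset _ _).trans (filter_subset _ _)) fun v hv => ?_
        simp only [mem_filter] at hv
        rw [step_tableInput_of_row_eq hq hv.1.2]
        exact congrArg _ hv.2
      · exact hnext 0 _ (filter_subset _ _) fun v hv =>
          step_tableInput_of_row_ne hq (mem_filter.1 hv).2
    · rw [tableTree_of_leaf hq]
      refine fun z => hnext z _ (filter_subset _ _) fun v hv => ?_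
      rw [step_tableInput_of_leaf hq]
      exact congrArg _ (mem_filter.1 hv).2
    · rw [tableTree_of_output hq]
      trivial

end DetBP

end Width

end NodeTables

section CriticalStates

open Filter Finset

variable {h k d π : ℕ} [NeZero k] {v : NodeTable h k}

namespace DetBP

/-- The computation on the table `v` passes through the thrifty query of a node at the state `q`,
and the remaining computation gains at least `d` rows if nothing but the values of the children of
this node is known at `q`. -/
def IsCritical {R : Type} (B : DetBP (TEVar h k) k R) (d : ℕ) (v : NodeTable h k)
    (q : Fin B.size) : Prop :=
  (∃ t, B.run (tableInput v).evalVar t = q) ∧ ∃ p, IsInternalNode h p ∧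
    B.QueriesThrifty (tableInput v) p q ∧
      ∀ᶠ T in atTop, d ≤ (B.tableTree T q).gain v (Function.update (fun _ => ∅) (childRow h p) univ)

theorem exists_testsBeforeReading_of_isCrossing {R : Type} {B : DetBP (TEVar h k) k R} {τ : ℕ → ℕ}
    {i t T : ℕ}
    (hτ : ∀ n, 1 ≤ n → n < 2 ^ h →
      B.QueriesThrifty (tableInput v) n (B.run (tableInput v).evalVar (τ n)))
    (hlast : ∀ n, 2 ≤ n → n < 2 ^ h → ∀ t, τ n < t → t < τ (n / 2) →
      ¬ B.QueriesThrifty (tableInput v) n (B.run (tableInput v).evalVar t))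
    (hi : IsInternalNode h i) (hcross : IsCrossing τ t i) (hT : τ i < T) :
    ∃ s, (B.tableTree T (B.run (tableInput v).evalVar t)).TestsBeforeReading
      v (childRow h i) s := by
  have hi1 := hi.1
  have hlt := hi.two_mul_add_one_lt
  obtain ⟨hti, hchild⟩ := hcross
  obtain ⟨u, hu2, huh, rfl, hut⟩ : ∃ u, 2 ≤ u ∧ u < 2 ^ h ∧ u / 2 = i ∧ τ u < t := by
    rcases hchild with hu | hu
    exacts [⟨2 * i, by omega, by omega, by omega, hu⟩, ⟨2 * i + 1, by omega, hlt, by omega, hu⟩]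
  refine ⟨u.bodd, testsBeforeReading_tableTree hu2 huh (t := τ (u / 2) - t) (by omega) ?_ ?_⟩
  · rw [← run_add, Nat.sub_add_cancel hti.le]
    exact hτ _ hi1 (by omega)
  · intro r hr
    rw [← run_add]
    exact hlast u hu2 huh (r + t) (by omega) (by omega)

theorem exists_isCritical {B : DetBP (TEVar h k) k Bool} (hB : B.SolvesBT)
    (hwidth : B.ThriftyWidthLE π) (hπk : π < k) (hh : 2 ≤ h) (hk : 2 ≤ k) (v : NodeTable h k) :
    ∃ q, B.IsCritical (h - 2) v q := by
  obtain ⟨τ, hτ, hlast⟩ := exists_last_times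
    (exists_queriesThrifty_root hB hk (tableInput v))
    fun c t hc2 hch ht => hwidth.exists_queriesThrifty_child hπk hc2 hch ht
  have hτ_internal : ∀ i, IsInternalNode h i →
      B.QueriesThrifty (tableInput v) i (B.run (tableInput v).evalVar (τ i)) := by
    intro i hi
    have := hi.two_mul_add_one_lt
    exact hτ i hi.1 (by omega)
  have hlt : ∀ i, IsInternalNode h i → τ (2 * i) < τ i ∧ τ (2 * i + 1) < τ i := by
    intro i hi
    have hi1 := hi.1
    have := hi.two_mul_add_one_lt
    have hleft := (hlast (2 * i) (by omega) (by omega)).1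
    have hright := (hlast (2 * i + 1) (by omega) (by omega)).1
    rw [show 2 * i / 2 = i by omega] at hleft
    rw [show (2 * i + 1) / 2 = i by omega] at hright
    exact ⟨hleft, hright⟩
  have hinj : Set.InjOn τ {i | IsInternalNode h i} := fun i hi j hj hij =>
    (hτ_internal i hi).node_unique (hij ▸ hτ_internal j hj)
  obtain ⟨p, hp, S, hS, hcross⟩ := exists_bottleneck hh hlt hinj
  refine ⟨_, ⟨τ p, rfl⟩, p, hp, hτ_internal p hp, ?_⟩
  have hlate : ∀ᶠ T in atTop, ∀ i ∈ S, τ i < T :=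
    (eventually_all_finset S).2 fun i _ => eventually_gt_atTop (τ i)
  filter_upwards [hlate] with T hT
  rw [← hS, ← card_image_of_injOn (childRow_injOn.mono fun i hi => (hcross i hi).1.2)]
  refine TableTree.card_le_gain (forall_mem_image.2 fun i hi => ?_)
  obtain ⟨hii, hci⟩ := hcross i hi
  obtain ⟨s, hs⟩ := exists_testsBeforeReading_of_isCrossing hτ
    (fun n hn hnh => (hlast n hn hnh).2) hii hci (hT i hi)
  have hrow : childRow h i ≠ childRow h p := fun heq =>
    hci.1.ne' (congrArg τ (childRow_injOn hii.2 hp.2 heq))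
  exact ⟨s, by rw [Function.update_of_ne hrow]; exact notMem_empty s, hs⟩

variable {B : DetBP (TEVar h k) k Bool} {q : Fin B.size} {c : ℝ}

theorem ThriftyWidthLE.card_isCritical_mul_pow_le (hwidth : B.ThriftyWidthLE π) (hc : 1 ≤ c)
    (hcπ : c * π = k) {X : Finset (NodeTable h k)} (hX : ∀ v ∈ X, B.IsCritical d v q) :
    #X * c ^ d ≤ ((k : ℝ) ^ 2) ^ (2 ^ (h - 1) - 1) := by
  rcases X.eq_empty_or_nonempty with rfl | ⟨v₀, hv₀⟩
  · rw [card_empty, Nat.cast_zero, zero_mul]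
    positivity
  obtain ⟨-, p, hp, hq₀, -⟩ := hX v₀ hv₀
  obtain ⟨a, b, hq, -⟩ := hq₀.exists_label_eq hp
  have hcrit : ∀ v ∈ X, v (childRow h p) = childPair a b ∧ ∀ᶠ T in atTop, d ≤
      (B.tableTree T q).gain v (Function.update (fun _ => ∅) (childRow h p) univ) := by
    intro v hv
    obtain ⟨-, p', -, hqv, hgain⟩ := hX v hv
    obtain rfl := hqv.node_unique hq₀
    obtain ⟨a', b', hq', hv'⟩ := hqv.exists_label_eq hp
    rw [hq] at hq'
    cases hq'
    exact ⟨hv', hgain⟩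
  obtain ⟨T, hT⟩ := ((eventually_all_finset X).2 fun v hv => (hcrit v hv).2).exists
  have hcount := TableTree.card_mul_pow_le (hwidth.narrow_tableTree T fun v hv => (hX v hv).1)
    (fun v hv => (hcrit v hv).1) hT hc (by rwa [Fintype.card_fin])
  rwa [Fintype.card_fin, Fintype.card_fin] at hcount

theorem ThriftyWidthLE.sq_mul_pow_le_size (hwidth : B.ThriftyWidthLE π) (hc : 1 ≤ c)
    (hcπ : c * π = k) (hcrit : ∀ v, ∃ q, B.IsCritical d v q) :
    (k : ℝ) ^ 2 * c ^ d ≤ B.size := by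
  classical
  choose q hq using hcrit
  have hk : (0 : ℝ) < k := mod_cast NeZero.pos k
  have htables : (Fintype.card (NodeTable h k) : ℝ) =
      (k : ℝ) ^ 2 * ((k : ℝ) ^ 2) ^ (2 ^ (h - 1) - 1) := by
    rw [← pow_succ', Nat.sub_add_cancel Nat.one_le_two_pow]
    simp only [Fintype.card_fun, Fintype.card_fin, Fintype.card_bool, Nat.cast_pow]
  have hpos : 0 < ((k : ℝ) ^ 2) ^ (2 ^ (h - 1) - 1) := by positivity
  refine le_of_mul_le_mul_right ?_ hpos
  calc (k : ℝ) ^ 2 * c ^ d * ((k : ℝ) ^ 2) ^ (2 ^ (h - 1) - 1)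
      = Fintype.card (NodeTable h k) * c ^ d := by rw [htables]; ring
    _ = ∑ s, (#{v | q v = s} : ℝ) * c ^ d := by
      rw [← sum_mul, ← card_univ, card_eq_sum_card_fiberwise (f := q) (t := univ) fun _ _ =>
        mem_univ _, Nat.cast_sum]
    _ ≤ ∑ _s : Fin B.size, ((k : ℝ) ^ 2) ^ (2 ^ (h - 1) - 1) := sum_le_sum fun s _ =>
      hwidth.card_isCritical_mul_pow_le hc hcπ fun v hv => (mem_filter.1 hv).2 ▸ hq v
    _ = B.size * ((k : ℝ) ^ 2) ^ (2 ^ (h - 1) - 1) := by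
      rw [sum_const, card_univ, Fintype.card_fin, nsmul_eq_mul]

end DetBP

end CriticalStates

/-- Let `h ≥ 2`, `k ≥ 2` and `1 ≤ π < k`. If `B` is a deterministic `k`-way
branching program solving `BT^h_2(k)` such that `|LeftThrifty(q)| ≤ π` and
`|RightThrifty(q)| ≤ π` for every state `q` labeled with an internal node variable, then
`B` has at least `k^h / π^(h-2)` states. -/
theorem stmt_17 (h k π : ℕ) (hh : 2 ≤ h) (hk : 2 ≤ k) (hπ1 : 1 ≤ π) (hπk : π < k)
    (B : DetBP (TEVar h k) k Bool) (hB : B.SolvesBT)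
    (hbound : ∀ (q : Fin B.size) (i : ℕ) (hi : IsInternalNode h i) (a b : Fin k),
      B.label q = Sum.inl (TEVar.internal i hi a b) →
      (LeftThrifty B q i a).ncard ≤ π ∧ (RightThrifty B q i b).ncard ≤ π) :
    (k : ℝ) ^ h / (π : ℝ) ^ (h - 2) ≤ (B.size : ℝ) := by
  have : NeZero k := ⟨by omega⟩
  have hwidth : B.ThriftyWidthLE π := hbound
  have hπ0 : (0 : ℝ) < π := mod_cast hπ1
  have hc : 1 ≤ (k : ℝ) / π := (one_le_div hπ0).2 (mod_cast hπk.le)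
  have hcπ : (k : ℝ) / π * π = k := div_mul_cancel₀ _ hπ0.ne'
  calc (k : ℝ) ^ h / (π : ℝ) ^ (h - 2) = (k : ℝ) ^ 2 * ((k : ℝ) / π) ^ (h - 2) := by
        rw [div_pow, ← mul_div_assoc, ← pow_add, Nat.add_sub_cancel' hh]
    _ ≤ B.size := hwidth.sq_mul_pow_le_size hc hcπ (DetBP.exists_isCritical hB hwidth hπk hh hk)
end
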